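/- arXiv:1705.01916 — 3 statements merged into one kernel-verified Lean document; each statement's English description precedes it below -/
import Mathlib

section
/- For every dimension d ≥ 1 there exists p₀ such that for every p ≥ p₀ there exists N₀ (depending on p) such that for every integer N ≥ N₀ there exists γ₀ ∈ (0,1) (depending on N) such that for every γ ∈ (0, γ₀], every finite rectangle Λ ⊂ ℤ^d, every x ∈ Λ, and every real R ≥ 4, the probability that there exist an orthonormal basis (φ_β) of ℝ^Λ consisting of eigenvectors of H and a site y ∈ Λ with |y−x| ≥ R such that Σ_β |φ_β(x) φ_β(y)| · γ^{−|x−y|/5} > 1 is at most R^{−(p/2 − 4d − 1)}. -/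
noncomputable section

open scoped BigOperators

/-- ℓ¹ distance on `ℤ^d` (natural-number valued). -/
def dist1 {d : ℕ} (x y : Fin d → ℤ) : ℕ := ∑ i, (x i - y i).natAbs

lemma dist1_comm {d : ℕ} (x y : Fin d → ℤ) : dist1 x y = dist1 y x :=
  Finset.sum_congr rfl fun i _ => by rw [← Int.natAbs_neg, neg_sub]

/-- ℓ¹ diameter of a finite subset of `ℤ^d`. -/
def diam1 {d : ℕ} (Λ : Finset (Fin d → ℤ)) : ℕ := (Λ ×ˢ Λ).sup fun p => dist1 p.1 p.2

/-- `Λ` is a (possibly empty) rectangle: a product of integer intervals. -/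
def IsRect {d : ℕ} (Λ : Finset (Fin d → ℤ)) : Prop := ∃ a b : Fin d → ℤ, Λ = Finset.Icc a b

/-- Entry of the Anderson Hamiltonian `H = H₀ - γ J` with potential `v`. -/
def hamEntry (d : ℕ) (γ : ℝ) (v : (Fin d → ℤ) → ℝ) (x y : Fin d → ℤ) : ℝ :=
  (if x = y then 2*d*γ + v x else 0) - γ * (if dist1 x y = 1 then 1 else 0)

/-- The Anderson Hamiltonian restricted to a finite set `X ⊂ ℤ^d`. -/
def hamOn (d : ℕ) (γ : ℝ) (v : (Fin d → ℤ) → ℝ) (X : Finset (Fin d → ℤ)) :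
    Matrix X X ℝ := Matrix.of fun x y => hamEntry d γ v x y

lemma hamOn_isHermitian (d : ℕ) (γ : ℝ) (v : (Fin d → ℤ) → ℝ) (X : Finset (Fin d → ℤ)) :
    (hamOn d γ v X).IsHermitian := by
  ext x y
  simp only [Matrix.conjTranspose_apply, hamOn, Matrix.of_apply, hamEntry, star_trivial]
  rw [dist1_comm]
  by_cases h : (y : Fin d → ℤ) = (x : Fin d → ℤ)
  · rw [if_pos h, if_pos h.symm, h]
  · rw [if_neg h, if_neg (show ¬((x : Fin d → ℤ) = (y : Fin d → ℤ)) from fun hh => h hh.symm)]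

open scoped Classical in
/-- Number of eigenvalues (with multiplicity) of a Hermitian matrix in `[a,b]`. -/
def countEigIn {n : Type*} [Fintype n] [DecidableEq n] {M : Matrix n n ℝ}
    (hM : M.IsHermitian) (a b : ℝ) : ℕ :=
  (Finset.univ.filter fun i => hM.eigenvalues i ∈ Set.Icc a b).card

/-- Expectation with respect to the uniform measure on a finite configuration space. -/
def expect {Ω : Type*} [Fintype Ω] (f : Ω → ℝ) : ℝ := (∑ ω, f ω) / Fintype.card Ω

open scoped Classical in
/-- Probability of an event with respect to the uniform measure on a finite space. -/
def prob {Ω : Type*} [Fintype Ω] (A : Ω → Prop) : ℝ :=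
  ((Finset.univ.filter A).card : ℝ) / Fintype.card Ω

/-- The random potential determined by a configuration `ω : Λ → Fin N`:
the value at `x ∈ Λ` is `ω x / (N-1) ∈ {0, 1/(N-1), …, 1}`. -/
def potential {d : ℕ} (N : ℕ) (Λ : Finset (Fin d → ℤ)) (ω : Λ → Fin N) :
    (Fin d → ℤ) → ℝ := fun x => if h : x ∈ Λ then (ω ⟨x, h⟩ : ℕ) / ((N : ℝ) - 1) else 0


namespace AL

/-- signed unit vectors -/
def unit {d : ℕ} (τ : Fin d × Bool) : Fin d → ℤ := Pi.single τ.1 (if τ.2 then 1 else -1)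

def lap {d : ℕ} (φ : (Fin d → ℤ) → ℝ) (z : Fin d → ℤ) : ℝ := ∑ τ : Fin d × Bool, φ (z + unit τ)

def Sol {d : ℕ} (γ E : ℝ) (v φ : (Fin d → ℤ) → ℝ) (z : Fin d → ℤ) : Prop :=
  (2 * d * γ + v z - E) * φ z = γ * lap φ z

def Supp {d : ℕ} (X : Finset (Fin d → ℤ)) (φ : (Fin d → ℤ) → ℝ) : Prop := ∀ z, z ∉ X → φ z = 0

def Good {d : ℕ} (γ : ℝ) (v : (Fin d → ℤ) → ℝ) (m : ℝ) (X : Finset (Fin d → ℤ)) (L : ℕ)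
    (x : Fin d → ℤ) (E : ℝ) : Prop :=
  ∀ φ : (Fin d → ℤ) → ℝ, Supp X φ → (∀ z ∈ X, dist1 z x ≤ L → Sol γ E v φ z) →
    ∀ M : ℝ, (∀ w, dist1 w x ≤ L + 1 → |φ w| ≤ M) → |φ x| ≤ γ ^ (m * ((L : ℝ) + 1)) * M

lemma dist1_self {d : ℕ} (x : Fin d → ℤ) : dist1 x x = 0 := by simp [dist1]

lemma dist1_tri {d : ℕ} (x y z : Fin d → ℤ) : dist1 x z ≤ dist1 x y + dist1 y z := by
  unfold dist1
  rw [← Finset.sum_add_distrib]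
  apply Finset.sum_le_sum
  intro i _
  omega

lemma dist1_add_unit {d : ℕ} (z : Fin d → ℤ) (τ : Fin d × Bool) : dist1 z (z + unit τ) = 1 := by
  unfold dist1 unit
  rw [Finset.sum_eq_single τ.1]
  · rcases τ with ⟨i, b⟩
    cases b <;> simp
  · intro j _ hj
    simp [Pi.single_eq_of_ne hj]
  · simp

lemma dist1_eq_one {d : ℕ} (z w : Fin d → ℤ) (h : dist1 z w = 1) :
    ∃ τ : Fin d × Bool, w = z + unit τ := by
  unfold dist1 at h
  have h0 : ∃ i, (z i - w i).natAbs ≠ 0 := by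
    by_contra hc
    push Not at hc
    rw [Finset.sum_eq_zero (fun i _ => hc i)] at h
    omega
  obtain ⟨i, hi⟩ := h0
  rw [← Finset.add_sum_erase _ _ (Finset.mem_univ i)] at h
  have hrest : ∑ j ∈ Finset.univ.erase i, (z j - w j).natAbs = 0 := by omega
  have hi1 : (z i - w i).natAbs = 1 := by omega
  rw [Finset.sum_eq_zero_iff] at hrest
  have hz : ∀ j, j ≠ i → w j = z j := by
    intro j hj
    have := hrest j (by simp [hj])
    omega
  rcases Int.natAbs_eq (z i - w i) with h1 | h1
  · refine ⟨(i, false), ?_⟩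
    ext j
    by_cases hj : j = i
    · subst hj; simp [unit]; omega
    · simp [unit, hj, hz j hj]
  · refine ⟨(i, true), ?_⟩
    ext j
    by_cases hj : j = i
    · subst hj; simp [unit]; omega
    · simp [unit, hj, hz j hj]

lemma unit_inj {d : ℕ} : Function.Injective (unit : Fin d × Bool → (Fin d → ℤ)) := by
  rintro ⟨i, b⟩ ⟨j, c⟩ h
  have h1 := congrFun h i
  by_cases hij : i = j
  · subst hij
    cases b <;> cases c <;> simp [unit] at h1 ⊢
  · simp [unit, hij] at h1
    cases b <;> simp at h1

/-- the finset of neighbours summation equals `lap` -/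
lemma sum_nbr {d : ℕ} (X : Finset (Fin d → ℤ)) (φ : (Fin d → ℤ) → ℝ) (hφ : Supp X φ)
    (z : Fin d → ℤ) :
    ∑ w : X, (if dist1 z (w : Fin d → ℤ) = 1 then (1 : ℝ) else 0) * φ w = lap φ z := by
  rw [Finset.sum_coe_sort X (fun w => (if dist1 z w = 1 then (1 : ℝ) else 0) * φ w)]
  have : lap φ z = ∑ w ∈ Finset.univ.image (fun τ : Fin d × Bool => z + unit τ), φ w := by
    rw [Finset.sum_image]
    · rfl
    · intro a _ b _ h
      exact unit_inj (add_left_cancel h)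
  rw [this]
  have h2 : ∑ w ∈ X, (if dist1 z w = 1 then (1 : ℝ) else 0) * φ w
      = ∑ w ∈ X.filter (fun w => dist1 z w = 1), φ w := by
    rw [Finset.sum_filter]
    apply Finset.sum_congr rfl
    intro w _
    split_ifs <;> simp
  rw [h2]
  apply Finset.sum_subset
  · intro w hw
    rw [Finset.mem_filter] at hw
    obtain ⟨τ, rfl⟩ := dist1_eq_one z w hw.2
    simp
  · intro w hw hw2
    apply hφ
    intro hX
    apply hw2
    rw [Finset.mem_filter]
    refine ⟨hX, ?_⟩
    simp only [Finset.mem_image, Finset.mem_univ, true_and] at hw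
    obtain ⟨τ, rfl⟩ := hw
    exact dist1_add_unit _ _

/-- finite ball -/
def ball {d : ℕ} (x : Fin d → ℤ) (L : ℕ) : Finset (Fin d → ℤ) :=
  (Finset.Icc (fun i => x i - (L : ℤ)) (fun i => x i + (L : ℤ))).filter (fun z => dist1 z x ≤ L)

lemma coord_le_dist1 {d : ℕ} (x y : Fin d → ℤ) (i : Fin d) : (x i - y i).natAbs ≤ dist1 x y :=
  Finset.single_le_sum (f := fun i => (x i - y i).natAbs) (fun _ _ => Nat.zero_le _)
    (Finset.mem_univ i)

lemma mem_ball {d : ℕ} {x z : Fin d → ℤ} {L : ℕ} : z ∈ ball x L ↔ dist1 z x ≤ L := by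
  unfold ball
  rw [Finset.mem_filter]
  constructor
  · exact fun h => h.2
  · intro h
    refine ⟨?_, h⟩
    rw [Finset.mem_Icc, Pi.le_def, Pi.le_def]
    constructor <;> intro i <;> have := coord_le_dist1 z x i <;> omega

lemma card_Icc_le {d : ℕ} (a b : Fin d → ℤ) (n : ℕ) (h : ∀ i, b i - a i ≤ n) :
    (Finset.Icc a b).card ≤ (n + 1) ^ d := by
  rw [Pi.card_Icc]
  calc ∏ i, (Finset.Icc (a i) (b i)).card ≤ ∏ _i : Fin d, (n + 1) := by
        apply Finset.prod_le_prod'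
        intro i _
        rw [Int.card_Icc]
        have := h i
        omega
    _ = (n + 1) ^ d := by simp

lemma card_ball {d : ℕ} (x : Fin d → ℤ) (L : ℕ) : (ball x L).card ≤ (2 * L + 1) ^ d := by
  refine (Finset.card_filter_le _ _).trans ?_
  apply card_Icc_le
  intro i
  push_cast
  omega

def distInf {d : ℕ} (x y : Fin d → ℤ) : ℕ := Finset.univ.sup fun i => (x i - y i).natAbs

lemma distInf_le {d : ℕ} {x y : Fin d → ℤ} {n : ℕ} :
    distInf x y ≤ n ↔ ∀ i, (x i - y i).natAbs ≤ n := by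
  simp [distInf, Finset.sup_le_iff]

lemma coord_le_distInf {d : ℕ} (x y : Fin d → ℤ) (i : Fin d) :
    (x i - y i).natAbs ≤ distInf x y := distInf_le.1 le_rfl i

lemma distInf_tri {d : ℕ} (x y z : Fin d → ℤ) : distInf x z ≤ distInf x y + distInf y z := by
  rw [distInf_le]
  intro i
  have h1 := coord_le_distInf x y i
  have h2 := coord_le_distInf y z i
  omega

lemma distInf_comm {d : ℕ} (x y : Fin d → ℤ) : distInf x y = distInf y x := by
  unfold distInf
  congr 1
  ext i
  omega

lemma distInf_le_dist1 {d : ℕ} (x y : Fin d → ℤ) : distInf x y ≤ dist1 x y :=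
  distInf_le.2 (coord_le_dist1 x y)

lemma dist1_le_distInf {d : ℕ} (x y : Fin d → ℤ) : dist1 x y ≤ d * distInf x y := by
  unfold dist1
  calc ∑ i, (x i - y i).natAbs ≤ ∑ _i : Fin d, distInf x y :=
        Finset.sum_le_sum fun i _ => coord_le_distInf x y i
    _ = d * distInf x y := by simp

/-- sub-box of a volume -/
def boxIn {d : ℕ} (X : Finset (Fin d → ℤ)) (c : Fin d → ℤ) (ρ : ℕ) : Finset (Fin d → ℤ) :=
  X.filter (fun z => distInf z c ≤ ρ)

lemma mem_boxIn {d : ℕ} {X : Finset (Fin d → ℤ)} {c z : Fin d → ℤ} {ρ : ℕ} :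
    z ∈ boxIn X c ρ ↔ z ∈ X ∧ distInf z c ≤ ρ := by simp [boxIn]

lemma boxIn_eq_Icc {d : ℕ} (a b c : Fin d → ℤ) (ρ : ℕ) :
    boxIn (Finset.Icc a b) c ρ =
      Finset.Icc (fun i => max (a i) (c i - ρ)) (fun i => min (b i) (c i + ρ)) := by
  ext z
  rw [mem_boxIn, Finset.mem_Icc, Finset.mem_Icc, distInf_le]
  simp only [Pi.le_def, sup_le_iff, le_inf_iff]
  constructor
  · rintro ⟨⟨h1, h2⟩, h3⟩
    refine ⟨fun i => ⟨h1 i, ?_⟩, fun i => ⟨h2 i, ?_⟩⟩ <;> have := h3 i <;> omega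
  · rintro ⟨h1, h2⟩
    refine ⟨⟨fun i => (h1 i).1, fun i => (h2 i).1⟩, fun i => ?_⟩
    have := (h1 i).2
    have := (h2 i).2
    omega

lemma isRect_boxIn {d : ℕ} {X : Finset (Fin d → ℤ)} (hX : IsRect X) (c : Fin d → ℤ) (ρ : ℕ) :
    IsRect (boxIn X c ρ) := by
  obtain ⟨a, b, rfl⟩ := hX
  exact ⟨_, _, boxIn_eq_Icc a b c ρ⟩

lemma card_boxIn {d : ℕ} (X : Finset (Fin d → ℤ)) (c : Fin d → ℤ) (ρ : ℕ) :
    (boxIn X c ρ).card ≤ (2 * ρ + 1) ^ d := by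
  have : boxIn X c ρ ⊆ Finset.Icc (fun i => c i - (ρ : ℤ)) (fun i => c i + (ρ : ℤ)) := by
    intro z hz
    rw [mem_boxIn, distInf_le] at hz
    rw [Finset.mem_Icc, Pi.le_def, Pi.le_def]
    constructor <;> intro i <;> have := hz.2 i <;> omega
  refine (Finset.card_le_card this).trans ?_
  apply card_Icc_le
  intro i
  push_cast
  omega

lemma lap_abs_le {d : ℕ} (φ : (Fin d → ℤ) → ℝ) (z : Fin d → ℤ) (B : ℝ)
    (h : ∀ τ, |φ (z + unit τ)| ≤ B) : |lap φ z| ≤ 2 * d * B := by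
  unfold lap
  calc |∑ τ : Fin d × Bool, φ (z + unit τ)| ≤ ∑ τ : Fin d × Bool, |φ (z + unit τ)| :=
        Finset.abs_sum_le_sum_abs _ _
    _ ≤ ∑ _τ : Fin d × Bool, B := Finset.sum_le_sum fun τ _ => h τ
    _ = 2 * d * B := by
        rw [Finset.sum_const, Finset.card_univ, Fintype.card_prod, Fintype.card_fin, Fintype.card_bool, nsmul_eq_mul]
        push_cast
        ring

lemma Good.mono {d : ℕ} {γ : ℝ} (hγ : 0 < γ) (hγ1 : γ ≤ 1) {v : (Fin d → ℤ) → ℝ} {m m' : ℝ}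
    (hm : m' ≤ m) {X : Finset (Fin d → ℤ)} {L : ℕ} {x : Fin d → ℤ} {E : ℝ}
    (h : Good γ v m X L x E) : Good γ v m' X L x E := by
  intro φ h1 h2 M h3
  have hM : 0 ≤ M := (abs_nonneg _).trans (h3 x (by rw [dist1_self]; omega))
  refine (h φ h1 h2 M h3).trans ?_
  apply mul_le_mul_of_nonneg_right _ hM
  apply Real.rpow_le_rpow_of_exponent_ge hγ hγ1
  have : (0 : ℝ) ≤ (L : ℝ) + 1 := by positivity
  nlinarith

lemma Good_congr {d : ℕ} {γ : ℝ} {v v' : (Fin d → ℤ) → ℝ} {m : ℝ}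
    {X : Finset (Fin d → ℤ)} {L : ℕ} {x : Fin d → ℤ} {E : ℝ}
    (hv : ∀ z ∈ X, dist1 z x ≤ L → v z = v' z)
    (h : Good γ v m X L x E) : Good γ v' m X L x E := by
  intro φ h1 h2 M h3
  refine h φ h1 (fun z hz hd => ?_) M h3
  have := h2 z hz hd
  unfold Sol at this ⊢
  rw [hv z hz hd]
  exact this

/-- initial scale: non-resonant balls are good -/
lemma good_initial {d : ℕ} {γ : ℝ} (hγ : 0 < γ) (hγ1 : γ < 1) {v : (Fin d → ℤ) → ℝ} {N : ℝ}
    (hN : 0 < N) {X : Finset (Fin d → ℤ)} {L : ℕ} {x : Fin d → ℤ} {E : ℝ}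
    (hg : 16 * d * N * γ ≤ γ ^ (3 / 4 : ℝ)) (hg2 : 16 * d * N * γ ≤ 1)
    (hr : ∀ z ∈ X, dist1 z x ≤ L → 1 / (4 * N) ≤ |v z - E|) :
    Good γ v (3 / 4) X L x E := by
  intro φ h1 h2 M h3
  have hM : 0 ≤ M := (abs_nonneg _).trans (h3 x (by rw [dist1_self]; omega))
  set κ := γ ^ (3 / 4 : ℝ) with hκ
  have hκ0 : 0 < κ := Real.rpow_pos_of_pos hγ _
  have key : ∀ j : ℕ, j ≤ L + 1 → ∀ w, dist1 w x + j ≤ L + 1 → |φ w| ≤ κ ^ j * M := by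
    intro j
    induction j with
    | zero => intro _ w hw; simpa using h3 w (by omega)
    | succ j ih =>
      intro hj w hw
      by_cases hwX : w ∈ X
      swap
      · rw [h1 w hwX]; simp; positivity
      have hs := h2 w hwX (by omega)
      have hr' := hr w hwX (by omega)
      unfold Sol at hs
      have hl := lap_abs_le φ w (κ ^ j * M) (fun τ => ih (by omega) _ (by
        have := dist1_tri (w + unit τ) w x
        have h4 := dist1_add_unit w τ
        rw [dist1_comm] at h4
        omega))
      have h5 : |2 * d * γ + v w - E| * |φ w| = γ * |lap φ w| := by
        rw [← abs_mul, hs, abs_mul, abs_of_pos hγ]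
      have h6 : 1 / (8 * N) ≤ |2 * d * γ + v w - E| := by
        have h7 : |v w - E| ≤ |2 * d * γ + v w - E| + 2 * d * γ := by
          have := abs_add_le (2 * d * γ + v w - E) (-(2 * d * γ))
          rw [abs_neg, abs_of_nonneg (by positivity : (0 : ℝ) ≤ 2 * d * γ)] at this
          have e : 2 * (d : ℝ) * γ + v w - E + -(2 * d * γ) = v w - E := by ring
          rwa [e] at this
        have h8 : 2 * d * γ ≤ 1 / (8 * N) := by
          rw [le_div_iff₀ (by positivity)]
          linarith
        have h9 : 1 / (4 * N) = 1 / (8 * N) + 1 / (8 * N) := by field_simp; norm_num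
        linarith
      have h10 : |φ w| ≤ 8 * N * (γ * |lap φ w|) := by
        rw [← h5]
        have : 1 / (8 * N) * |φ w| ≤ |2 * d * γ + v w - E| * |φ w| :=
          mul_le_mul_of_nonneg_right h6 (abs_nonneg _)
        calc |φ w| = 8 * N * (1 / (8 * N) * |φ w|) := by field_simp
          _ ≤ _ := mul_le_mul_of_nonneg_left this (by positivity)
      calc |φ w| ≤ 8 * N * (γ * |lap φ w|) := h10
        _ ≤ 8 * N * (γ * (2 * d * (κ ^ j * M))) := by gcongr
        _ = (16 * d * N * γ) * (κ ^ j * M) := by ring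
        _ ≤ κ * (κ ^ j * M) := by gcongr
        _ = κ ^ (j + 1) * M := by ring
  have := key (L + 1) le_rfl x (by rw [dist1_self]; omega)
  have e : κ ^ (L + 1) = γ ^ (3 / 4 * ((L : ℝ) + 1)) := by
    rw [hκ, ← Real.rpow_natCast, ← Real.rpow_mul hγ.le]
    push_cast
    rfl
  rwa [e] at this

end AL

namespace AL

lemma ham_mulVec {d : ℕ} (γ : ℝ) (v : (Fin d → ℤ) → ℝ) (Q : Finset (Fin d → ℤ))
    (φ : (Fin d → ℤ) → ℝ) (hφ : Supp Q φ) (z : Q) :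
    (hamOn d γ v Q).mulVec (fun w : Q => φ w) z
      = (2 * d * γ + v z) * φ z - γ * lap φ z := by
  rw [← sum_nbr Q φ hφ z]
  unfold hamOn Matrix.mulVec dotProduct
  simp only [Matrix.of_apply, hamEntry]
  have : ∀ w : Q, ((if (z : Fin d → ℤ) = w then 2 * (d : ℝ) * γ + v z else 0)
      - γ * (if dist1 (z : Fin d → ℤ) w = 1 then 1 else 0)) * φ w
      = (if z = w then (2 * (d : ℝ) * γ + v z) * φ z else 0)
        - γ * ((if dist1 (z : Fin d → ℤ) w = 1 then (1 : ℝ) else 0) * φ w) := by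
    intro w
    by_cases h : z = w
    · subst h; simp [dist1_self]
    · have h' : (z : Fin d → ℤ) ≠ w := fun hh => h (Subtype.ext hh)
      rw [if_neg h, if_neg h']; ring
  rw [Finset.sum_congr rfl (fun w _ => this w), Finset.sum_sub_distrib, ← Finset.mul_sum]
  simp

/-- eigenvalues of the restricted Hamiltonian -/
def evs {d : ℕ} (γ : ℝ) (v : (Fin d → ℤ) → ℝ) (Q : Finset (Fin d → ℤ)) : Q → ℝ :=
  (hamOn_isHermitian d γ v Q).eigenvalues

lemma evs_congr {d : ℕ} (γ : ℝ) {v v' : (Fin d → ℤ) → ℝ} (Q : Finset (Fin d → ℤ))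
    (h : ∀ z ∈ Q, v z = v' z) : evs γ v Q = evs γ v' Q := by
  have e : hamOn d γ v Q = hamOn d γ v' Q := by
    ext x y
    simp only [hamOn, Matrix.of_apply, hamEntry, h x x.2]
  unfold evs
  have aux : ∀ (A B : Matrix Q Q ℝ) (hA : A.IsHermitian) (hB : B.IsHermitian), A = B →
      hA.eigenvalues = hB.eigenvalues := by
    intro A B hA hB hAB
    subst hAB
    rfl
  exact aux _ _ _ _ e

lemma ev_vec {d : ℕ} (γ : ℝ) (v : (Fin d → ℤ) → ℝ) (Q : Finset (Fin d → ℤ)) (e : Q) :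
    ∃ φ : (Fin d → ℤ) → ℝ, Supp Q φ ∧ (∀ z ∈ Q, Sol γ (evs γ v Q e) v φ z) ∧
      (∃ z₀ ∈ Q, |φ z₀| = 1) ∧ ∀ z, |φ z| ≤ 1 := by
  set hH := hamOn_isHermitian d γ v Q
  set b : Q → ℝ := (hH.eigenvectorBasis e).ofLp with hb
  have hb0 : ∃ w, b w ≠ 0 := by
    by_contra hc
    push Not at hc
    have h1 := hH.eigenvectorBasis.orthonormal.1 e
    have : hH.eigenvectorBasis e = 0 := by
      ext w
      exact hc w
    rw [this] at h1
    simp at h1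
  have hev := hH.mulVec_eigenvectorBasis e
  obtain ⟨w₀, hw₀, hmax⟩ := Finset.exists_max_image (Finset.univ : Finset Q) (fun w => |b w|)
    ⟨e, Finset.mem_univ _⟩
  obtain ⟨w₁, hw₁⟩ := hb0
  have hpos : 0 < |b w₀| := lt_of_lt_of_le (abs_pos.2 hw₁) (hmax w₁ (Finset.mem_univ _))
  set φ : (Fin d → ℤ) → ℝ := fun z => if h : z ∈ Q then b ⟨z, h⟩ / |b w₀| else 0 with hφ
  have hs : Supp Q φ := by
    intro z hz
    simp [hφ, hz]
  have hφb : (fun w : Q => φ w) = (|b w₀|⁻¹) • b := by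
    ext w
    simp [hφ]
    ring
  refine ⟨φ, hs, ?_, ⟨w₀, w₀.2, ?_⟩, ?_⟩
  · intro z hz
    have h1 := ham_mulVec γ v Q φ hs ⟨z, hz⟩
    rw [hφb, Matrix.mulVec_smul] at h1
    rw [hb, hev] at h1
    have h2 : φ z = |b w₀|⁻¹ * b ⟨z, hz⟩ := congrFun hφb ⟨z, hz⟩
    unfold Sol
    have h3 : (|b w₀|⁻¹ • (hH.eigenvalues e) • (hH.eigenvectorBasis e).ofLp) ⟨z, hz⟩
        = evs γ v Q e * φ z := by
      rw [h2]
      simp only [Pi.smul_apply, smul_eq_mul]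
      change |b w₀|⁻¹ * (hH.eigenvalues e * b ⟨z, hz⟩) = hH.eigenvalues e * (|b w₀|⁻¹ * b ⟨z, hz⟩)
      ring
    rw [h3] at h1
    simp only at h1
    linarith
  · have h1 : φ w₀ = b w₀ / |b w₀| := by simp [hφ]
    rw [h1, abs_div, abs_abs, div_self hpos.ne']
  · intro z
    by_cases hz : z ∈ Q
    · simp only [hφ, hz, dif_pos, abs_div, abs_abs]
      rw [div_le_one hpos]
      exact hmax _ (Finset.mem_univ _)
    · simp [hφ, hz]

lemma nonres {d : ℕ} {γ : ℝ} (hγ : 0 < γ) (v : (Fin d → ℤ) → ℝ) (Q : Finset (Fin d → ℤ))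
    {E η B : ℝ} (hη : 0 < η) (hB : 0 ≤ B) (hE : ∀ e, η ≤ |evs γ v Q e - E|)
    (φ : (Fin d → ℤ) → ℝ) (hs : ∀ z ∈ Q, Sol γ E v φ z)
    (hb : ∀ z ∈ Q, ∀ τ, z + unit τ ∉ Q → |φ (z + unit τ)| ≤ B) (z : Fin d → ℤ) (hz : z ∈ Q) :
    |φ z| ≤ η⁻¹ * (γ * (2 * d * B) * Q.card) := by
  set hH := hamOn_isHermitian d γ v Q
  set ψ : (Fin d → ℤ) → ℝ := fun z => if z ∈ Q then φ z else 0 with hψ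
  set χ : (Fin d → ℤ) → ℝ := fun z => if z ∈ Q then 0 else φ z with hχ
  have hsum : ∀ w, lap φ w = lap ψ w + lap χ w := by
    intro w
    unfold lap
    rw [← Finset.sum_add_distrib]
    apply Finset.sum_congr rfl
    intro τ _
    simp only [hψ, hχ]
    split_ifs <;> simp
  have hsψ : Supp Q ψ := by
    intro w hw
    simp [hψ, hw]
  set g : EuclideanSpace ℝ Q := WithLp.toLp 2 (fun w : Q => ψ w) with hg
  set r : EuclideanSpace ℝ Q := WithLp.toLp 2 (fun w : Q => γ * lap χ w) with hr
  have hHg : ∀ w : Q, (hamOn d γ v Q).mulVec g.ofLp w - E * g w = r w := by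
    intro w
    have h1 := ham_mulVec γ v Q ψ hsψ w
    have h2 := hs w w.2
    unfold Sol at h2
    have h3 : ψ w = φ w := by simp [hψ]
    rw [hsum] at h2
    simp only [hg, hr]
    rw [h1, h3]
    linarith
  have hr_le : ∀ w, |r w| ≤ γ * (2 * d * B) := by
    intro w
    simp only [hr]
    rw [abs_mul, abs_of_pos hγ]
    apply mul_le_mul_of_nonneg_left _ hγ.le
    apply lap_abs_le
    intro τ
    simp only [hχ]
    split_ifs with h
    · simpa using hB
    · exact hb w w.2 τ h
  have hin : ∀ e, inner ℝ (hH.eigenvectorBasis e) r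
      = (hH.eigenvalues e - E) * inner ℝ (hH.eigenvectorBasis e) g := by
    intro e
    have hev := hH.mulVec_eigenvectorBasis e
    simp only [PiLp.inner_apply, RCLike.inner_apply, conj_trivial]
    set b : Q → ℝ := (hH.eigenvectorBasis e).ofLp with hbd
    have h1 : ∑ w, ((hamOn d γ v Q).mulVec g.ofLp w) * b w
        = ∑ w, g w * ((hamOn d γ v Q).mulVec b w) := by
      change dotProduct ((hamOn d γ v Q).mulVec g.ofLp) b = dotProduct g.ofLp ((hamOn d γ v Q).mulVec b)
      rw [Matrix.dotProduct_mulVec, ← Matrix.mulVec_transpose]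
      have ht : (hamOn d γ v Q).transpose = hamOn d γ v Q := by
        have := hH.eq
        rwa [Matrix.conjTranspose_eq_transpose_of_trivial] at this
      rw [ht]
    have h2 : ∀ w, (hamOn d γ v Q).mulVec b w = hH.eigenvalues e * b w := by
      intro w
      rw [hev]
      rfl
    calc ∑ w, r w * b w
        = ∑ w, (((hamOn d γ v Q).mulVec g.ofLp w) * b w - E * (g w * b w)) := by
          apply Finset.sum_congr rfl
          intro w _
          rw [← hHg w]
          ring
      _ = ∑ w, (g w * (hH.eigenvalues e * b w)) - E * ∑ w, g w * b w := by
          rw [Finset.sum_sub_distrib, h1, Finset.mul_sum]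
          simp only [h2]
      _ = (hH.eigenvalues e - E) * ∑ w, g w * b w := by
          rw [Finset.mul_sum, Finset.mul_sum, ← Finset.sum_sub_distrib]
          apply Finset.sum_congr rfl
          intro w _
          ring
  have hn : η ^ 2 * ‖g‖ ^ 2 ≤ ‖r‖ ^ 2 := by
    rw [← hH.eigenvectorBasis.sum_sq_norm_inner_right g,
      ← hH.eigenvectorBasis.sum_sq_norm_inner_right r, Finset.mul_sum]
    apply Finset.sum_le_sum
    intro e _
    rw [hin e, norm_mul, mul_pow]
    apply mul_le_mul_of_nonneg_right _ (by positivity)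
    exact pow_le_pow_left₀ hη.le (hE e) 2
  set A := γ * (2 * d * B) with hA
  have hA0 : 0 ≤ A := by positivity
  have hrn : ‖r‖ ^ 2 ≤ (A * Q.card) ^ 2 := by
    rw [EuclideanSpace.norm_sq_eq]
    calc ∑ w, ‖r w‖ ^ 2 ≤ ∑ _w : Q, A ^ 2 := by
          apply Finset.sum_le_sum
          intro w _
          exact pow_le_pow_left₀ (norm_nonneg _) (hr_le w) 2
      _ = Q.card * A ^ 2 := by simp
      _ ≤ (Q.card : ℝ) ^ 2 * A ^ 2 := by
          apply mul_le_mul_of_nonneg_right _ (by positivity)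
          have : (1 : ℝ) ≤ Q.card := by
            exact_mod_cast Finset.card_pos.2 ⟨z, hz⟩
          nlinarith
      _ = _ := by ring
  have h4 : |φ z| ≤ ‖g‖ := by
    have := PiLp.norm_apply_le g ⟨z, hz⟩
    simpa [hg, hψ, hz] using this
  have h5 : η * ‖g‖ ≤ A * Q.card := by
    apply le_of_sq_le_sq _ (by positivity)
    rw [mul_pow]
    exact hn.trans hrn
  calc |φ z| ≤ ‖g‖ := h4
    _ = η⁻¹ * (η * ‖g‖) := by field_simp
    _ ≤ η⁻¹ * (A * Q.card) := mul_le_mul_of_nonneg_left h5 (by positivity)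

end AL

namespace AL

section Prob
variable {Ω : Type*} [Fintype Ω]

lemma prob_nonneg (A : Ω → Prop) : 0 ≤ prob A := by
  unfold prob
  positivity

lemma prob_mono {A B : Ω → Prop} (h : ∀ ω, A ω → B ω) : prob A ≤ prob B := by
  classical
  unfold prob
  apply div_le_div_of_nonneg_right _ (by positivity)
  exact_mod_cast Finset.card_le_card (Finset.monotone_filter_right _ (fun ω _ hω => h ω hω))

lemma prob_or_le (A B : Ω → Prop) : prob (fun ω => A ω ∨ B ω) ≤ prob A + prob B := by
  classical
  unfold prob
  rw [← add_div]
  apply div_le_div_of_nonneg_right _ (by positivity)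
  have h : Finset.univ.filter (fun ω => A ω ∨ B ω)
      ⊆ Finset.univ.filter A ∪ Finset.univ.filter B := by
    intro ω
    simp
  have h2 := (Finset.card_le_card h).trans (Finset.card_union_le _ _)
  have h3 : ((Finset.univ.filter (fun ω => A ω ∨ B ω)).card : ℝ)
      ≤ (Finset.univ.filter A).card + (Finset.univ.filter B).card := by exact_mod_cast h2
  refine le_trans (le_of_eq ?_) (h3.trans (le_of_eq ?_)) <;> congr!

lemma prob_false : prob (fun _ : Ω => False) = 0 := by
  simp [prob]

lemma prob_exists_le {ι : Type*} (s : Finset ι) (A : ι → Ω → Prop) (c : ι → ℝ)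
    (h : ∀ i ∈ s, prob (A i) ≤ c i) : prob (fun ω => ∃ i ∈ s, A i ω) ≤ ∑ i ∈ s, c i := by
  classical
  induction s using Finset.induction_on with
  | empty => simp [prob_false]
  | insert a s ha ih =>
    rw [Finset.sum_insert ha]
    have h1 : prob (fun ω => ∃ i ∈ insert a s, A i ω)
        ≤ prob (fun ω => A a ω ∨ ∃ i ∈ s, A i ω) := by
      apply prob_mono
      rintro ω ⟨i, hi, hA⟩
      rcases Finset.mem_insert.1 hi with rfl | hi
      · exact Or.inl hA
      · exact Or.inr ⟨i, hi, hA⟩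
    have h2 := h a (by simp)
    have h3 := ih (fun i hi => h i (by simp [hi]))
    linarith [prob_or_le (A a) (fun ω => ∃ i ∈ s, A i ω)]

lemma prob_exists_le_card {ι : Type*} (s : Finset ι) (A : ι → Ω → Prop) (c : ℝ)
    (h : ∀ i ∈ s, prob (A i) ≤ c) : prob (fun ω => ∃ i ∈ s, A i ω) ≤ s.card * c := by
  have := prob_exists_le s A (fun _ => c) h
  simpa using this

end Prob

def Dep {ι κ : Type*} (A : (ι → κ) → Prop) (S : Set ι) : Prop :=
  ∀ ω ω' : ι → κ, (∀ i ∈ S, ω i = ω' i) → A ω → A ω'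

lemma prob_and {ι κ : Type*} [Fintype ι] [DecidableEq ι] [Fintype κ] [Nonempty κ]
    (A B : (ι → κ) → Prop) (S T : Set ι) (hA : Dep A S) (hB : Dep B T) (hST : Disjoint S T) :
    prob (fun ω => A ω ∧ B ω) = prob A * prob B := by
  classical
  unfold prob
  set n := Fintype.card (ι → κ) with hn
  have hn0 : (n : ℝ) ≠ 0 := by
    have : 0 < n := Fintype.card_pos
    positivity
  have key : (Finset.univ.filter (fun ω => A ω ∧ B ω)).card * n
      = (Finset.univ.filter A).card * (Finset.univ.filter B).card := by
    rw [hn, ← Finset.card_univ, ← Finset.card_product, ← Finset.card_product]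
    let F : (ι → κ) × (ι → κ) → (ι → κ) × (ι → κ) := fun p =>
      (fun i => if i ∈ S then p.1 i else p.2 i, fun i => if i ∈ S then p.2 i else p.1 i)
    have hFF : ∀ p, F (F p) = p := by
      intro p
      ext i <;> by_cases h : i ∈ S <;> simp [F, h]
    have hTS : ∀ i ∈ T, i ∉ S := fun i hT hS => Set.disjoint_left.1 hST hS hT
    apply Finset.card_bij' (fun p _ => F p) (fun p _ => F p)
    · intro p hp
      simp only [Finset.mem_product, Finset.mem_filter, Finset.mem_univ, true_and, and_true] at hp ⊢
      refine ⟨hA _ _ (fun i hi => ?_) hp.1, hB _ _ (fun i hi => ?_) hp.2⟩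
      · simp [F, hi]
      · simp [F, hTS i hi]
    · intro p hp
      simp only [Finset.mem_product, Finset.mem_filter, Finset.mem_univ, true_and, and_true] at hp ⊢
      refine ⟨hA _ _ (fun i hi => ?_) hp.1, hB _ _ (fun i hi => ?_) hp.2⟩
      · simp [F, hi]
      · simp [F, hTS i hi]
    · intro p _; exact hFF p
    · intro p _; exact hFF p
  have key' : ((Finset.univ.filter (fun ω => A ω ∧ B ω)).card : ℝ) * n
      = (Finset.univ.filter A).card * (Finset.univ.filter B).card := by exact_mod_cast key
  field_simp
  convert key'

lemma prob_inj {ι : Type*} [Fintype ι] [DecidableEq ι] {N J : ℕ} (hN : 0 < N)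
    (W : (ι → Fin N) → Prop) (s : Fin J → ι) (hs : Function.Injective s)
    (hW : ∀ ω ω', W ω → W ω' → (∀ i, i ∉ Set.range s → ω i = ω' i) → ω = ω') :
    prob W ≤ 1 / (N : ℝ) ^ J := by
  classical
  unfold prob
  have key : (Finset.univ.filter W).card * N ^ J ≤ Fintype.card (ι → Fin N) := by
    have h1 : N ^ J = (Finset.univ : Finset (Fin J → Fin N)).card := by simp
    rw [h1, ← Finset.card_product, ← Finset.card_univ]
    apply Finset.card_le_card_of_injOn (fun p => Function.extend s p.2 p.1)
    · intro p _; simp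
    · rintro ⟨ω, t⟩ hp ⟨ω', t'⟩ hp' h
      simp only [Finset.coe_product, Set.mem_prod, Finset.mem_coe, Finset.mem_filter,
        Finset.mem_univ, true_and, and_true] at hp hp' h
      have h2 : t = t' := by
        ext j : 1
        have := congrFun h (s j)
        rwa [hs.extend_apply, hs.extend_apply] at this
      have h3 : ω = ω' := by
        apply hW _ _ hp hp'
        intro i hi
        have := congrFun h i
        rwa [Function.extend_apply' _ _ _ (by simpa using hi),
          Function.extend_apply' _ _ _ (by simpa using hi)] at this
      rw [h2, h3]
  have hNp : (0 : ℝ) < (N : ℝ) ^ J := by positivity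
  have hc : (0 : ℝ) < Fintype.card (ι → Fin N) := by
    haveI : Nonempty (Fin N) := ⟨⟨0, hN⟩⟩
    exact_mod_cast Fintype.card_pos
  rw [div_le_div_iff₀ hc hNp, one_mul]
  exact_mod_cast key

lemma lap_symm {d : ℕ} (Q : Finset (Fin d → ℤ)) (φ φ' : (Fin d → ℤ) → ℝ) (h : Supp Q φ)
    (h' : Supp Q φ') : ∑ z ∈ Q, φ' z * lap φ z = ∑ z ∈ Q, φ z * lap φ' z := by
  rw [← Finset.sum_coe_sort Q (fun z => φ' z * lap φ z),
    ← Finset.sum_coe_sort Q (fun z => φ z * lap φ' z)]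
  simp only [← sum_nbr Q φ h, ← sum_nbr Q φ' h', Finset.mul_sum]
  rw [Finset.sum_comm]
  apply Finset.sum_congr rfl
  intro z _
  apply Finset.sum_congr rfl
  intro w _
  rw [dist1_comm]
  ring

lemma green_id {d : ℕ} {γ f f' : ℝ} {v v' : (Fin d → ℤ) → ℝ} {Q : Finset (Fin d → ℤ)}
    {φ φ' : (Fin d → ℤ) → ℝ} (h : Supp Q φ) (h' : Supp Q φ')
    (hs : ∀ z ∈ Q, Sol γ f v φ z) (hs' : ∀ z ∈ Q, Sol γ f' v' φ' z) :
    ∑ z ∈ Q, (v' z - v z) * (φ z * φ' z) = (f' - f) * ∑ z ∈ Q, φ z * φ' z := by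
  have h1 := lap_symm Q φ φ' h h'
  have h2 : ∑ z ∈ Q, ((v' z - v z) * (φ z * φ' z) - (f' - f) * (φ z * φ' z))
      = ∑ z ∈ Q, (γ * (φ z * lap φ' z) - γ * (φ' z * lap φ z)) := by
    apply Finset.sum_congr rfl
    intro z hz
    have e1 := hs z hz
    have e2 := hs' z hz
    unfold Sol at e1 e2
    linear_combination φ z * e2 - φ' z * e1
  rw [Finset.sum_sub_distrib, Finset.sum_sub_distrib, ← Finset.mul_sum, ← Finset.mul_sum,
    ← Finset.mul_sum, h1] at h2
  linarith

lemma pot_diff {d N : ℕ} (hN : 2 ≤ N) (Λ : Finset (Fin d → ℤ)) (ω ω' : Λ → Fin N) (z : Λ) :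
    |potential N Λ ω' z - potential N Λ ω z| ≤ 1 ∧
    (ω z ≠ ω' z → 1 / (N : ℝ) ≤ |potential N Λ ω' z - potential N Λ ω z|) := by
  have hN1 : (0 : ℝ) < (N : ℝ) - 1 := by
    have : (2 : ℝ) ≤ N := by exact_mod_cast hN
    linarith
  have e : ∀ ω : Λ → Fin N, potential N Λ ω z = ((ω z : ℕ) : ℝ) / ((N : ℝ) - 1) := by
    intro ω
    simp [potential]
  rw [e, e, ← sub_div, abs_div, abs_of_pos hN1]
  have h1 := (ω z).2
  have h2 := (ω' z).2
  have h3 : (((ω z : ℕ) : ℝ)) ≤ (N : ℝ) - 1 := by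
    have : ((ω z : ℕ) : ℝ) + 1 ≤ N := by exact_mod_cast h1
    linarith
  have h4 : (((ω' z : ℕ) : ℝ)) ≤ (N : ℝ) - 1 := by
    have : ((ω' z : ℕ) : ℝ) + 1 ≤ N := by exact_mod_cast h2
    linarith
  have h5 : (0 : ℝ) ≤ ((ω z : ℕ) : ℝ) := by positivity
  have h6 : (0 : ℝ) ≤ ((ω' z : ℕ) : ℝ) := by positivity
  constructor
  · rw [div_le_one hN1, abs_le]
    constructor <;> linarith
  · intro hne
    have h7 : (1 : ℝ) ≤ |((ω' z : ℕ) : ℝ) - ((ω z : ℕ) : ℝ)| := by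
      have h8 : (1 : ℤ) ≤ |((ω' z : ℕ) : ℤ) - ((ω z : ℕ) : ℤ)| := by
        apply Int.one_le_abs
        intro h
        apply hne
        apply Fin.ext
        omega
      exact_mod_cast h8
    calc 1 / (N : ℝ) ≤ 1 / ((N : ℝ) - 1) := by
          apply one_div_le_one_div_of_le hN1
          linarith
      _ ≤ _ := by
          apply div_le_div_of_nonneg_right h7 hN1.le

lemma pot_range {d N : ℕ} (hN : 2 ≤ N) (Λ : Finset (Fin d → ℤ)) (ω : Λ → Fin N)
    (z : Fin d → ℤ) : 0 ≤ potential N Λ ω z ∧ potential N Λ ω z ≤ 1 := by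
  have hN1 : (0 : ℝ) < (N : ℝ) - 1 := by
    have : (2 : ℝ) ≤ N := by exact_mod_cast hN
    linarith
  unfold potential
  split_ifs with h
  · constructor
    · positivity
    · rw [div_le_one hN1]
      have h1 := (ω ⟨z, h⟩).2
      have : ((ω ⟨z, h⟩ : ℕ) : ℝ) + 1 ≤ N := by exact_mod_cast h1
      linarith
  · simp

/-- the key event of the Wegner type estimate -/
def WEvent {d : ℕ} (γ : ℝ) (v : (Fin d → ℤ) → ℝ) (Q : Finset (Fin d → ℤ)) (J : ℕ)
    (s : Fin J → (Fin d → ℤ)) (E₀ : ℝ) : Prop :=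
  ∃ (f : ℝ) (φ : (Fin d → ℤ) → ℝ), Supp Q φ ∧ (∀ z ∈ Q, Sol γ f v φ z) ∧ (∀ z, |φ z| ≤ 1) ∧
    |f - E₀| ≤ 2 * γ ^ (7 * J) ∧
    ∀ j : Fin J, γ ^ (3 * ((j : ℕ) + 1)) ≤ |φ (s j)| ∧ |φ (s j)| ≤ γ ^ (3 * (j : ℕ) + 1)

lemma wegner_single {d N J : ℕ} (hN : 2 ≤ N) {γ : ℝ} (hγ : 0 < γ) (hγ1 : γ ≤ 1 / 2)
    (Λ Q : Finset (Fin d → ℤ)) (hQ : Q ⊆ Λ) (s : Fin J → (Fin d → ℤ))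
    (E₀ : (Λ → Fin N) → ℝ)
    (hE : ∀ ω ω' : Λ → Fin N, (∀ z : Λ, (z : Fin d → ℤ) ∉ Q → ω z = ω' z) → E₀ ω = E₀ ω')
    (hsm : 2 * γ ^ 2 + 4 * (γ ^ J * Q.card) < 1 / N) :
    prob (fun ω : Λ → Fin N => WEvent γ (potential N Λ ω) Q J s (E₀ ω)) ≤ 1 / (N : ℝ) ^ J := by
  classical
  by_cases hne : ∃ ω : Λ → Fin N, WEvent γ (potential N Λ ω) Q J s (E₀ ω)
  swap
  · push Not at hne
    have : prob (fun ω : Λ → Fin N => WEvent γ (potential N Λ ω) Q J s (E₀ ω)) ≤ 0 := by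
      rw [← prob_false (Ω := Λ → Fin N)]
      exact prob_mono hne
    exact this.trans (by positivity)
  have hsQ : ∀ j, s j ∈ Q := by
    intro j
    obtain ⟨ω, f, φ, h1, -, -, -, h5⟩ := hne
    by_contra hc
    have := (h5 j).1
    rw [h1 _ hc, abs_zero] at this
    exact absurd this (not_le.2 (by positivity))
  have hwin : ∀ i j : ℕ, i < j → γ ^ (3 * j + 1) < γ ^ (3 * (i + 1)) := by
    intro i j hij
    apply pow_lt_pow_right_of_lt_one₀ hγ (by linarith)
    omega
  have hsinj : Function.Injective s := by
    intro i j hij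
    obtain ⟨ω, f, φ, h1, -, -, -, h5⟩ := hne
    by_contra hc
    have hi := h5 i
    have hj := h5 j
    rw [hij] at hi
    rcases lt_or_gt_of_ne (fun h => hc (Fin.ext h) : (i : ℕ) ≠ j) with h | h
    · have := hwin i j h
      linarith
    · have := hwin j i h
      linarith
  let s' : Fin J → Λ := fun j => ⟨s j, hQ (hsQ j)⟩
  apply prob_inj (by omega) _ s' (fun i j h => hsinj (congrArg Subtype.val h))
  intro ω ω' hω hω' hag
  have hEE : E₀ ω = E₀ ω' := by
    apply hE
    intro z hz
    apply hag
    rintro ⟨j, rfl⟩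
    exact hz (hsQ j)
  by_contra hneq
  -- minimal differing index
  have hex : ∃ j : ℕ, ∃ h : j < J, ω (s' ⟨j, h⟩) ≠ ω' (s' ⟨j, h⟩) := by
    by_contra hc
    push Not at hc
    apply hneq
    ext z : 1
    by_cases hz : z ∈ Set.range s'
    · obtain ⟨j, rfl⟩ := hz
      exact hc j j.2
    · exact hag z hz
  obtain ⟨hjJ, hjne⟩ := Nat.find_spec hex
  have hjmin : ∀ i : ℕ, i < Nat.find hex → ∀ h : i < J, ω (s' ⟨i, h⟩) = ω' (s' ⟨i, h⟩) := by
    intro i hi h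
    have := Nat.find_min hex hi
    push Not at this
    exact this h
  set j := Nat.find hex with hj
  obtain ⟨f, φ, h1, h2, h3, h4, h5⟩ := hω
  obtain ⟨f', φ', h1', h2', h3', h4', h5'⟩ := hω'
  rw [← hEE] at h4'
  set v := potential N Λ ω with hv
  set v' := potential N Λ ω' with hv'
  have hid := green_id h1 h1' h2 h2'
  have hvz : ∀ z ∈ Q, z ∉ Finset.univ.image s → v' z - v z = 0 := by
    intro z hz hzs
    have : ω ⟨z, hQ hz⟩ = ω' ⟨z, hQ hz⟩ := by
      apply hag
      rintro ⟨i, hi⟩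
      apply hzs
      rw [Finset.mem_image]
      exact ⟨i, Finset.mem_univ _, congrArg Subtype.val hi⟩
    simp [hv, hv', potential, hQ hz, this]
  have hsum : ∑ z ∈ Q, (v' z - v z) * (φ z * φ' z)
      = ∑ i : Fin J, (v' (s i) - v (s i)) * (φ (s i) * φ' (s i)) := by
    rw [← Finset.sum_image (s := Finset.univ) (g := s)
      (f := fun z => (v' z - v z) * (φ z * φ' z)) (fun a _ b _ h => hsinj h)]
    symm
    apply Finset.sum_subset
    · intro z hz
      rw [Finset.mem_image] at hz
      obtain ⟨i, -, rfl⟩ := hz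
      exact hsQ i
    · intro z hz hzs
      rw [hvz z hz hzs, zero_mul]
  set T : Fin J → ℝ := fun i => (v' (s i) - v (s i)) * (φ (s i) * φ' (s i)) with hT
  have hTle : ∀ i : Fin J, i ≠ ⟨j, hjJ⟩ → |T i| ≤ if j < (i : ℕ) then γ ^ (6 * (i : ℕ) + 2) else 0 := by
    intro i hi
    have hi' : (i : ℕ) ≠ j := fun h => hi (Fin.ext h)
    split_ifs with hlt
    · simp only [hT, abs_mul]
      have a1 := (pot_diff hN Λ ω ω' (s' i)).1
      have a2 := (h5 i).2
      have a3 := (h5' i).2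
      calc |v' (s i) - v (s i)| * (|φ (s i)| * |φ' (s i)|)
          ≤ 1 * (γ ^ (3 * (i : ℕ) + 1) * γ ^ (3 * (i : ℕ) + 1)) := by
            gcongr
        _ = γ ^ (6 * (i : ℕ) + 2) := by rw [one_mul, ← pow_add]; congr 1; ring
    · have h6 : (i : ℕ) < j := by omega
      have h7 := hjmin i h6 i.2
      have h8 : v' (s i) - v (s i) = 0 := by
        have e : ω' (s' i) = ω (s' i) := h7.symm
        change potential N Λ ω' (s' i) - potential N Λ ω (s' i) = 0
        simp [potential, e]
      simp [hT, h8]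
  have hTj : γ ^ (6 * j + 6) / N ≤ |T ⟨j, hjJ⟩| := by
    simp only [hT, abs_mul]
    have a1 := (pot_diff hN Λ ω ω' (s' ⟨j, hjJ⟩)).2 hjne
    have a2 := (h5 ⟨j, hjJ⟩).1
    have a3 := (h5' ⟨j, hjJ⟩).1
    simp only at a2 a3
    calc γ ^ (6 * j + 6) / N = 1 / N * (γ ^ (3 * (j + 1)) * γ ^ (3 * (j + 1))) := by
          rw [← pow_add]
          have : 3 * (j + 1) + 3 * (j + 1) = 6 * j + 6 := by ring
          rw [this]
          ring
      _ ≤ _ := by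
          gcongr
  have hgeo : ∑ i : Fin J, (if j < (i : ℕ) then γ ^ (6 * (i : ℕ) + 2) else 0)
      ≤ 2 * γ ^ (6 * j + 8) := by
    rw [Fin.sum_univ_eq_sum_range (fun i => if j < i then γ ^ (6 * i + 2) else 0) J,
      ← Finset.sum_filter]
    have e1 : (Finset.range J).filter (fun i => j < i) = Finset.Ico (j + 1) J := by
      ext i
      simp
      omega
    rw [e1]
    have e2 : ∀ i, γ ^ (6 * i + 2) = γ ^ 2 * (γ ^ 6) ^ i := by
      intro i
      rw [← pow_mul, ← pow_add]
      congr 1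
      ring
    simp only [e2]
    rw [← Finset.mul_sum]
    have h6 : γ ^ 6 ≤ 1 / 2 := by
      calc γ ^ 6 ≤ γ ^ 1 := pow_le_pow_of_le_one hγ.le (by linarith) (by norm_num)
        _ ≤ 1 / 2 := by simpa using hγ1
    have h7 := geom_sum_Ico_le_of_lt_one (x := γ ^ 6) (m := j + 1) (n := J) (by positivity)
      (by linarith)
    have h8 : (γ ^ 6) ^ (j + 1) / (1 - γ ^ 6) ≤ 2 * (γ ^ 6) ^ (j + 1) := by
      rw [div_le_iff₀ (by linarith)]
      have : 0 < (γ ^ 6) ^ (j + 1) := by positivity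
      nlinarith
    calc γ ^ 2 * ∑ i ∈ Finset.Ico (j + 1) J, (γ ^ 6) ^ i
        ≤ γ ^ 2 * (2 * (γ ^ 6) ^ (j + 1)) := by
          gcongr
          exact h7.trans h8
      _ = 2 * γ ^ (6 * j + 8) := by ring
  have hff : |(f' - f) * ∑ z ∈ Q, φ z * φ' z| ≤ 4 * γ ^ (7 * J) * Q.card := by
    rw [abs_mul]
    have a1 : |f' - f| ≤ 4 * γ ^ (7 * J) := by
      have := abs_sub_le f' (E₀ ω) f
      rw [abs_sub_comm (E₀ ω) f] at this
      linarith
    have a2 : |∑ z ∈ Q, φ z * φ' z| ≤ Q.card := by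
      calc |∑ z ∈ Q, φ z * φ' z| ≤ ∑ z ∈ Q, |φ z * φ' z| := Finset.abs_sum_le_sum_abs _ _
        _ ≤ ∑ _z ∈ Q, (1 : ℝ) := by
            apply Finset.sum_le_sum
            intro z _
            rw [abs_mul]
            exact mul_le_one₀ (h3 z) (abs_nonneg _) (h3' z)
        _ = Q.card := by simp
    gcongr
  rw [hsum, ← Finset.add_sum_erase _ _ (Finset.mem_univ (⟨j, hjJ⟩ : Fin J))] at hid
  have hrest : |∑ i ∈ Finset.univ.erase (⟨j, hjJ⟩ : Fin J), T i| ≤ 2 * γ ^ (6 * j + 8) := by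
    refine le_trans ?_ hgeo
    calc |∑ i ∈ Finset.univ.erase (⟨j, hjJ⟩ : Fin J), T i|
        ≤ ∑ i ∈ Finset.univ.erase (⟨j, hjJ⟩ : Fin J), |T i| := Finset.abs_sum_le_sum_abs _ _
      _ ≤ ∑ i ∈ Finset.univ.erase (⟨j, hjJ⟩ : Fin J),
            (if j < (i : ℕ) then γ ^ (6 * (i : ℕ) + 2) else 0) := by
          apply Finset.sum_le_sum
          intro i hi
          exact hTle i (Finset.ne_of_mem_erase hi)
      _ ≤ _ := by
          apply Finset.sum_le_sum_of_subset_of_nonneg (Finset.erase_subset _ _)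
          intro i _ _
          split_ifs <;> positivity
  have hTj2 : |T ⟨j, hjJ⟩| ≤ 2 * γ ^ (6 * j + 8) + 4 * γ ^ (7 * J) * Q.card := by
    have : T ⟨j, hjJ⟩ = (f' - f) * ∑ z ∈ Q, φ z * φ' z
        - ∑ i ∈ Finset.univ.erase (⟨j, hjJ⟩ : Fin J), T i := by linarith
    rw [this]
    refine (abs_sub _ _).trans ?_
    linarith
  have hpw : γ ^ (7 * J) ≤ γ ^ (6 * j + 6) * γ ^ J := by
    rw [← pow_add]
    apply pow_le_pow_of_le_one hγ.le (by linarith)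
    omega
  have hfin : γ ^ (6 * j + 6) / N ≤ γ ^ (6 * j + 6) * (2 * γ ^ 2 + 4 * (γ ^ J * Q.card)) := by
    calc γ ^ (6 * j + 6) / N ≤ 2 * γ ^ (6 * j + 8) + 4 * γ ^ (7 * J) * Q.card := hTj.trans hTj2
      _ ≤ 2 * γ ^ (6 * j + 8) + 4 * (γ ^ (6 * j + 6) * γ ^ J) * Q.card := by gcongr
      _ = _ := by ring
  have hp : 0 < γ ^ (6 * j + 6) := by positivity
  have : γ ^ (6 * j + 6) * (2 * γ ^ 2 + 4 * (γ ^ J * Q.card)) < γ ^ (6 * j + 6) * (1 / N) :=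
    mul_lt_mul_of_pos_left hsm hp
  rw [mul_one_div] at this
  linarith

end AL

namespace AL

/-- At most five separated bad sites in `U`. -/
def Struct {d : ℕ} (γ : ℝ) (v : (Fin d → ℤ) → ℝ) (m : ℝ) (X : Finset (Fin d → ℤ)) (ℓ : ℕ)
    (U : Finset (Fin d → ℤ)) (E : ℝ) : Prop :=
  ∀ C : Finset (Fin d → ℤ), C ⊆ U → (∀ c ∈ C, ¬ Good γ v m X ℓ c E) →
    (∀ c ∈ C, ∀ c' ∈ C, c ≠ c' → 2 * ℓ + 1 ≤ dist1 c c') → C.card ≤ 5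

lemma Struct.cover {d : ℕ} {γ : ℝ} {v : (Fin d → ℤ) → ℝ} {m : ℝ} {X : Finset (Fin d → ℤ)} {ℓ : ℕ}
    {U : Finset (Fin d → ℤ)} {E : ℝ} (h : Struct γ v m X ℓ U E) :
    ∃ C : Finset (Fin d → ℤ), C ⊆ U ∧ C.card ≤ 5 ∧
      ∀ z ∈ U, ¬ Good γ v m X ℓ z E → ∃ c ∈ C, dist1 z c ≤ 2 * ℓ := by
  classical
  let P : Finset (Finset (Fin d → ℤ)) := U.powerset.filter (fun C =>
    (∀ c ∈ C, ¬ Good γ v m X ℓ c E) ∧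
    (∀ c ∈ C, ∀ c' ∈ C, c ≠ c' → 2 * ℓ + 1 ≤ dist1 c c'))
  have hP : P.Nonempty := ⟨∅, by simp [P]⟩
  obtain ⟨C, hC, hmax⟩ := Finset.exists_max_image P Finset.card hP
  simp only [P, Finset.mem_filter, Finset.mem_powerset] at hC hmax
  refine ⟨C, hC.1, h C hC.1 hC.2.1 hC.2.2, ?_⟩
  intro z hz hbad
  by_contra hc
  push Not at hc
  have hzC : z ∉ C := by
    intro hzC
    have := hc z hzC
    rw [dist1_self] at this
    omega
  have := hmax (insert z C) ⟨?_, ?_, ?_⟩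
  · rw [Finset.card_insert_of_notMem hzC] at this
    omega
  · intro w hw
    rcases Finset.mem_insert.1 hw with rfl | hw
    · exact hz
    · exact hC.1 hw
  · intro w hw
    rcases Finset.mem_insert.1 hw with rfl | hw
    · exact hbad
    · exact hC.2.1 w hw
  · intro w hw w' hw' hne
    rcases Finset.mem_insert.1 hw with h1 | h1 <;> rcases Finset.mem_insert.1 hw' with h2 | h2
    · exact absurd (h1.trans h2.symm) hne
    · rw [h1]
      exact hc w' h2
    · rw [dist1_comm, h2]
      exact hc w h1
    · exact hC.2.2 w h1 w' h2 hne

lemma pigeon {α : Type*} [DecidableEq α] (C : Finset α) (hC : C.card ≤ 5) (h : α → ℤ) (w : ℕ)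
    (A : ℤ) : ∃ r : ℤ, A ≤ r ∧ r ≤ A + 5 * (2 * w + 1) ∧ ∀ c ∈ C, (w : ℤ) < |r - h c| := by
  classical
  by_contra hc
  push Not at hc
  have hsub : Finset.Icc A (A + 5 * (2 * w + 1))
      ⊆ C.biUnion (fun c => Finset.Icc (h c - w) (h c + w)) := by
    intro r hr
    rw [Finset.mem_Icc] at hr
    obtain ⟨c, hcC, hcr⟩ := hc r hr.1 hr.2
    rw [Finset.mem_biUnion]
    refine ⟨c, hcC, ?_⟩
    rw [Finset.mem_Icc]
    rw [abs_le] at hcr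
    constructor <;> linarith
  have h1 := Finset.card_le_card hsub
  have h2 : (C.biUnion (fun c => Finset.Icc (h c - w) (h c + w))).card ≤ C.card * (2 * w + 1) := by
    apply Finset.card_biUnion_le_card_mul
    intro c _
    rw [Int.card_Icc]
    omega
  rw [Int.card_Icc] at h1
  have h3 : C.card * (2 * w + 1) ≤ 5 * (2 * w + 1) := Nat.mul_le_mul_right _ hC
  omega

end AL

namespace AL

/-- number of sites outside of the zone -/
def ecount (Z : ℕ → Prop) (T t : ℕ) : ℕ :=
  by classical exact ((Finset.Ico t T).filter (fun s => ¬ Z s)).card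

lemma ecount_zero (Z : ℕ → Prop) {T t : ℕ} (h : T ≤ t) : ecount Z T t = 0 := by
  unfold ecount
  rw [Finset.Ico_eq_empty (by omega)]
  simp

lemma ecount_shift (Z : ℕ → Prop) (T : ℕ) {t t' k : ℕ} (h : t' ≤ t + k) :
    ecount Z T t ≤ ecount Z T t' + k := by
  classical
  unfold ecount
  have h1 : (Finset.Ico t T).filter (fun s => ¬ Z s)
      ⊆ (Finset.Ico t' T).filter (fun s => ¬ Z s) ∪ Finset.Ico t (t + k) := by
    intro s
    simp only [Finset.mem_filter, Finset.mem_Ico, Finset.mem_union]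
    rintro ⟨h2, h3⟩
    by_cases h4 : t' ≤ s
    · left; exact ⟨⟨h4, h2.2⟩, h3⟩
    · right; omega
  calc _ ≤ _ := Finset.card_le_card h1
    _ ≤ _ := Finset.card_union_le _ _
    _ = _ := by simp

lemma ecount_flat (Z : ℕ → Prop) (T : ℕ) {a b t t' : ℕ} (hZ : ∀ s, a ≤ s → s ≤ b → Z s)
    (h1 : a ≤ t) (h2 : t ≤ b) (h3 : a ≤ t') (h4 : t' ≤ b) :
    ecount Z T t = ecount Z T t' := by
  classical
  unfold ecount
  congr 1
  ext s
  simp only [Finset.mem_filter, Finset.mem_Ico]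
  constructor
  · rintro ⟨h5, h6⟩
    refine ⟨⟨?_, h5.2⟩, h6⟩
    by_contra hc
    exact h6 (hZ s (by omega) (by omega))
  · rintro ⟨h5, h6⟩
    refine ⟨⟨?_, h5.2⟩, h6⟩
    by_contra hc
    exact h6 (hZ s (by omega) (by omega))

lemma ecount_low {α : Type*} [DecidableEq α] (C : Finset α) (hC : C.card ≤ 5) (h : α → ℕ)
    (D T : ℕ) : T ≤ ecount (fun s => ∃ c ∈ C, h c ≤ s + D ∧ s ≤ h c + D) T 0 + 5 * (2 * D + 1) := by
  classical
  unfold ecount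
  have h1 : Finset.Ico 0 T ⊆
      (Finset.Ico 0 T).filter (fun s => ¬ ∃ c ∈ C, h c ≤ s + D ∧ s ≤ h c + D) ∪
        C.biUnion (fun c => Finset.Icc (h c - D) (h c + D)) := by
    intro s hs
    rw [Finset.mem_union, Finset.mem_filter, Finset.mem_biUnion]
    by_cases h2 : ∃ c ∈ C, h c ≤ s + D ∧ s ≤ h c + D
    · right
      obtain ⟨c, hc, h3⟩ := h2
      refine ⟨c, hc, ?_⟩
      rw [Finset.mem_Icc]
      omega
    · left; exact ⟨hs, h2⟩
  have h2 := (Finset.card_le_card h1).trans (Finset.card_union_le _ _)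
  have h3 : (C.biUnion (fun c => Finset.Icc (h c - D) (h c + D))).card ≤ C.card * (2 * D + 1) := by
    apply Finset.card_biUnion_le_card_mul
    intro c _
    rw [Nat.card_Icc]
    omega
  have h4 : C.card * (2 * D + 1) ≤ 5 * (2 * D + 1) := Nat.mul_le_mul_right _ hC
  rw [Nat.card_Ico] at h2
  have h6 : T ≤ ((Finset.Ico 0 T).filter
      (fun s => ¬ ∃ c ∈ C, h c ≤ s + D ∧ s ≤ h c + D)).card + 5 * (2 * D + 1) := by omega
  convert h6

lemma stepA {d : ℕ} (hd : 1 ≤ d) {γ : ℝ} (hγ : 0 < γ) (hγ1 : γ < 1) {v : (Fin d → ℤ) → ℝ}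
    {m m' m'' : ℝ} {X : Finset (Fin d → ℤ)} {x : Fin d → ℤ} {L ℓ D J : ℕ} {E : ℝ}
    (hℓ : 16 ≤ ℓ) (hD : D = 100 * (d * ℓ)) (hL : 2 * D ≤ L)
    (hm : 15 * (J : ℝ) ≤ m * ((ℓ : ℝ) + 1)) (hm0 : 0 ≤ m'') (hm1 : m'' < m)
    (hm2 : m' * ((L : ℝ) + 1) ≤ m'' * ((L : ℝ) - 2 * D - 5 * (2 * D + 1)))
    (hsm : γ ^ (8 * J + 1) * (2 * d * (161 * (ℓ : ℝ)) ^ d) < 1)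
    (hS : Struct γ v m X ℓ (X.filter (fun z => dist1 z x ≤ L - D)) E)
    (hE : ∀ c ∈ X, dist1 c x ≤ L - D → ∀ ρ, 50 * ℓ ≤ ρ → ρ ≤ 80 * ℓ →
      ∀ e, γ ^ (7 * J) ≤ |evs γ v (boxIn X c ρ) e - E|) :
    Good γ v m' X L x E := by
  classical
  have hdl : ℓ ≤ d * ℓ := by nlinarith
  have hdl16 : 16 * d ≤ d * ℓ := by nlinarith
  set dl := d * ℓ with hdldef
  intro φ hsupp hsol M hM
  have hM0 : 0 ≤ M := (abs_nonneg _).trans (hM x (by rw [dist1_self]; omega))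
  obtain ⟨C, hCU, hC5, hcov⟩ := hS.cover
  set Z : ℕ → Prop := fun s => ∃ c ∈ C, dist1 c x ≤ s + D ∧ s ≤ dist1 c x + D with hZ
  set e : ℕ → ℕ := fun t => ecount Z (L - 2 * D) t with he
  set g : ℝ := γ ^ m'' with hg
  have hg0 : 0 < g := Real.rpow_pos_of_pos hγ _
  have hg1 : g ≤ 1 := Real.rpow_le_one hγ.le hγ1.le hm0
  have hgm : γ ^ (m * ((ℓ : ℝ) + 1)) < g ^ (ℓ + 1) := by
    rw [hg, ← Real.rpow_natCast, ← Real.rpow_mul hγ.le]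
    apply Real.rpow_lt_rpow_of_exponent_gt hγ hγ1
    push_cast
    have : (0 : ℝ) < (ℓ : ℝ) + 1 := by positivity
    nlinarith
  suffices hmain : ∀ w, dist1 w x ≤ L + 1 → |φ w| ≤ g ^ (e (dist1 w x)) * M by
    have h1 := hmain x (by rw [dist1_self]; omega)
    rw [dist1_self] at h1
    refine h1.trans ?_
    gcongr
    rw [hg, ← Real.rpow_natCast, ← Real.rpow_mul hγ.le]
    apply Real.rpow_le_rpow_of_exponent_ge hγ hγ1.le
    refine hm2.trans ?_
    apply mul_le_mul_of_nonneg_left _ hm0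
    have h2 := ecount_low C hC5 (fun c => dist1 c x) D (L - 2 * D)
    have h3 : L ≤ e 0 + 5 * (2 * D + 1) + 2 * D := by
      simp only [he, hZ]
      omega
    have h4 : (L : ℝ) ≤ e 0 + 5 * (2 * D + 1) + 2 * D := by exact_mod_cast h3
    linarith
  obtain ⟨w, hw, hmax⟩ := Finset.exists_max_image (ball x (L + 1))
    (fun w => |φ w| / g ^ (e (dist1 w x))) ⟨x, by rw [mem_ball, dist1_self]; omega⟩
  rw [mem_ball] at hw
  set Ms := |φ w| / g ^ (e (dist1 w x)) with hMs
  have hall : ∀ z, dist1 z x ≤ L + 1 → |φ z| ≤ g ^ (e (dist1 z x)) * Ms := by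
    intro z hz
    have := hmax z (mem_ball.2 hz)
    rw [div_le_iff₀ (by positivity)] at this
    linarith
  have hwe : |φ w| = g ^ (e (dist1 w x)) * Ms := by
    rw [hMs]
    field_simp
  by_cases hMM : Ms ≤ M
  · intro z hz
    exact (hall z hz).trans (by gcongr)
  exfalso
  push Not at hMM
  have hMs0 : 0 < Ms := by linarith
  set t := dist1 w x with ht
  have htL : t < L - 2 * D := by
    by_contra hc
    have h0 : e t = 0 := ecount_zero Z (by omega)
    rw [h0, pow_zero, one_mul] at hwe
    have := hM w hw
    linarith
  have hwX : w ∈ X := by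
    by_contra hc
    rw [hsupp w hc, abs_zero] at hwe
    have : 0 < g ^ e t * Ms := by positivity
    linarith
  by_cases hgood : Good γ v m X ℓ w E
  · have h1 := hgood φ hsupp (fun z hz hzw => hsol z hz (by
      have := dist1_tri z w x
      omega)) (g ^ (e t - (ℓ + 1)) * Ms) (fun z hz => by
        have h2 := dist1_tri z w x
        have h3 := hall z (by omega)
        refine h3.trans ?_
        have h4 : e t ≤ e (dist1 z x) + (ℓ + 1) := ecount_shift Z _ (by omega)
        have h5 : g ^ (e (dist1 z x)) ≤ g ^ (e t - (ℓ + 1)) :=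
          pow_le_pow_of_le_one hg0.le hg1 (by omega)
        gcongr)
    have h2 : γ ^ (m * ((ℓ : ℝ) + 1)) * (g ^ (e t - (ℓ + 1)) * Ms)
        < g ^ (ℓ + 1) * (g ^ (e t - (ℓ + 1)) * Ms) := by
      apply mul_lt_mul_of_pos_right hgm
      positivity
    have h3 : g ^ (ℓ + 1) * (g ^ (e t - (ℓ + 1)) * Ms) ≤ g ^ e t * Ms := by
      rw [← mul_assoc, ← pow_add]
      gcongr ?_ * Ms
      exact pow_le_pow_of_le_one hg0.le hg1 (by omega)
    linarith
  · obtain ⟨c, hcC, hwc⟩ := hcov w (by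
      rw [Finset.mem_filter]; exact ⟨hwX, by omega⟩) hgood
    have hcU := hCU hcC
    rw [Finset.mem_filter] at hcU
    have hcx : dist1 c x ≤ t + 2 * ℓ := by
      have := dist1_tri c w x
      rw [dist1_comm c w] at this
      omega
    have hcx2 : t ≤ dist1 c x + 2 * ℓ := by
      have := dist1_tri w c x
      omega
    obtain ⟨r, hr1, hr2, hr3⟩ := pigeon C hC5 (fun c' => (distInf c' c : ℤ)) (2 * ℓ) (50 * ℓ + 1)
    obtain ⟨ρ, rfl⟩ : ∃ ρ : ℕ, r = (ρ : ℤ) + 1 := ⟨(r - 1).toNat, by omega⟩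
    have hρ1 : 50 * ℓ ≤ ρ := by push_cast at hr1 hr2; omega
    have hρ2 : ρ ≤ 70 * ℓ + 5 := by push_cast at hr1 hr2; omega
    have hdρ : d * (ρ + 1) ≤ 71 * dl := by
      calc d * (ρ + 1) ≤ d * (70 * ℓ + 6) := Nat.mul_le_mul_left _ (by omega)
        _ = 70 * dl + 6 * d := by rw [hdldef]; ring
        _ ≤ _ := by omega
    have hflat : ∀ z, dist1 z c ≤ D → e (dist1 z x) = e t := by
      intro z hz
      have a1 := dist1_tri z c x
      have a2 := dist1_tri c z x
      rw [dist1_comm c z] at a2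
      apply ecount_flat Z (L - 2 * D) (a := dist1 c x - D) (b := dist1 c x + D)
      · intro s hs1 hs2
        exact ⟨c, hcC, by omega, hs2⟩
      all_goals omega
    set B : ℝ := γ ^ (15 * J) * (g ^ e t * Ms) with hB
    have hQ80 : ρ ≤ 80 * ℓ := by omega
    have key := nonres hγ v (boxIn X c ρ) (E := E) (η := γ ^ (7 * J)) (B := B) (by positivity)
      (by positivity) (hE c hcU.1 hcU.2 ρ hρ1 hQ80) φ
      (fun z hz => by
        rw [mem_boxIn] at hz
        apply hsol z hz.1
        have a1 := dist1_tri z c x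
        have a2 := dist1_le_distInf z c
        have a3 : d * distInf z c ≤ d * (ρ + 1) := Nat.mul_le_mul_left _ (by omega)
        omega)
      (fun z hz τ hzτ => by
        by_cases hX : z + unit τ ∈ X
        swap
        · rw [hsupp _ hX, abs_zero]
          positivity
        rw [mem_boxIn] at hz hzτ
        set y := z + unit τ with hy
        have b1 : ρ < distInf y c := by
          by_contra hc
          exact hzτ ⟨hX, by omega⟩
        have b2 : distInf y c ≤ ρ + 1 := by
          have c1 := distInf_tri y z c
          have c2 := distInf_le_dist1 y z
          have c3 : dist1 z y = 1 := dist1_add_unit z τ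
          rw [dist1_comm y z] at c2
          omega
        have b3 : dist1 y c ≤ 71 * dl := by
          have a2 := dist1_le_distInf y c
          have a3 : d * distInf y c ≤ d * (ρ + 1) := Nat.mul_le_mul_left _ (by omega)
          omega
        have b4 := dist1_tri y c x
        have hgy : Good γ v m X ℓ y E := by
          by_contra hbad
          obtain ⟨c', hc', hyc'⟩ := hcov y (by
            rw [Finset.mem_filter]; exact ⟨hX, by omega⟩) hbad
          have h1 := hr3 c' hc'
          have h2 := distInf_tri y c' c
          have h3 := distInf_tri c' y c
          rw [distInf_comm c' y] at h3
          have h4 := distInf_le_dist1 y c'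
          have h5 : |((ρ : ℤ) + 1) - (distInf c' c : ℤ)| ≤ 2 * ℓ := by
            rw [abs_le]
            omega
          push_cast at h1
          omega
        have h1 := hgy φ hsupp (fun u hu huy => hsol u hu (by
          have := dist1_tri u y x
          omega)) (g ^ e t * Ms) (fun u hu => by
            have c1 := dist1_tri u y c
            have c2 := dist1_tri u c x
            rw [← hflat u (by omega)]
            exact hall u (by omega))
        refine h1.trans ?_
        rw [hB]
        gcongr
        rw [← Real.rpow_natCast]
        apply Real.rpow_le_rpow_of_exponent_ge hγ hγ1.le
        push_cast
        linarith)
      w (by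
        rw [mem_boxIn]
        exact ⟨hwX, (distInf_le_dist1 w c).trans (by omega)⟩)
    have hQc : ((boxIn X c ρ).card : ℝ) ≤ (161 * (ℓ : ℝ)) ^ d := by
      have h1 : (boxIn X c ρ).card ≤ (161 * ℓ) ^ d :=
        (card_boxIn X c ρ).trans (Nat.pow_le_pow_left (by omega) d)
      exact_mod_cast h1
    have h3 : (γ ^ (7 * J))⁻¹ * (γ * (2 * d * B) * ((boxIn X c ρ).card : ℝ))
        ≤ (γ ^ (7 * J))⁻¹ * (γ * (2 * d * B) * (161 * (ℓ : ℝ)) ^ d) := by gcongr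
    have h4 : (γ ^ (7 * J))⁻¹ * (γ * (2 * d * B) * (161 * (ℓ : ℝ)) ^ d)
        = γ ^ (8 * J + 1) * (2 * d * (161 * (ℓ : ℝ)) ^ d) * (g ^ e t * Ms) := by
      rw [hB]
      have : γ ^ (15 * J) = γ ^ (7 * J) * γ ^ (8 * J) := by rw [← pow_add]; congr 1; ring
      rw [this, pow_succ]
      field_simp
    have h5 : γ ^ (8 * J + 1) * (2 * d * (161 * (ℓ : ℝ)) ^ d) * (g ^ e t * Ms)
        < 1 * (g ^ e t * Ms) := mul_lt_mul_of_pos_right hsm (by positivity)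
    linarith

end AL

namespace AL

def sg (b : Bool) : ℤ := if b then 1 else -1

lemma sg_sq (b : Bool) : sg b * sg b = 1 := by cases b <;> simp [sg]

lemma abs_sg (b : Bool) : |sg b| = 1 := by cases b <;> simp [sg]

/-- displacement of a step in the path -/
def disp {d : ℕ} (δ : Fin d × Bool) : Option (Fin d × Bool) → (Fin d → ℤ)
  | none => unit δ
  | some τ => unit δ + unit τ

def paths {d : ℕ} (δ : Fin d × Bool) : ℕ → (Fin d → ℤ) → Finset (List (Fin d → ℤ))
  | 0, _ => {[]}
  | k + 1, z => Finset.univ.biUnion fun o : Option (Fin d × Bool) =>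
      paths δ k (z + disp δ o) ∪ (paths δ k (z + disp δ o)).image (fun l => z :: l)

lemma nil_mem_paths {d : ℕ} (δ : Fin d × Bool) (k : ℕ) (z : Fin d → ℤ) : [] ∈ paths δ k z := by
  induction k generalizing z with
  | zero => simp [paths]
  | succ k ih =>
    simp only [paths, Finset.mem_biUnion, Finset.mem_union]
    exact ⟨none, Finset.mem_univ _, Or.inl (ih _)⟩

lemma card_paths {d : ℕ} (δ : Fin d × Bool) (k : ℕ) (z : Fin d → ℤ) :
    (paths δ k z).card ≤ (4 * d + 2) ^ k := by
  induction k generalizing z with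
  | zero => simp [paths]
  | succ k ih =>
    simp only [paths]
    have h := Finset.card_biUnion_le_card_mul (Finset.univ : Finset (Option (Fin d × Bool)))
      (fun o => paths δ k (z + disp δ o) ∪ (paths δ k (z + disp δ o)).image (fun l => z :: l))
      (2 * (4 * d + 2) ^ k) (by
        intro o _
        have h1 := Finset.card_union_le (paths δ k (z + disp δ o))
          ((paths δ k (z + disp δ o)).image (fun l => z :: l))
        have h2 : ((paths δ k (z + disp δ o)).image (fun l => z :: l)).card
            ≤ (paths δ k (z + disp δ o)).card := Finset.card_image_le
        have h3 := ih (z + disp δ o)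
        omega)
    refine h.trans (le_of_eq ?_)
    simp
    ring

lemma path_step {d : ℕ} {γ f : ℝ} (hγ : 0 < γ) (hγ1 : γ ≤ 1 / 4) (hγd : 2 * d * γ ≤ 1)
    {v φ : (Fin d → ℤ) → ℝ} (δ : Fin d × Bool) (z : Fin d → ℤ) (hz : φ z ≠ 0)
    (hu : Sol γ f v φ (z + unit δ)) (hf : |2 * d * γ + v (z + unit δ) - f| ≤ 2) :
    ∃ o : Option (Fin d × Bool), z + disp δ o ≠ z ∧ γ ^ 2 * |φ z| ≤ |φ (z + disp δ o)| := by
  by_contra hc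
  push Not at hc
  set u := z + unit δ with hu'
  set A := |φ z| with hA
  have hA0 : 0 < A := abs_pos.2 hz
  let τ₀ : Fin d × Bool := (δ.1, !δ.2)
  have hback : unit δ + unit τ₀ = 0 := by
    obtain ⟨i, b⟩ := δ
    ext j
    by_cases hj : j = i
    · subst hj
      cases b <;> simp [unit, τ₀]
    · simp [unit, τ₀, hj]
  have h1 : |φ u| < γ ^ 2 * A := by
    have := hc none (by
      simp only [disp]
      intro h
      have h2 := dist1_add_unit z δ
      rw [h, dist1_self] at h2
      omega)
    simpa [disp] using this
  have h2 : ∀ τ, τ ≠ τ₀ → |φ (u + unit τ)| ≤ γ ^ 2 * A := by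
    intro τ hτ
    have := hc (some τ) (by
      simp only [disp]
      intro h
      apply hτ
      apply unit_inj
      have h3 : unit δ + unit τ = unit δ + unit τ₀ := by
        rw [hback]
        simpa using h
      exact add_left_cancel h3)
    simp only [disp, ← add_assoc] at this
    exact this.le
  unfold Sol at hu
  have h3 : lap φ u = φ z + ∑ τ ∈ Finset.univ.erase τ₀, φ (u + unit τ) := by
    unfold lap
    rw [← Finset.add_sum_erase _ _ (Finset.mem_univ τ₀)]
    congr 2
    rw [hu', add_assoc, hback, add_zero]
  have h4 : |∑ τ ∈ Finset.univ.erase τ₀, φ (u + unit τ)| ≤ 2 * d * (γ ^ 2 * A) := by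
    calc _ ≤ ∑ τ ∈ Finset.univ.erase τ₀, |φ (u + unit τ)| := Finset.abs_sum_le_sum_abs _ _
      _ ≤ ∑ τ ∈ Finset.univ.erase τ₀, (γ ^ 2 * A) :=
          Finset.sum_le_sum (fun τ hτ => h2 τ (Finset.ne_of_mem_erase hτ))
      _ ≤ ∑ τ : Fin d × Bool, (γ ^ 2 * A) :=
          Finset.sum_le_sum_of_subset_of_nonneg (Finset.erase_subset _ _)
            (fun _ _ _ => by positivity)
      _ = _ := by
          rw [Finset.sum_const, Finset.card_univ, Fintype.card_prod, Fintype.card_fin,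
            Fintype.card_bool, nsmul_eq_mul]
          push_cast
          ring
  have h5 : γ * A ≤ 2 * (γ ^ 2 * A) + γ * (2 * d * (γ ^ 2 * A)) := by
    have e1 : γ * φ z = (2 * d * γ + v u - f) * φ u
        - γ * ∑ τ ∈ Finset.univ.erase τ₀, φ (u + unit τ) := by
      rw [hu, h3]; ring
    have e2 : γ * A = |γ * φ z| := by rw [abs_mul, abs_of_pos hγ]
    rw [e2, e1]
    refine (abs_sub _ _).trans ?_
    rw [abs_mul, abs_mul, abs_of_pos hγ]
    gcongr
  have h6 : γ * (2 * d * (γ ^ 2 * A)) ≤ γ ^ 2 * A := by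
    have : γ * (2 * d * (γ ^ 2 * A)) = (2 * d * γ) * (γ ^ 2 * A) := by ring
    rw [this]
    exact mul_le_of_le_one_left (by positivity) hγd
  have h7 : γ ^ 2 * A ≤ 1 / 4 * (γ * A) := by
    have : γ ^ 2 * A = γ * (γ * A) := by ring
    rw [this]
    gcongr
  have : 0 < γ * A := by positivity
  linarith

lemma disp_off {d : ℕ} (i : Fin d) (b : Bool) (z : Fin d → ℤ) (o : Option (Fin d × Bool))
    (h : z + disp (i, b) o ≠ z) :
    1 ≤ sg b * (disp (i, b) o) i ∧ sg b * (disp (i, b) o) i ≤ 2 := by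
  rcases o with _ | ⟨j, b'⟩
  · cases b <;> simp [disp, unit, sg]
  · by_cases hj : i = j
    · subst hj
      by_cases hb : b' = b
      · subst hb
        cases b' <;> simp [disp, unit, sg]
      · exfalso
        apply h
        have : b' = !b := by cases b <;> cases b' <;> simp_all
        subst this
        ext k
        by_cases hk : k = i
        · subst hk
          cases b <;> simp [disp, unit]
        · simp [disp, unit, hk]
    · cases b <;> simp [disp, unit, sg, hj]

lemma path_main {d J : ℕ} {γ f : ℝ} (hγ : 0 < γ) (hγ1 : γ ≤ 1 / 4) (hγd : 2 * d * γ ≤ 1)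
    {v φ : (Fin d → ℤ) → ℝ} {Q : Finset (Fin d → ℤ)} (hsupp : Supp Q φ)
    (hsol : ∀ z ∈ Q, Sol γ f v φ z) (hf : ∀ z, |2 * d * γ + v z - f| ≤ 2)
    (i : Fin d) (b : Bool) (o : (Fin d → ℤ) → ℤ) (z₀ : Fin d → ℤ)
    (ho : ∀ z, o z = sg b * (z i - z₀ i)) (a : ℤ)
    (hroom : ∀ z ∈ Q, 0 ≤ o z → o z < a → z + unit (i, b) ∈ Q)
    (hlay : ∀ z ∈ Q, a ≤ o z → o z ≤ a + 1 → |φ z| < γ ^ (3 * J))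
    (k : ℕ) : ∀ (j : ℕ) (z : Fin d → ℤ), j ≤ J → γ ^ (3 * (j + 1)) ≤ |φ z| → 0 ≤ o z →
      o z ≤ a + 1 → a ≤ o z + k →
      ∃ l ∈ paths (i, b) k z, ∀ n, j + n < J →
        γ ^ (3 * (j + n + 1)) ≤ |φ (l.getD n 0)| ∧ |φ (l.getD n 0)| ≤ γ ^ (3 * (j + n) + 1) := by
  induction k with
  | zero =>
    intro j z hj hz h0 h1 h2
    rcases hj.lt_or_eq with hj | hj
    swap
    · exact ⟨[], nil_mem_paths _ _ _, fun n hn => by omega⟩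
    exfalso
    have hzQ : z ∈ Q := by
      by_contra hc
      rw [hsupp z hc, abs_zero] at hz
      exact absurd hz (not_le.2 (by positivity))
    have h3 := hlay z hzQ (by simpa using h2) h1
    have h4 : γ ^ (3 * J) ≤ γ ^ (3 * (j + 1)) :=
      pow_le_pow_of_le_one hγ.le (by linarith) (by omega)
    linarith
  | succ k ih =>
    intro j z hj hz h0 h1 h2
    rcases hj.lt_or_eq with hj | hj
    swap
    · exact ⟨[], nil_mem_paths _ _ _, fun n hn => by omega⟩
    have hz0 : φ z ≠ 0 := by
      intro hc
      rw [hc, abs_zero] at hz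
      exact absurd hz (not_le.2 (by positivity))
    have hzQ : z ∈ Q := by
      by_contra hc
      exact hz0 (hsupp z hc)
    have h3 : o z < a := by
      by_contra hc
      have h3 := hlay z hzQ (by omega) h1
      have h4 : γ ^ (3 * J) ≤ γ ^ (3 * (j + 1)) :=
        pow_le_pow_of_le_one hγ.le (by linarith) (by omega)
      linarith
    have hu := hroom z hzQ h0 h3
    obtain ⟨s, hs1, hs2⟩ := path_step hγ hγ1 hγd (i, b) z hz0 (hsol _ hu) (hf _)
    obtain ⟨h4, h5⟩ := disp_off i b z s hs1
    set z' := z + disp (i, b) s with hz'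
    have h6 : o z' = o z + sg b * (disp (i, b) s) i := by
      rw [ho, ho, hz', Pi.add_apply]; ring
    have hmem : ∀ l ∈ paths (i, b) k z', l ∈ paths (i, b) (k + 1) z ∧
        (z :: l) ∈ paths (i, b) (k + 1) z := by
      intro l hl
      simp only [paths, Finset.mem_biUnion, Finset.mem_union, Finset.mem_image]
      exact ⟨⟨s, Finset.mem_univ _, Or.inl hl⟩, ⟨s, Finset.mem_univ _, Or.inr ⟨l, hl, rfl⟩⟩⟩
    push_cast at h2
    by_cases hcase : γ ^ (3 * (j + 1)) ≤ |φ z'|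
    · obtain ⟨l, hl, hl2⟩ := ih j z' hj.le hcase (by omega) (by omega) (by omega)
      exact ⟨l, (hmem l hl).1, hl2⟩
    · push Not at hcase
      have h7 : |φ z| ≤ γ ^ (3 * j + 1) := by
        have h8 : γ ^ 2 * |φ z| ≤ γ ^ 2 * γ ^ (3 * j + 1) := by
          rw [← pow_add]
          refine hs2.trans (hcase.le.trans (le_of_eq ?_))
          congr 1
          ring
        exact le_of_mul_le_mul_left h8 (by positivity)
      have h8 : γ ^ (3 * (j + 1 + 1)) ≤ |φ z'| := by
        calc γ ^ (3 * (j + 1 + 1)) ≤ γ ^ (2 + 3 * (j + 1)) :=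
              pow_le_pow_of_le_one hγ.le (by linarith) (by omega)
          _ = γ ^ 2 * γ ^ (3 * (j + 1)) := pow_add _ _ _
          _ ≤ γ ^ 2 * |φ z| := by gcongr
          _ ≤ _ := hs2
      obtain ⟨l, hl, hl2⟩ := ih (j + 1) z' (by omega) h8 (by omega) (by omega) (by omega)
      refine ⟨z :: l, (hmem l hl).2, ?_⟩
      intro n hn
      rcases n with _ | n
      · simpa using ⟨hz, h7⟩
      · have := hl2 n (by omega)
        rw [List.getD_cons_succ]
        have e : j + 1 + n = j + (n + 1) := by ring
        rw [e] at this
        exact this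

lemma stepB {d : ℕ} {γ : ℝ} (hγ : 0 < γ) (hγ1 : γ ≤ 1 / 4) (hγd : 2 * d * γ ≤ 1)
    {v : (Fin d → ℤ) → ℝ} (hv : ∀ z, 0 ≤ v z ∧ v z ≤ 1) {m : ℝ} {α β : Fin d → ℤ}
    {Q : Finset (Fin d → ℤ)} (hQ : Q = Finset.Icc α β)
    {ℓ J : ℕ} (hℓ : 16 ≤ ℓ) (hJ : 1 ≤ J) (hm : 15 * (J : ℝ) ≤ m * ((ℓ : ℝ) + 1))
    (hwid : ∃ i, α i + 50 * ℓ ≤ β i) (e : Q) {E₀ : ℝ}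
    (hS : Struct γ v m Q ℓ Q (evs γ v Q e))
    (hE : |evs γ v Q e - E₀| ≤ 2 * γ ^ (7 * J)) :
    ∃ δ : Fin d × Bool, ∃ z₀ ∈ Q, ∃ l ∈ paths δ (21 * ℓ) z₀,
      WEvent γ v Q J (fun j => l.getD j 0) E₀ := by
  classical
  obtain ⟨φ, hsupp, hsol, ⟨z₀, hz₀, hz1⟩, hφ1⟩ := ev_vec γ v Q e
  set f := evs γ v Q e with hf
  have hfb : ∀ z, |2 * d * γ + v z - f| ≤ 2 := by
    intro z
    have h1 := hsol z₀ hz₀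
    unfold Sol at h1
    have h2 := lap_abs_le φ z₀ 1 (fun τ => hφ1 _)
    have h3 : |2 * d * γ + v z₀ - f| ≤ 1 := by
      have h4 : |(2 * d * γ + v z₀ - f) * φ z₀| = |γ * lap φ z₀| := by rw [h1]
      rw [abs_mul, abs_mul, hz1, mul_one, abs_of_pos hγ] at h4
      rw [h4]
      calc γ * |lap φ z₀| ≤ γ * (2 * d * 1) := by gcongr
        _ = 2 * d * γ := by ring
        _ ≤ 1 := hγd
    have h5 := hv z
    have h6 := hv z₀
    rw [abs_le] at h3 ⊢
    constructor <;> linarith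
  obtain ⟨i, hi⟩ := hwid
  obtain ⟨b, hb⟩ : ∃ b : Bool, ∀ z ∈ Q, 0 ≤ sg b * (z i - z₀ i) →
      sg b * (z i - z₀ i) < 25 * ℓ → z + unit (i, b) ∈ Q := by
    have hin : ∀ b : Bool, ∀ z ∈ Q, α i ≤ z i + sg b → z i + sg b ≤ β i → z + unit (i, b) ∈ Q := by
      intro b z hz h1 h2
      rw [hQ, Finset.mem_Icc, Pi.le_def, Pi.le_def] at hz ⊢
      constructor
      · intro k
        by_cases hk : k = i
        · subst hk
          simpa [unit, sg] using h1
        · simpa [unit, hk] using hz.1 k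
      · intro k
        by_cases hk : k = i
        · subst hk
          simpa [unit, sg] using h2
        · simpa [unit, hk] using hz.2 k
    have hz₀' := hz₀
    rw [hQ, Finset.mem_Icc, Pi.le_def, Pi.le_def] at hz₀'
    have c1 := hz₀'.1 i
    have c2 := hz₀'.2 i
    by_cases hcase : z₀ i + 25 * ℓ ≤ β i
    · refine ⟨true, fun z hz h1 h2 => hin true z hz ?_ ?_⟩ <;> simp only [sg, if_true] at * <;> omega
    · refine ⟨false, fun z hz h1 h2 => hin false z hz ?_ ?_⟩ <;>
        simp only [sg, Bool.false_eq_true, if_false] at * <;> omega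
  obtain ⟨C, hCU, hC5, hcov⟩ := hS.cover
  obtain ⟨a, ha1, ha2, ha3⟩ := pigeon C hC5 (fun c => sg b * (c i - z₀ i)) (2 * ℓ + 1) 1
  push_cast at ha2
  have hlay : ∀ z ∈ Q, a ≤ sg b * (z i - z₀ i) → sg b * (z i - z₀ i) ≤ a + 1 →
      |φ z| < γ ^ (3 * J) := by
    intro z hz h1 h2
    have hgood : Good γ v m Q ℓ z f := by
      by_contra hbad
      obtain ⟨c, hc, hzc⟩ := hcov z hz hbad
      have h3 := ha3 c hc
      have h4 := coord_le_dist1 z c i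
      have h5 : |sg b * (z i - z₀ i) - sg b * (c i - z₀ i)| ≤ 2 * ℓ := by
        have : sg b * (z i - z₀ i) - sg b * (c i - z₀ i) = sg b * (z i - c i) := by ring
        rw [this, abs_mul, abs_sg, one_mul, Int.abs_eq_natAbs]
        exact_mod_cast h4.trans hzc
      rw [abs_le] at h5
      have h6 : |a - sg b * (c i - z₀ i)| ≤ 2 * ℓ + 1 := by
        rw [abs_le]
        constructor <;> linarith
      push_cast at h3
      linarith
    have h3 := hgood φ hsupp (fun z hz _ => hsol z hz) 1 (fun w _ => hφ1 w)
    rw [mul_one] at h3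
    refine lt_of_le_of_lt h3 ?_
    rw [← Real.rpow_natCast]
    apply Real.rpow_lt_rpow_of_exponent_gt hγ (by linarith)
    push_cast
    have : (1 : ℝ) ≤ J := by exact_mod_cast hJ
    linarith
  obtain ⟨l, hl, hl2⟩ := path_main hγ hγ1 hγd hsupp hsol hfb i b
    (fun z => sg b * (z i - z₀ i)) z₀ (fun z => rfl) a
    (fun z hz h1 h2 => hb z hz h1 (by omega)) hlay (21 * ℓ) 0 z₀ (by omega)
    (by
      rw [hz1]
      exact pow_le_one₀ hγ.le (by linarith))
    (by simp) (by simp; omega) (by simp; omega)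
  refine ⟨(i, b), z₀, hz₀, l, hl, f, φ, hsupp, hsol, hφ1, hE, ?_⟩
  intro j
  have := hl2 j (by simpa using j.2)
  simpa using this

end AL

namespace AL

def PairBad {d : ℕ} (γ : ℝ) (v : (Fin d → ℤ) → ℝ) (m : ℝ) (X : Finset (Fin d → ℤ)) (L : ℕ)
    (x y : Fin d → ℤ) : Prop := ∃ E, ¬ Good γ v m X L x E ∧ ¬ Good γ v m X L y E

lemma pairBad_dep {d N : ℕ} (γ : ℝ) (Λ : Finset (Fin d → ℤ)) (m : ℝ) (X : Finset (Fin d → ℤ))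
    (L : ℕ) (x y : Fin d → ℤ) :
    Dep (fun ω : Λ → Fin N => PairBad γ (potential N Λ ω) m X L x y)
      {z : Λ | dist1 (z : Fin d → ℤ) x ≤ L ∨ dist1 (z : Fin d → ℤ) y ≤ L} := by
  rintro ω ω' h ⟨E, h1, h2⟩
  have hpot : ∀ z, (dist1 z x ≤ L ∨ dist1 z y ≤ L) → potential N Λ ω' z = potential N Λ ω z := by
    intro z hz
    unfold potential
    split_ifs with hΛ
    · rw [h ⟨z, hΛ⟩ hz]
    · rfl
  refine ⟨E, fun hg => h1 ?_, fun hg => h2 ?_⟩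
  · exact Good_congr (fun z _ hz => hpot z (Or.inl hz)) hg
  · exact Good_congr (fun z _ hz => hpot z (Or.inr hz)) hg

lemma Dep.and {ι κ : Type*} {A B : (ι → κ) → Prop} {S T : Set ι} (hA : Dep A S) (hB : Dep B T) :
    Dep (fun ω => A ω ∧ B ω) (S ∪ T) := by
  rintro ω ω' h ⟨h1, h2⟩
  exact ⟨hA ω ω' (fun i hi => h i (Or.inl hi)) h1, hB ω ω' (fun i hi => h i (Or.inr hi)) h2⟩

lemma prob_notStruct {d N : ℕ} (hN : 1 ≤ N) (γ : ℝ) (Λ : Finset (Fin d → ℤ)) (m : ℝ)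
    (X U : Finset (Fin d → ℤ)) (ℓ : ℕ) (c : ℝ) (hc0 : 0 ≤ c)
    (hc : ∀ x ∈ U, ∀ y ∈ U, 2 * ℓ + 1 ≤ dist1 x y →
      prob (fun ω : Λ → Fin N => PairBad γ (potential N Λ ω) m X ℓ x y) ≤ c) :
    prob (fun ω : Λ → Fin N => ∃ E, ¬ Struct γ (potential N Λ ω) m X ℓ U E)
      ≤ (U.card : ℝ) ^ 6 * c ^ 3 := by
  classical
  have : Nonempty (Fin N) := ⟨⟨0, by omega⟩⟩
  let T : Finset (Fin 6 → (Fin d → ℤ)) := (Fintype.piFinset (fun _ : Fin 6 => U)).filter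
    (fun s => ∀ i j, i ≠ j → 2 * ℓ + 1 ≤ dist1 (s i) (s j))
  have hT : (T.card : ℝ) ≤ (U.card : ℝ) ^ 6 := by
    have : T.card ≤ U.card ^ 6 := by
      refine (Finset.card_filter_le _ _).trans ?_
      simp [Fintype.card_piFinset]
    exact_mod_cast this
  let PB : (Fin d → ℤ) → (Fin d → ℤ) → (Λ → Fin N) → Prop :=
    fun x y ω => PairBad γ (potential N Λ ω) m X ℓ x y
  have h1 : prob (fun ω : Λ → Fin N => ∃ E, ¬ Struct γ (potential N Λ ω) m X ℓ U E)
      ≤ prob (fun ω : Λ → Fin N => ∃ s ∈ T,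
          (PB (s 0) (s 1) ω ∧ PB (s 2) (s 3) ω) ∧ PB (s 4) (s 5) ω) := by
    apply prob_mono
    rintro ω ⟨E, hE⟩
    unfold Struct at hE
    push Not at hE
    obtain ⟨C, hCU, hbad, hsep, hcard⟩ := hE
    have hle : Fintype.card (Fin 6) ≤ Fintype.card C := by simp; omega
    obtain ⟨g⟩ := Function.Embedding.nonempty_of_card_le hle
    refine ⟨fun i => (g i : Fin d → ℤ), ?_, ?_⟩
    · simp only [T, Finset.mem_filter, Fintype.mem_piFinset]
      refine ⟨fun i => hCU (g i).2, fun i j hij => hsep _ (g i).2 _ (g j).2 ?_⟩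
      intro h
      exact hij (g.injective (Subtype.ext h))
    · have hb : ∀ i, ¬ Good γ (potential N Λ ω) m X ℓ (g i : Fin d → ℤ) E :=
        fun i => hbad _ (g i).2
      exact ⟨⟨⟨E, hb 0, hb 1⟩, ⟨E, hb 2, hb 3⟩⟩, ⟨E, hb 4, hb 5⟩⟩
  refine h1.trans ((prob_exists_le_card T _ (c ^ 3) ?_).trans (by gcongr))
  intro s hs
  simp only [T, Finset.mem_filter, Fintype.mem_piFinset] at hs
  obtain ⟨hsU, hsep⟩ := hs
  have hdis : ∀ i j : Fin 6, i ≠ j → ∀ z : Fin d → ℤ, dist1 z (s i) ≤ ℓ → dist1 z (s j) ≤ ℓ →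
      False := by
    intro i j hij z h1 h2
    have h3 := hsep i j hij
    have h4 := dist1_tri (s i) z (s j)
    rw [dist1_comm (s i) z] at h4
    omega
  have d01 := pairBad_dep (N := N) γ Λ m X ℓ (s 0) (s 1)
  have d23 := pairBad_dep (N := N) γ Λ m X ℓ (s 2) (s 3)
  have d45 := pairBad_dep (N := N) γ Λ m X ℓ (s 4) (s 5)
  have e1 := prob_and (fun ω => PB (s 0) (s 1) ω) (fun ω => PB (s 2) (s 3) ω) _ _ d01 d23 (by
    rw [Set.disjoint_left]
    rintro z (h1 | h1) (h2 | h2)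
    · exact hdis 0 2 (by decide) z h1 h2
    · exact hdis 0 3 (by decide) z h1 h2
    · exact hdis 1 2 (by decide) z h1 h2
    · exact hdis 1 3 (by decide) z h1 h2)
  have e2 := prob_and (fun ω => PB (s 0) (s 1) ω ∧ PB (s 2) (s 3) ω) (fun ω => PB (s 4) (s 5) ω)
    _ _ (d01.and d23) d45 (by
    rw [Set.disjoint_left]
    rintro z ((h1 | h1) | (h1 | h1)) (h2 | h2)
    · exact hdis 0 4 (by decide) z h1 h2
    · exact hdis 0 5 (by decide) z h1 h2
    · exact hdis 1 4 (by decide) z h1 h2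
    · exact hdis 1 5 (by decide) z h1 h2
    · exact hdis 2 4 (by decide) z h1 h2
    · exact hdis 2 5 (by decide) z h1 h2
    · exact hdis 3 4 (by decide) z h1 h2
    · exact hdis 3 5 (by decide) z h1 h2)
  rw [e2, e1]
  have p1 : prob (fun ω => PB (s 0) (s 1) ω) ≤ c :=
    hc _ (hsU 0) _ (hsU 1) (hsep 0 1 (by decide))
  have p2 : prob (fun ω => PB (s 2) (s 3) ω) ≤ c :=
    hc _ (hsU 2) _ (hsU 3) (hsep 2 3 (by decide))
  have p3 : prob (fun ω => PB (s 4) (s 5) ω) ≤ c :=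
    hc _ (hsU 4) _ (hsU 5) (hsep 4 5 (by decide))
  have q1 := prob_nonneg (fun ω => PB (s 0) (s 1) ω)
  have q2 := prob_nonneg (fun ω => PB (s 2) (s 3) ω)
  have q3 := prob_nonneg (fun ω => PB (s 4) (s 5) ω)
  calc _ ≤ c * c * c := by gcongr
    _ = c ^ 3 := by ring

end AL

namespace AL

/-- centers -/
def UU {d : ℕ} (X : Finset (Fin d → ℤ)) (x : Fin d → ℤ) (L D : ℕ) : Finset (Fin d → ℤ) :=
  X.filter (fun z => dist1 z x ≤ L - D)

lemma card_UU {d : ℕ} (X : Finset (Fin d → ℤ)) (x : Fin d → ℤ) (L D : ℕ) :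
    (UU X x L D).card ≤ (2 * L + 1) ^ d := by
  refine le_trans (Finset.card_le_card ?_) (card_ball x L)
  intro z hz
  rw [UU, Finset.mem_filter] at hz
  rw [mem_ball]
  omega

lemma card_box80 {d ℓ : ℕ} (hℓ : 1 ≤ ℓ) (X : Finset (Fin d → ℤ)) (c : Fin d → ℤ) {ρ : ℕ}
    (hρ : ρ ≤ 80 * ℓ) : (boxIn X c ρ).card ≤ (161 * ℓ) ^ d :=
  (card_boxIn X c ρ).trans (Nat.pow_le_pow_left (by omega) d)

lemma stepC_incl {d : ℕ} (hd : 1 ≤ d) {γ : ℝ} (hγ : 0 < γ) (hγ1 : γ ≤ 1 / 4) (hγd : 2 * d * γ ≤ 1)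
    {v : (Fin d → ℤ) → ℝ} (hv : ∀ z, 0 ≤ v z ∧ v z ≤ 1)
    {m m' m'' : ℝ} {X : Finset (Fin d → ℤ)} (hX : IsRect X) {x y : Fin d → ℤ}
    (hx : x ∈ X) (hy : y ∈ X) {L ℓ D J : ℕ}
    (hℓ : 16 ≤ ℓ) (hD : D = 100 * (d * ℓ)) (hL : 2 * D ≤ L) (hxy : 2 * L + 1 ≤ dist1 x y)
    (hJ : 1 ≤ J)
    (hm : 15 * (J : ℝ) ≤ m * ((ℓ : ℝ) + 1)) (hm0 : 0 ≤ m'') (hm1 : m'' < m)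
    (hm2 : m' * ((L : ℝ) + 1) ≤ m'' * ((L : ℝ) - 2 * D - 5 * (2 * D + 1)))
    (hsm : γ ^ (8 * J + 1) * (2 * d * (161 * (ℓ : ℝ)) ^ d) < 1)
    (hbad : PairBad γ v m' X L x y) :
    (((∃ E, ¬ Struct γ v m X ℓ (UU X x L D) E) ∨ (∃ E, ¬ Struct γ v m X ℓ (UU X y L D) E)) ∨
    (∃ c ∈ UU X y L D, ∃ ρ ∈ Finset.Icc (50 * ℓ) (80 * ℓ),
      ∃ E, ¬ Struct γ v m (boxIn X c ρ) ℓ (boxIn X c ρ) E)) ∨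
    (∃ c₁ ∈ UU X x L D, ∃ ρ₁ ∈ Finset.Icc (50 * ℓ) (80 * ℓ), 
      ∃ e ∈ (Finset.univ : Finset (boxIn X c₁ ρ₁)),
      ∃ c ∈ UU X y L D, ∃ ρ ∈ Finset.Icc (50 * ℓ) (80 * ℓ),
      ∃ δ ∈ (Finset.univ : Finset (Fin d × Bool)),
      ∃ z₀ ∈ boxIn X c ρ, ∃ l ∈ paths δ (21 * ℓ) z₀,
      WEvent γ v (boxIn X c ρ) J (fun j => l.getD j 0) (evs γ v (boxIn X c₁ ρ₁) e)) := by
  by_contra hcon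
  simp only [not_or, not_exists, not_not, not_and] at hcon
  obtain ⟨⟨⟨hS1, hS2⟩, hS3⟩, hW⟩ := hcon
  obtain ⟨E, hb1, hb2⟩ := hbad
  have hr : ∀ u, (∀ E, Struct γ v m X ℓ (UU X u L D) E) → ¬ Good γ v m' X L u E →
      ∃ c ∈ UU X u L D, ∃ ρ ∈ Finset.Icc (50 * ℓ) (80 * ℓ), ∃ e : boxIn X c ρ,
        |evs γ v (boxIn X c ρ) e - E| < γ ^ (7 * J) := by
    intro u hSu hbu
    by_contra hc
    push Not at hc
    apply hbu
    apply stepA hd hγ (by linarith) hℓ hD hL hm hm0 hm1 hm2 hsm (hSu E)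
    intro c hcX hcu ρ h1 h2 e
    exact hc c (by rw [UU, Finset.mem_filter]; exact ⟨hcX, hcu⟩) ρ
      (by rw [Finset.mem_Icc]; exact ⟨h1, h2⟩) e
  obtain ⟨c₁, hc₁, ρ₁, hρ₁, e₁, he₁⟩ := hr x hS1 hb1
  obtain ⟨c, hc, ρ, hρ, e, he⟩ := hr y hS2 hb2
  obtain ⟨a, b, rfl⟩ := hX
  have hQ := boxIn_eq_Icc a b c ρ
  have hcX : c ∈ Finset.Icc a b := (Finset.mem_filter.1 hc).1
  have hρ' := Finset.mem_Icc.1 hρ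
  have hwid : ∃ i, a i + 50 * ℓ ≤ b i := by
    have h1 : 50 * ℓ < distInf x y := by
      by_contra hcc
      have h2 := dist1_le_distInf x y
      have h3 : d * distInf x y ≤ d * (50 * ℓ) := Nat.mul_le_mul_left _ (by omega)
      have h4 : d * (50 * ℓ) = 50 * (d * ℓ) := by ring
      omega
    by_contra hcc
    push Not at hcc
    have : distInf x y ≤ 50 * ℓ := by
      rw [distInf_le]
      intro i
      rw [Finset.mem_Icc, Pi.le_def, Pi.le_def] at hx hy
      have h1 := hx.1 i
      have h2 := hx.2 i
      have h3 := hy.1 i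
      have h4 := hy.2 i
      have h5 := hcc i
      omega
    omega
  obtain ⟨i, hi⟩ := hwid
  have hwid' : ∃ i, max (a i) (c i - ρ) + 50 * ℓ ≤ min (b i) (c i + ρ) := by
    refine ⟨i, ?_⟩
    rw [Finset.mem_Icc, Pi.le_def, Pi.le_def] at hcX
    have h1 := hcX.1 i
    have h2 := hcX.2 i
    omega
  obtain ⟨δ, z₀, hz₀, l, hl, hWe⟩ := stepB hγ hγ1 hγd hv hQ hℓ hJ hm hwid' e
    (E₀ := evs γ v (boxIn (Finset.Icc a b) c₁ ρ₁) e₁) (hS3 c hc ρ hρ _) (by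
      have := abs_sub_le (evs γ v (boxIn (Finset.Icc a b) c ρ) e) E
        (evs γ v (boxIn (Finset.Icc a b) c₁ ρ₁) e₁)
      rw [abs_sub_comm E] at this
      linarith)
  exact hW c₁ hc₁ ρ₁ hρ₁ e₁ (Finset.mem_univ _) c hc ρ hρ δ (Finset.mem_univ _) z₀ hz₀ l hl hWe

lemma stepC {d N : ℕ} (hd : 1 ≤ d) (hN : 2 ≤ N) {γ : ℝ} (hγ : 0 < γ) (hγ1 : γ ≤ 1 / 4)
    (hγd : 2 * d * γ ≤ 1) (Λ : Finset (Fin d → ℤ))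
    {m m' m'' : ℝ} {X : Finset (Fin d → ℤ)} (hX : IsRect X) (hXΛ : X ⊆ Λ) {x y : Fin d → ℤ}
    (hx : x ∈ X) (hy : y ∈ X) {L ℓ D J : ℕ}
    (hℓ : 16 ≤ ℓ) (hD : D = 100 * (d * ℓ)) (hL : 2 * D ≤ L) (hxy : 2 * L + 1 ≤ dist1 x y)
    (hJ : 1 ≤ J)
    (hm : 15 * (J : ℝ) ≤ m * ((ℓ : ℝ) + 1)) (hm0 : 0 ≤ m'') (hm1 : m'' < m)
    (hm2 : m' * ((L : ℝ) + 1) ≤ m'' * ((L : ℝ) - 2 * D - 5 * (2 * D + 1)))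
    (hsm : γ ^ (8 * J + 1) * (2 * d * (161 * (ℓ : ℝ)) ^ d) < 1)
    (hsm2 : 2 * γ ^ 2 + 4 * (γ ^ J * (161 * (ℓ : ℝ)) ^ d) < 1 / N)
    {p : ℝ} (hp0 : 0 ≤ p)
    (hp : ∀ Y : Finset (Fin d → ℤ), IsRect Y → Y ⊆ Λ → ∀ z ∈ Y, ∀ w ∈ Y,
      2 * ℓ + 1 ≤ dist1 z w →
      prob (fun ω : Λ → Fin N => PairBad γ (potential N Λ ω) m Y ℓ z w) ≤ p)
    {u κ : ℝ} (hu : ((2 * (L : ℝ) + 1) ^ d) ≤ u) (hκ : (161 * (ℓ : ℝ)) ^ d ≤ κ) :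
    prob (fun ω : Λ → Fin N => PairBad γ (potential N Λ ω) m' X L x y)
      ≤ (u ^ 6 * p ^ 3 + u ^ 6 * p ^ 3) + u * ((30 * (ℓ : ℝ) + 1) * (κ ^ 6 * p ^ 3))
        + u * ((30 * (ℓ : ℝ) + 1) * (κ * (u * ((30 * (ℓ : ℝ) + 1) * (2 * d * (κ *
          (((4 * d + 2 : ℕ) : ℝ) ^ (21 * ℓ) * (1 / (N : ℝ) ^ J)))))))) := by
  have hu0 : 0 ≤ u := le_trans (by positivity) hu
  have hκ0 : 0 ≤ κ := le_trans (by positivity) hκ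
  have hUc : ∀ z, ((UU X z L D).card : ℝ) ≤ u := by
    intro z
    refine le_trans ?_ hu
    exact_mod_cast card_UU X z L D
  have hQc : ∀ c ρ, ρ ∈ Finset.Icc (50 * ℓ) (80 * ℓ) → ((boxIn X c ρ).card : ℝ) ≤ κ := by
    intro c ρ hρ
    refine le_trans ?_ hκ
    exact_mod_cast card_box80 (by omega) X c (Finset.mem_Icc.1 hρ).2
  have hIc : ((Finset.Icc (50 * ℓ) (80 * ℓ)).card : ℝ) = 30 * (ℓ : ℝ) + 1 := by
    rw [Nat.card_Icc]
    have : 80 * ℓ + 1 - 50 * ℓ = 30 * ℓ + 1 := by omega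
    rw [this]
    push_cast
    ring
  refine (prob_mono (fun ω hω => stepC_incl hd hγ hγ1 hγd (pot_range hN Λ ω) hX hx hy hℓ hD hL hxy
    hJ hm hm0 hm1 hm2 hsm hω)).trans ?_
  have hstr : ∀ z, prob (fun ω : Λ → Fin N => ∃ E, ¬ Struct γ (potential N Λ ω) m X ℓ (UU X z L D) E)
      ≤ u ^ 6 * p ^ 3 := by
    intro z
    refine (prob_notStruct (by omega) γ Λ m X (UU X z L D) ℓ p hp0 ?_).trans ?_
    · intro a ha b hb hab
      exact hp X hX hXΛ a (Finset.mem_filter.1 ha).1 b (Finset.mem_filter.1 hb).1 hab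
    · gcongr
      exact hUc z
  refine (prob_or_le _ _).trans (add_le_add ((prob_or_le _ _).trans (add_le_add
    ((prob_or_le _ _).trans (add_le_add (hstr x) (hstr y))) ?_)) ?_)
  · refine (prob_exists_le_card _ _ ((30 * (ℓ : ℝ) + 1) * (κ ^ 6 * p ^ 3)) ?_).trans
      (mul_le_mul_of_nonneg_right (hUc y) (by positivity))
    intro c _
    rw [← hIc]
    refine prob_exists_le_card _ _ _ ?_
    intro ρ hρ
    refine (prob_notStruct (by omega) γ Λ m (boxIn X c ρ) (boxIn X c ρ) ℓ p hp0 ?_).trans ?_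
    · intro a ha b hb hab
      exact hp _ (isRect_boxIn hX c ρ) (fun z hz => hXΛ (mem_boxIn.1 hz).1) a ha b hb hab
    · gcongr
      exact hQc c ρ hρ
  · refine (prob_exists_le_card _ _ _ ?_).trans
      (mul_le_mul_of_nonneg_right (hUc x) (by positivity))
    intro c₁ hc₁
    rw [← hIc]
    refine prob_exists_le_card _ _ _ ?_
    intro ρ₁ hρ₁
    refine (prob_exists_le_card _ _ _ ?_).trans
      (mul_le_mul_of_nonneg_right (by
        rw [Finset.card_univ, Fintype.card_coe]; exact hQc c₁ ρ₁ hρ₁) (by positivity))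
    intro e _
    refine (prob_exists_le_card _ _ _ ?_).trans
      (mul_le_mul_of_nonneg_right (hUc y) (by positivity))
    intro c hc
    refine prob_exists_le_card _ _ _ ?_
    intro ρ hρ
    have h2d : (((Finset.univ : Finset (Fin d × Bool)).card : ℕ) : ℝ) = 2 * d := by
      rw [Finset.card_univ, Fintype.card_prod, Fintype.card_fin, Fintype.card_bool]
      push_cast
      ring
    rw [← h2d]
    refine prob_exists_le_card _ _ _ ?_
    intro δ _
    refine (prob_exists_le_card _ _ _ ?_).trans
      (mul_le_mul_of_nonneg_right (hQc c ρ hρ) (by positivity))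
    intro z₀ _
    refine (prob_exists_le_card _ _ (1 / (N : ℝ) ^ J) ?_).trans
      (mul_le_mul_of_nonneg_right (by exact_mod_cast card_paths δ (21 * ℓ) z₀) (by positivity))
    intro l _
    apply wegner_single hN hγ (by linarith) Λ (boxIn X c ρ)
      (fun z hz => hXΛ (mem_boxIn.1 hz).1) (fun j => l.getD j 0)
      (fun ω => evs γ (potential N Λ ω) (boxIn X c₁ ρ₁) e)
    · intro ω ω' hω
      apply congrFun
      apply evs_congr
      intro z hz
      have hzΛ : z ∈ Λ := hXΛ (mem_boxIn.1 hz).1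
      have hzn : z ∉ boxIn X c ρ := by
        intro hz2
        rw [mem_boxIn] at hz hz2
        have a1 := dist1_le_distInf z c₁
        have a2 := dist1_le_distInf z c
        have hρ' := (Finset.mem_Icc.1 hρ).2
        have hρ₁' := (Finset.mem_Icc.1 hρ₁).2
        have a3 : d * distInf z c₁ ≤ d * (80 * ℓ) := Nat.mul_le_mul_left _ (by omega)
        have a4 : d * distInf z c ≤ d * (80 * ℓ) := Nat.mul_le_mul_left _ (by omega)
        have a5 : d * (80 * ℓ) = 80 * (d * ℓ) := by ring
        have b1 := (Finset.mem_filter.1 hc₁).2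
        have b2 := (Finset.mem_filter.1 hc).2
        have b3 := dist1_tri z c₁ x
        have b4 := dist1_tri z c y
        have b5 := dist1_tri x z y
        rw [dist1_comm x z] at b5
        omega
      have := hω ⟨z, hzΛ⟩ hzn
      simp [potential, hzΛ, this]
    · refine lt_of_le_of_lt ?_ hsm2
      have : ((boxIn X c ρ).card : ℝ) ≤ (161 * (ℓ : ℝ)) ^ d := by
        exact_mod_cast card_box80 (by omega) X c (Finset.mem_Icc.1 hρ).2
      gcongr

end AL

namespace AL

def Nbase (d Q : ℕ) : ℕ :=
  (2 * (20000 * d) ^ 2) ^ d * ((2 * (20000 * d) ^ 2) ^ d * ((20000 * d) ^ 2) ^ Q)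

def Nbig (d Q : ℕ) : ℕ := (2 ^ (10 * d + 6 + 2 * Q) * (4 * d + 2) ^ 21) ^ 60

lemma num_step {d Q N L ℓ J : ℕ} (hd : 1 ≤ d) (hQ : 18 * d + 2 ≤ Q) (hL1 : L + 1 ≤ (ℓ + 1) ^ 2)
    (hℓ : 161 ≤ ℓ) (hℓd : 2 * d ≤ ℓ) (hJ : ℓ ≤ 60 * J)
    (hN : Nbig d Q ≤ N) :
    let u : ℝ := (2 * (L : ℝ) + 1) ^ d
    let κ : ℝ := (161 * (ℓ : ℝ)) ^ d
    let p : ℝ := 1 / ((ℓ : ℝ) + 1) ^ Q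
    (u ^ 6 * p ^ 3 + u ^ 6 * p ^ 3) + u * ((30 * (ℓ : ℝ) + 1) * (κ ^ 6 * p ^ 3))
        + u * ((30 * (ℓ : ℝ) + 1) * (κ * (u * ((30 * (ℓ : ℝ) + 1) * (2 * d * (κ *
          (((4 * d + 2 : ℕ) : ℝ) ^ (21 * ℓ) * (1 / (N : ℝ) ^ J))))))))
      ≤ 1 / ((L : ℝ) + 1) ^ Q := by
  intro u κ p
  unfold Nbig at hN
  set q : ℝ := (ℓ : ℝ) + 1 with hq
  have hℓr : (161 : ℝ) ≤ ℓ := by exact_mod_cast hℓ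
  have hq161 : 162 ≤ q := by linarith
  have hq1 : 1 ≤ q := by linarith
  have hq0 : 0 < q := by linarith
  have hLq : (L : ℝ) + 1 ≤ q ^ 2 := by rw [hq]; exact_mod_cast hL1
  have hL0 : (0 : ℝ) ≤ L := by positivity
  have hu : u ≤ q ^ (3 * d) := by
    simp only [u]
    rw [pow_mul]
    gcongr
    nlinarith
  have hu0 : 0 ≤ u := by positivity
  have hκ : κ ≤ q ^ (2 * d) := by
    simp only [κ]
    rw [pow_mul]
    gcongr
    nlinarith
  have hκ0 : 0 ≤ κ := by positivity
  have h30 : 30 * (ℓ : ℝ) + 1 ≤ q ^ 2 := by nlinarith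
  have h2d : 2 * (d : ℝ) ≤ q := by
    have : 2 * (d : ℝ) ≤ ℓ := by exact_mod_cast hℓd
    linarith
  have hp3 : p ^ 3 = 1 / q ^ (3 * Q) := by
    simp only [p]
    rw [div_pow, one_pow, ← pow_mul, mul_comm Q 3]
  have hfin : 1 / q ^ (2 * Q) ≤ 1 / ((L : ℝ) + 1) ^ Q := by
    apply one_div_le_one_div_of_le (by positivity)
    rw [pow_mul]
    gcongr
  refine le_trans ?_ hfin
  rw [hp3]
  have hN1 : (1 : ℝ) ≤ N := by
    have : 1 ≤ N := le_trans (Nat.one_le_pow _ _ (by positivity)) hN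
    exact_mod_cast this
  have hNJ : (0 : ℝ) < (N : ℝ) ^ J := by positivity
  have t1 : u ^ 6 * (1 / q ^ (3 * Q)) ≤ 1 / (6 * q ^ (2 * Q)) := by
    rw [mul_one_div, div_le_div_iff₀ (by positivity) (by positivity), one_mul]
    calc u ^ 6 * (6 * q ^ (2 * Q)) ≤ (q ^ (3 * d)) ^ 6 * (q * q ^ (2 * Q)) := by
          gcongr
          linarith
      _ = q ^ (18 * d + 1 + 2 * Q) := by ring
      _ ≤ q ^ (3 * Q) := pow_le_pow_right₀ hq1 (by omega)
  have t2 : u * ((30 * (ℓ : ℝ) + 1) * (κ ^ 6 * (1 / q ^ (3 * Q)))) ≤ 1 / (3 * q ^ (2 * Q)) := by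
    have : u * ((30 * (ℓ : ℝ) + 1) * (κ ^ 6 * (1 / q ^ (3 * Q))))
        = (u * (30 * (ℓ : ℝ) + 1) * κ ^ 6) / q ^ (3 * Q) := by ring
    rw [this, div_le_div_iff₀ (by positivity) (by positivity), one_mul]
    calc u * (30 * (ℓ : ℝ) + 1) * κ ^ 6 * (3 * q ^ (2 * Q))
        ≤ q ^ (3 * d) * q ^ 2 * (q ^ (2 * d)) ^ 6 * (q * q ^ (2 * Q)) := by
          gcongr
          linarith
      _ = q ^ (15 * d + 3 + 2 * Q) := by ring
      _ ≤ q ^ (3 * Q) := pow_le_pow_right₀ hq1 (by omega)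
  have hq2 : q ≤ 2 ^ ℓ := by
    rw [hq]
    have : ℓ + 1 ≤ 2 ^ ℓ := Nat.lt_two_pow_self
    exact_mod_cast this
  set b : ℝ := ((4 * d + 2 : ℕ) : ℝ) with hb
  have hb1 : 1 ≤ b := by
    rw [hb]
    exact_mod_cast (by omega : 1 ≤ 4 * d + 2)
  have t3 : u * ((30 * (ℓ : ℝ) + 1) * (κ * (u * ((30 * (ℓ : ℝ) + 1) * (2 * d * (κ *
          (b ^ (21 * ℓ) * (1 / (N : ℝ) ^ J)))))))) ≤ 1 / (3 * q ^ (2 * Q)) := by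
    have : u * ((30 * (ℓ : ℝ) + 1) * (κ * (u * ((30 * (ℓ : ℝ) + 1) * (2 * d * (κ *
          (b ^ (21 * ℓ) * (1 / (N : ℝ) ^ J))))))))
        = (u * (30 * (ℓ : ℝ) + 1) * κ * (u * (30 * (ℓ : ℝ) + 1) * (2 * d) * κ) * b ^ (21 * ℓ))
          / (N : ℝ) ^ J := by ring
    rw [this, div_le_div_iff₀ (by positivity) (by positivity), one_mul]
    calc (u * (30 * (ℓ : ℝ) + 1) * κ * (u * (30 * (ℓ : ℝ) + 1) * (2 * d) * κ) * b ^ (21 * ℓ))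
          * (3 * q ^ (2 * Q))
        ≤ (q ^ (3 * d) * q ^ 2 * q ^ (2 * d) * (q ^ (3 * d) * q ^ 2 * q * q ^ (2 * d))
          * b ^ (21 * ℓ)) * (q * q ^ (2 * Q)) := by
          gcongr
          linarith
      _ = q ^ (10 * d + 6 + 2 * Q) * (b ^ 21) ^ ℓ := by ring
      _ ≤ (2 ^ ℓ) ^ (10 * d + 6 + 2 * Q) * (b ^ 21) ^ ℓ := by gcongr
      _ = (2 ^ (10 * d + 6 + 2 * Q) * b ^ 21) ^ ℓ := by
          have h9 : ((2 : ℝ) ^ ℓ) ^ (10 * d + 6 + 2 * Q) = (2 ^ (10 * d + 6 + 2 * Q)) ^ ℓ := by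
            rw [← pow_mul, ← pow_mul, mul_comm]
          rw [h9, ← mul_pow]
      _ ≤ (2 ^ (10 * d + 6 + 2 * Q) * b ^ 21) ^ (60 * J) := by
          apply pow_le_pow_right₀ _ hJ
          have h1 : (1 : ℝ) ≤ 2 ^ (10 * d + 6 + 2 * Q) := one_le_pow₀ (by norm_num)
          have h2 : (1 : ℝ) ≤ b ^ 21 := one_le_pow₀ hb1
          nlinarith
      _ = ((2 ^ (10 * d + 6 + 2 * Q) * b ^ 21) ^ 60) ^ J := by rw [pow_mul]
      _ ≤ (N : ℝ) ^ J := by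
          gcongr
          rw [hb]
          exact_mod_cast hN
  have hs : 1 / (6 * q ^ (2 * Q)) + 1 / (6 * q ^ (2 * Q)) + 1 / (3 * q ^ (2 * Q))
      + 1 / (3 * q ^ (2 * Q)) = 1 / q ^ (2 * Q) := by
    field_simp
    norm_num
  linarith

lemma prob_eq_le {d N : ℕ} (hN : 1 ≤ N) (Λ : Finset (Fin d → ℤ)) (z z' : Λ) (h : z ≠ z') :
    prob (fun ω : Λ → Fin N => ω z = ω z') ≤ 1 / (N : ℝ) := by
  classical
  have := prob_inj (J := 1) (by omega : 0 < N) (fun ω : Λ → Fin N => ω z = ω z') (fun _ => z)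
    (fun i j _ => Subsingleton.elim i j) (by
      intro ω ω' h1 h2 h3
      ext i : 1
      have h4 : ω z' = ω' z' := h3 z' (by rintro ⟨_, h⟩; exact absurd h ‹_›)
      by_cases hi : i = z
      · subst hi
        rw [h1, h2, h4]
      · exact h3 i (by rintro ⟨_, h⟩; exact hi h.symm))
  simpa using this

lemma base_case {d N : ℕ} (hN : 2 ≤ N) {γ : ℝ} (hγ : 0 < γ) (hγ1 : γ < 1)
    (hg : 16 * d * N * γ ≤ γ ^ (3 / 4 : ℝ)) (hg2 : 16 * d * N * γ ≤ 1)
    (Λ X : Finset (Fin d → ℤ)) (hX : X ⊆ Λ) (L : ℕ) (x y : Fin d → ℤ)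
    (hxy : 2 * L + 1 ≤ dist1 x y) :
    prob (fun ω : Λ → Fin N => PairBad γ (potential N Λ ω) (3 / 4) X L x y)
      ≤ (2 * (L : ℝ) + 1) ^ d * ((2 * (L : ℝ) + 1) ^ d * (1 / N)) := by
  classical
  have hN2 : (2 : ℝ) ≤ N := by exact_mod_cast hN
  let S : (Fin d → ℤ) → Finset Λ := fun u => Finset.univ.filter (fun z : Λ => dist1 (z : Fin d → ℤ) u ≤ L)
  have hS : ∀ u, ((S u).card : ℝ) ≤ (2 * (L : ℝ) + 1) ^ d := by
    intro u
    have h1 : (S u).card ≤ (ball u L).card := by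
      apply Finset.card_le_card_of_injOn (fun z : Λ => (z : Fin d → ℤ))
      · intro z hz
        simp only [S, Finset.coe_filter, Finset.mem_univ, true_and, Set.mem_setOf_eq] at hz
        exact mem_ball.2 hz
      · intro a _ b _ h
        exact Subtype.ext h
    exact_mod_cast h1.trans (card_ball u L)
  have h1 : prob (fun ω : Λ → Fin N => PairBad γ (potential N Λ ω) (3 / 4) X L x y)
      ≤ prob (fun ω : Λ → Fin N => ∃ z ∈ S x, ∃ z' ∈ S y, ω z = ω z') := by
    apply prob_mono
    rintro ω ⟨E, hb1, hb2⟩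
    have hr : ∀ u, ¬ Good γ (potential N Λ ω) (3 / 4) X L u E →
        ∃ z ∈ S u, |potential N Λ ω z - E| < 1 / (4 * N) := by
      intro u hu
      by_contra hc
      push Not at hc
      apply hu
      apply good_initial hγ hγ1 (by linarith) hg hg2
      intro z hz hzu
      exact hc ⟨z, hX hz⟩ (by simp [S, hzu])
    obtain ⟨z, hz, hz1⟩ := hr x hb1
    obtain ⟨z', hz', hz1'⟩ := hr y hb2
    refine ⟨z, hz, z', hz', ?_⟩
    have h2 : |potential N Λ ω z - potential N Λ ω z'| < 1 / N := by
      have h3 := abs_sub_le (potential N Λ ω z) E (potential N Λ ω z')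
      rw [abs_sub_comm E] at h3
      have h4 : 1 / (4 * (N : ℝ)) + 1 / (4 * N) ≤ 1 / N := by
        have : 1 / (4 * (N : ℝ)) = 1 / 4 * (1 / N) := by field_simp
        rw [this]
        have : 0 < 1 / (N : ℝ) := by positivity
        linarith
      linarith
    by_contra hne
    have h5 := (pot_diff hN Λ (fun _ => ω z') (fun _ => ω z) z).2 (Ne.symm hne)
    have e1 : potential N Λ (fun _ => ω z) z = potential N Λ ω z := by simp [potential]
    have e2 : potential N Λ (fun _ => ω z') z = potential N Λ ω z' := by simp [potential]
    rw [e1, e2] at h5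
    linarith
  refine h1.trans ((prob_exists_le_card _ _ ((2 * (L : ℝ) + 1) ^ d * (1 / N)) ?_).trans
    (mul_le_mul_of_nonneg_right (hS x) (by positivity)))
  intro z hz
  refine (prob_exists_le_card _ _ (1 / (N : ℝ)) ?_).trans
    (mul_le_mul_of_nonneg_right (hS y) (by positivity))
  intro z' hz'
  apply prob_eq_le (by omega)
  rintro rfl
  simp only [S, Finset.mem_filter, Finset.mem_univ, true_and] at hz hz'
  have := dist1_tri x z y
  rw [dist1_comm x z] at this
  omega

lemma PairBad.mono {d : ℕ} {γ : ℝ} (hγ : 0 < γ) (hγ1 : γ ≤ 1) {v : (Fin d → ℤ) → ℝ} {m m' : ℝ}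
    (hm : m' ≤ m) {X : Finset (Fin d → ℤ)} {L : ℕ} {x y : Fin d → ℤ}
    (h : PairBad γ v m' X L x y) : PairBad γ v m X L x y := by
  obtain ⟨E, h1, h2⟩ := h
  exact ⟨E, fun hg => h1 (hg.mono hγ hγ1 hm), fun hg => h2 (hg.mono hγ hγ1 hm)⟩

def mm (n : ℕ) : ℝ := 1 / 2 + 1 / 4 * (1 / 2) ^ n

lemma claim_arith {d ℓ s L : ℝ} (hd1 : 1 ≤ d) (hℓ0 : 20000 ≤ ℓ) (hs0 : 0 < s) (hs1 : s ≤ 1)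
    (hs : 20000 * d ≤ ℓ * s) (hℓr : ℓ * ℓ ≤ L) :
    (1 / 2 + 1 / 8 * s) * (L + 1) ≤
      (1 / 2 + 3 / 16 * s) * (L - 2 * (100 * (d * ℓ)) - 5 * (2 * (100 * (d * ℓ)) + 1)) := by
  have hw : 1 ≤ d * ℓ := by nlinarith
  have h2 : s * (ℓ * ℓ) ≤ s * L := mul_le_mul_of_nonneg_left hℓr hs0.le
  have h3 : 20000 * d * ℓ ≤ ℓ * s * ℓ := mul_le_mul_of_nonneg_right hs (by linarith)
  have h5 : (1 / 2 + 3 / 16 * s) * (1200 * (d * ℓ) + 6) ≤ 1 * (1200 * (d * ℓ) + 6) :=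
    mul_le_mul_of_nonneg_right (by linarith) (by linarith)
  linarith

set_option maxHeartbeats 1000000 in
lemma claim {d Q N : ℕ} (hN2 : 2 ≤ N) (hd : 1 ≤ d) (hQ : 18 * d + 2 ≤ Q)
    (hN : Nbig d Q ≤ N)
    (hNb : Nbase d Q ≤ N)
    {γ : ℝ} (hγ : 0 < γ) (hγ1 : γ ≤ 1 / 4) (hγd : 2 * d * γ ≤ 1)
    (hg : 16 * d * N * γ ≤ γ ^ (3 / 4 : ℝ)) (hg2 : 16 * d * N * γ ≤ 1)
    (hG : γ * 19320 ^ d < 1) (hG2 : 2 * γ ^ 2 + 4 * (γ * 19320 ^ d) < 1 / N)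
    (Λ : Finset (Fin d → ℤ)) (n : ℕ) :
    ∀ L : ℕ, L < (20000 * d) ^ (2 ^ (n + 1)) → ∀ X : Finset (Fin d → ℤ), IsRect X → X ⊆ Λ →
      ∀ x ∈ X, ∀ y ∈ X, 2 * L + 1 ≤ dist1 x y →
      prob (fun ω : Λ → Fin N => PairBad γ (potential N Λ ω) (mm n) X L x y)
        ≤ 1 / ((L : ℝ) + 1) ^ Q := by
  have hN0 : (0 : ℝ) < N := by
    have : 0 < N := by omega
    exact_mod_cast this
  induction n with
  | zero =>
    intro L hL X hX hXΛ x hx y hy hxy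
    have hmm : mm 0 = 3 / 4 := by norm_num [mm]
    rw [hmm]
    refine (base_case hN2 hγ (by linarith) hg hg2 Λ X hXΛ L x y hxy).trans ?_
    have h1 : (2 * L + 1) ^ d * ((2 * L + 1) ^ d * (L + 1) ^ Q) ≤ N := by
      refine le_trans ?_ hNb
      unfold Nbase
      simp only [zero_add, pow_one] at hL
      gcongr <;> omega
    have h2 : (2 * (L : ℝ) + 1) ^ d * ((2 * (L : ℝ) + 1) ^ d * ((L : ℝ) + 1) ^ Q) ≤ N := by
      exact_mod_cast h1
    rw [le_div_iff₀ (by positivity)]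
    have : (2 * (L : ℝ) + 1) ^ d * ((2 * (L : ℝ) + 1) ^ d * (1 / N)) * ((L : ℝ) + 1) ^ Q
        = ((2 * (L : ℝ) + 1) ^ d * ((2 * (L : ℝ) + 1) ^ d * ((L : ℝ) + 1) ^ Q)) / N := by ring
    rw [this, div_le_one hN0]
    exact h2
  | succ n ih =>
    intro L hL X hX hXΛ x hx y hy hxy
    have hmpos : (0 : ℝ) < (1 / 2) ^ n := by positivity
    have hmle : ((1 : ℝ) / 2) ^ n ≤ 1 := pow_le_one₀ (by norm_num) (by norm_num)
    have hms : mm (n + 1) = 1 / 2 + 1 / 8 * (1 / 2) ^ n := by rw [mm, pow_succ]; ring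
    have hmn : mm n = 1 / 2 + 1 / 4 * (1 / 2) ^ n := rfl
    by_cases hLn : L < (20000 * d) ^ (2 ^ (n + 1))
    · refine (prob_mono (fun ω hω => PairBad.mono hγ (by linarith) ?_ hω)).trans
        (ih L hLn X hX hXΛ x hx y hy hxy)
      linarith
    push Not at hLn
    set ℓ := Nat.sqrt L with hℓdef
    obtain ⟨t, ht⟩ : ∃ t, t = 20000 * d := ⟨_, rfl⟩
    rw [← ht] at hLn hL ih
    clear hNb
    have hℓ1 : t ^ 2 ^ n ≤ ℓ := by
      rw [Nat.le_sqrt']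
      rw [← pow_mul, ← pow_succ]
      exact hLn
    have hℓ2 : ℓ < t ^ 2 ^ (n + 1) := by
      rw [Nat.sqrt_lt', ← pow_mul, ← pow_succ]
      exact hL
    have hℓ3 : ℓ * ℓ ≤ L := Nat.sqrt_le L
    have hℓ4 : L + 1 ≤ (ℓ + 1) ^ 2 := Nat.succ_le_of_lt (Nat.lt_succ_sqrt' L)
    have ht1 : t * 2 ^ n ≤ ℓ := by
      refine le_trans ?_ hℓ1
      calc t * 2 ^ n ≤ t * t ^ n := by gcongr; omega
        _ = t ^ (n + 1) := by ring
        _ ≤ t ^ 2 ^ n := Nat.pow_le_pow_right (by omega) (Nat.succ_le_of_lt Nat.lt_two_pow_self)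
    have htl : t ≤ ℓ := (Nat.le_mul_of_pos_right t (Nat.two_pow_pos n)).trans ht1
    clear hLn hL hℓ1
    have hs : 20000 * (d : ℝ) ≤ ℓ * (1 / 2) ^ n := by
      rw [one_div, inv_pow, ← div_eq_mul_inv, le_div_iff₀ (by positivity)]
      rw [ht] at ht1
      exact_mod_cast ht1
    have hJ : ℓ ≤ 60 * (ℓ / 30) := by omega
    have hJ1 : 1 ≤ ℓ / 30 := by omega
    have hJl : 30 * (ℓ / 30) ≤ ℓ := by omega
    set J := ℓ / 30 with hJdef
    have hJr : 30 * (J : ℝ) ≤ ℓ := by exact_mod_cast hJl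
    have hJr2 : (ℓ : ℝ) ≤ 60 * J := by exact_mod_cast hJ
    have hℓr : (ℓ : ℝ) * ℓ ≤ L := by exact_mod_cast hℓ3
    have hd1 : (1 : ℝ) ≤ d := by exact_mod_cast hd
    have hℓ0 : (20000 : ℝ) ≤ ℓ := by exact_mod_cast (by omega : 20000 ≤ ℓ)
    have hK : (161 * (ℓ : ℝ)) ^ d ≤ (19320 ^ d) ^ J := by
      rw [← pow_mul, mul_comm d J, pow_mul]
      gcongr
      calc 161 * (ℓ : ℝ) ≤ 9660 * J := by linarith
        _ ≤ 9660 ^ J * 2 ^ J := by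
            have h1 : (9660 : ℝ) ^ 1 ≤ 9660 ^ J := pow_le_pow_right₀ (by norm_num) hJ1
            have h2 : (J : ℝ) ≤ 2 ^ J := by exact_mod_cast (Nat.lt_two_pow_self (n := J)).le
            rw [pow_one] at h1
            gcongr
        _ = 19320 ^ J := by rw [← mul_pow]; norm_num
    have hGJ : γ ^ J * (161 * (ℓ : ℝ)) ^ d ≤ γ * 19320 ^ d := by
      calc γ ^ J * (161 * (ℓ : ℝ)) ^ d ≤ γ ^ J * (19320 ^ d) ^ J := by gcongr
        _ = (γ * 19320 ^ d) ^ J := by rw [mul_pow]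
        _ ≤ (γ * 19320 ^ d) ^ 1 := pow_le_pow_of_le_one (by positivity) hG.le hJ1
        _ = _ := pow_one _
    refine (stepC (m := mm n) (m'' := 1 / 2 + 3 / 16 * (1 / 2) ^ n) (D := 100 * (d * ℓ)) (J := J)
      hd hN2 hγ hγ1 hγd Λ hX hXΛ hx hy
      (by omega) rfl ?_ hxy hJ1 ?_ (by positivity) ?_ ?_ ?_ ?_ (p := 1 / ((ℓ : ℝ) + 1) ^ Q)
      (by positivity) (fun Y hY hYΛ z hz w hw hzw => ih ℓ hℓ2 Y hY hYΛ z hz w hw hzw)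
      (u := (2 * (L : ℝ) + 1) ^ d) (κ := (161 * (ℓ : ℝ)) ^ d) le_rfl le_rfl).trans
      (num_step hd hQ hℓ4 (by omega) (by omega) hJ hN)
    · have : 2 * (100 * (d * ℓ)) = (200 * d) * ℓ := by ring
      rw [this]
      refine le_trans (Nat.mul_le_mul_right _ ?_) hℓ3
      omega
    · rw [hmn]
      have : (0 : ℝ) ≤ 1 / 4 * (1 / 2) ^ n * ((ℓ : ℝ) + 1) := by positivity
      rw [add_mul]
      linarith
    · rw [hmn]
      linarith
    · rw [hms]
      push_cast
      set s : ℝ := (1 / 2) ^ n with hs'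
      exact claim_arith hd1 hℓ0 hmpos hmle hs hℓr
    · calc γ ^ (8 * J + 1) * (2 * d * (161 * (ℓ : ℝ)) ^ d)
          = γ ^ (7 * J) * ((2 * d * γ) * (γ ^ J * (161 * (ℓ : ℝ)) ^ d)) := by ring
        _ ≤ 1 * (1 * (γ ^ J * (161 * (ℓ : ℝ)) ^ d)) := by
            gcongr
            exact pow_le_one₀ hγ.le (by linarith)
        _ < 1 := by
            rw [one_mul, one_mul]
            exact lt_of_le_of_lt hGJ hG
    · refine lt_of_le_of_lt ?_ hG2
      gcongr

end AL

namespace AL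

/-- extension by zero -/
def ext0 {d : ℕ} {Λ : Finset (Fin d → ℤ)} (φ : Λ → ℝ) (z : Fin d → ℤ) : ℝ :=
  if h : z ∈ Λ then φ ⟨z, h⟩ else 0

lemma ext0_coe {d : ℕ} {Λ : Finset (Fin d → ℤ)} (φ : Λ → ℝ) (z : Λ) :
    ext0 φ (z : Fin d → ℤ) = φ z := by simp [ext0]

lemma ext0_supp {d : ℕ} {Λ : Finset (Fin d → ℤ)} (φ : Λ → ℝ) : Supp Λ (ext0 φ) := by
  intro z hz
  simp [ext0, hz]

lemma ext0_sol {d : ℕ} {γ μ : ℝ} {v : (Fin d → ℤ) → ℝ} {Λ : Finset (Fin d → ℤ)} (φ : Λ → ℝ)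
    (h : (hamOn d γ v Λ).mulVec φ = μ • φ) (z : Fin d → ℤ) (hz : z ∈ Λ) :
    Sol γ μ v (ext0 φ) z := by
  have h1 := ham_mulVec γ v Λ (ext0 φ) (ext0_supp φ) ⟨z, hz⟩
  have h2 : (fun w : Λ => ext0 φ (w : Fin d → ℤ)) = φ := funext fun w => ext0_coe φ w
  rw [h2, h] at h1
  have h3 := ext0_coe φ ⟨z, hz⟩
  simp only [Pi.smul_apply, smul_eq_mul] at h1 h3
  unfold Sol
  rw [← h3] at h1
  linarith

lemma col_sum {d : ℕ} {Λ : Finset (Fin d → ℤ)} (φ : Λ → Λ → ℝ)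
    (ho : ∀ β β', ∑ z, φ β z * φ β' z = if β = β' then 1 else 0) (w : Fin d → ℤ) :
    ∑ β, (ext0 (φ β) w) ^ 2 ≤ 1 := by
  by_cases hw : w ∈ Λ
  · have h1 : (Matrix.of φ) * (Matrix.of φ).transpose = 1 := by
      ext β β'
      simp only [Matrix.mul_apply, Matrix.of_apply, Matrix.transpose_apply, Matrix.one_apply]
      exact ho β β'
    have h2 := mul_eq_one_comm.1 h1
    have h3 := congrFun (congrFun h2 ⟨w, hw⟩) ⟨w, hw⟩
    simp only [Matrix.mul_apply, Matrix.of_apply, Matrix.transpose_apply, Matrix.one_apply_eq] at h3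
    apply le_of_eq
    rw [← h3]
    apply Finset.sum_congr rfl
    intro β _
    simp only [ext0, hw, dif_pos]
    ring
  · simp [ext0, hw]

lemma col_prod {d : ℕ} {Λ : Finset (Fin d → ℤ)} (φ : Λ → Λ → ℝ)
    (ho : ∀ β β', ∑ z, φ β z * φ β' z = if β = β' then 1 else 0) (w y : Fin d → ℤ) :
    ∑ β, |ext0 (φ β) w| * |ext0 (φ β) y| ≤ 1 := by
  have h1 := col_sum φ ho w
  have h2 := col_sum φ ho y
  have h3 : ∑ β, |ext0 (φ β) w| * |ext0 (φ β) y|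
      ≤ ∑ β, (1 / 2 * (ext0 (φ β) w) ^ 2 + 1 / 2 * (ext0 (φ β) y) ^ 2) := by
    apply Finset.sum_le_sum
    intro β _
    rw [← sq_abs (ext0 (φ β) w), ← sq_abs (ext0 (φ β) y)]
    nlinarith [sq_nonneg (|ext0 (φ β) w| - |ext0 (φ β) y|)]
  rw [Finset.sum_add_distrib, ← Finset.mul_sum, ← Finset.mul_sum] at h3
  linarith

lemma lin_le_six (L : ℕ) : 4 * L + 6 ≤ 6 ^ (L + 1) := by
  induction L with
  | zero => norm_num
  | succ n ih => rw [pow_succ]; omega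

lemma corr_bound {d : ℕ} (hd : 1 ≤ d) {γ : ℝ} (hγ : 0 < γ) (hγ1 : γ ≤ 1)
    (hγ6 : γ ^ (1 / 10 : ℝ) ≤ 1 / 6 ^ d) {v : (Fin d → ℤ) → ℝ} {Λ : Finset (Fin d → ℤ)}
    (x y : Λ) {L r : ℕ} (hr : r ≤ 2 * L + 2) (hgood : ¬ PairBad γ v (1 / 2) Λ L x y)
    (φ : Λ → Λ → ℝ) (ho : ∀ β β', ∑ z, φ β z * φ β' z = if β = β' then 1 else 0)
    (he : ∀ β, ∃ μ : ℝ, (hamOn d γ v Λ).mulVec (φ β) = μ • φ β) :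
    (∑ β, |φ β x * φ β y|) * γ ^ (-(r : ℝ) / 5) ≤ 1 := by
  set g : ℝ := γ ^ (1 / 2 * ((L : ℝ) + 1)) with hg
  have hg0 : 0 < g := Real.rpow_pos_of_pos hγ _
  have hgd : ∀ (β : Λ) (u : Fin d → ℤ) (μ : ℝ), (hamOn d γ v Λ).mulVec (φ β) = μ • φ β →
      Good γ v (1 / 2) Λ L u μ →
      |ext0 (φ β) u| ≤ g * ∑ w ∈ ball u (L + 1), |ext0 (φ β) w| := by
    intro β u μ hμ hG
    apply hG _ (ext0_supp _) (fun z hz _ => ext0_sol _ hμ z hz)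
    intro w hw
    exact Finset.single_le_sum (f := fun w => |ext0 (φ β) w|) (fun _ _ => abs_nonneg _)
      (mem_ball.2 hw)
  have h1 : ∀ β, |φ β x * φ β y| ≤
      g * ((∑ w ∈ ball (x : Fin d → ℤ) (L + 1), |ext0 (φ β) w| * |ext0 (φ β) y|)
        + ∑ w ∈ ball (y : Fin d → ℤ) (L + 1), |ext0 (φ β) w| * |ext0 (φ β) x|) := by
    intro β
    obtain ⟨μ, hμ⟩ := he β
    rw [← ext0_coe (φ β) x, ← ext0_coe (φ β) y, abs_mul]
    have hs1 : 0 ≤ ∑ w ∈ ball (x : Fin d → ℤ) (L + 1), |ext0 (φ β) w| * |ext0 (φ β) y| :=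
      Finset.sum_nonneg (fun _ _ => by positivity)
    have hs2 : 0 ≤ ∑ w ∈ ball (y : Fin d → ℤ) (L + 1), |ext0 (φ β) w| * |ext0 (φ β) x| :=
      Finset.sum_nonneg (fun _ _ => by positivity)
    have hor : Good γ v (1 / 2) Λ L x μ ∨ Good γ v (1 / 2) Λ L y μ := by
      by_contra hc
      push Not at hc
      exact hgood ⟨μ, hc.1, hc.2⟩
    rw [mul_add]
    rcases hor with hG | hG
    · have h2 := mul_le_mul_of_nonneg_right (hgd β x μ hμ hG) (abs_nonneg (ext0 (φ β) y))
      rw [mul_assoc, Finset.sum_mul] at h2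
      have := mul_nonneg hg0.le hs2
      linarith
    · have h2 := mul_le_mul_of_nonneg_right (hgd β y μ hμ hG) (abs_nonneg (ext0 (φ β) x))
      rw [mul_assoc, Finset.sum_mul] at h2
      have := mul_nonneg hg0.le hs1
      linarith
  have hb : ∀ u w' : Fin d → ℤ,
      ∑ β, ∑ w ∈ ball u (L + 1), |ext0 (φ β) w| * |ext0 (φ β) w'| ≤ (2 * (L : ℝ) + 3) ^ d := by
    intro u w'
    rw [Finset.sum_comm]
    refine (Finset.sum_le_sum (fun w _ => col_prod φ ho w w')).trans ?_
    rw [Finset.sum_const, nsmul_eq_mul, mul_one]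
    have := card_ball u (L + 1)
    have h3 : 2 * (L + 1) + 1 = 2 * L + 3 := by ring
    rw [h3] at this
    exact_mod_cast this
  have h2 : ∑ β, |φ β x * φ β y| ≤ g * (2 * (2 * (L : ℝ) + 3) ^ d) := by
    refine (Finset.sum_le_sum (fun β _ => h1 β)).trans ?_
    rw [← Finset.mul_sum, Finset.sum_add_distrib]
    apply mul_le_mul_of_nonneg_left _ hg0.le
    have a1 := hb x y
    have a2 := hb y x
    linarith
  have h3 : γ ^ (-(r : ℝ) / 5) ≤ γ ^ (-(2 * (L : ℝ) + 2) / 5) := by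
    apply Real.rpow_le_rpow_of_exponent_ge hγ hγ1
    have : (r : ℝ) ≤ 2 * L + 2 := by exact_mod_cast hr
    linarith
  have h4 : g * γ ^ (-(2 * (L : ℝ) + 2) / 5) = (γ ^ (1 / 10 : ℝ)) ^ (L + 1) := by
    rw [hg, ← Real.rpow_add hγ, ← Real.rpow_natCast, ← Real.rpow_mul hγ.le]
    congr 1
    push_cast
    ring
  have h5 : (2 * (2 * (L : ℝ) + 3) ^ d) ≤ (6 ^ d) ^ (L + 1) := by
    calc (2 * (2 * (L : ℝ) + 3) ^ d) ≤ 2 ^ d * (2 * (L : ℝ) + 3) ^ d := by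
          gcongr
          exact le_self_pow₀ (by norm_num) (by omega)
      _ = (4 * (L : ℝ) + 6) ^ d := by rw [← mul_pow]; ring_nf
      _ ≤ (6 ^ (L + 1)) ^ d := by
          gcongr
          exact_mod_cast lin_le_six L
      _ = (6 ^ d) ^ (L + 1) := by rw [← pow_mul, ← pow_mul, mul_comm]
  calc (∑ β, |φ β x * φ β y|) * γ ^ (-(r : ℝ) / 5)
      ≤ (g * (2 * (2 * (L : ℝ) + 3) ^ d)) * γ ^ (-(2 * (L : ℝ) + 2) / 5) := by
        gcongr
    _ = (g * γ ^ (-(2 * (L : ℝ) + 2) / 5)) * (2 * (2 * (L : ℝ) + 3) ^ d) := by ring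
    _ ≤ (1 / 6 ^ d) ^ (L + 1) * (6 ^ d) ^ (L + 1) := by
        rw [h4]
        have : 0 ≤ γ ^ (1 / 10 : ℝ) := (Real.rpow_pos_of_pos hγ _).le
        gcongr
    _ = 1 := by
        rw [← mul_pow, one_div, inv_mul_cancel₀ (by positivity), one_pow]

end AL

namespace AL

lemma term_le {d Q r : ℕ} {q R : ℝ} (hq0 : 0 ≤ q) (hQ : 2 * (2 * d + q + 2) ≤ Q) (hR : 4 ≤ R)
    (hr : R ≤ r) :
    (2 * (r : ℝ) + 1) ^ d * (1 / ((((r - 1) / 2 : ℕ) : ℝ) + 1) ^ Q) ≤ R ^ (-q) * ((r : ℝ) ^ 2)⁻¹ := by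
  have hr4 : (4 : ℝ) ≤ r := hR.trans hr
  have hr4' : 4 ≤ r := by exact_mod_cast hr4
  obtain ⟨L, hL⟩ : ∃ L, L = (r - 1) / 2 := ⟨_, rfl⟩
  rw [← hL]
  have h1 : r ≤ 2 * L + 2 := by omega
  have h2 : 1 ≤ L := by omega
  have h1r : (r : ℝ) ≤ 2 * L + 2 := by exact_mod_cast h1
  have h2r : (1 : ℝ) ≤ L := by exact_mod_cast h2
  have hr0 : (0 : ℝ) < r := by linarith
  have h3 : (r : ℝ) ≤ ((L : ℝ) + 1) ^ 2 := by nlinarith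
  have h4 : (r : ℝ) ^ ((Q : ℝ) / 2) ≤ ((L : ℝ) + 1) ^ Q := by
    calc (r : ℝ) ^ ((Q : ℝ) / 2) ≤ (((L : ℝ) + 1) ^ 2) ^ ((Q : ℝ) / 2) := by
          gcongr
      _ = ((L : ℝ) + 1) ^ Q := by
          rw [← Real.rpow_natCast, ← Real.rpow_natCast, ← Real.rpow_mul (by positivity)]
          congr 1
          push_cast
          ring
  have h5 : (2 * (r : ℝ) + 1) ^ d ≤ (r : ℝ) ^ (2 * (d : ℝ)) := by
    calc (2 * (r : ℝ) + 1) ^ d ≤ ((r : ℝ) ^ 2) ^ d := by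
          gcongr
          nlinarith
      _ = (r : ℝ) ^ (2 * (d : ℝ)) := by
          rw [← pow_mul, ← Real.rpow_natCast]
          push_cast
          rfl
  have h6 : 1 / ((L : ℝ) + 1) ^ Q ≤ (r : ℝ) ^ (-((Q : ℝ) / 2)) := by
    rw [Real.rpow_neg hr0.le, one_div]
    apply inv_anti₀ (Real.rpow_pos_of_pos hr0 _) h4
  calc (2 * (r : ℝ) + 1) ^ d * (1 / ((L : ℝ) + 1) ^ Q)
      ≤ (r : ℝ) ^ (2 * (d : ℝ)) * (r : ℝ) ^ (-((Q : ℝ) / 2)) := by gcongr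
    _ = (r : ℝ) ^ (2 * (d : ℝ) + -((Q : ℝ) / 2)) := by rw [Real.rpow_add hr0]
    _ ≤ (r : ℝ) ^ (-q + -2) := by
        apply Real.rpow_le_rpow_of_exponent_le (by linarith)
        linarith
    _ = (r : ℝ) ^ (-q) * ((r : ℝ) ^ 2)⁻¹ := by
        rw [Real.rpow_add hr0, Real.rpow_neg hr0.le 2]
        norm_num
    _ ≤ R ^ (-q) * ((r : ℝ) ^ 2)⁻¹ := by
        gcongr ?_ * _
        apply Real.rpow_le_rpow_of_nonpos (by linarith) hr (by linarith)

lemma sum_bound {d Q : ℕ} {q R : ℝ} (hq0 : 0 ≤ q) (hQ : 2 * (2 * d + q + 2) ≤ Q) (hR : 4 ≤ R)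
    (Λ : Finset (Fin d → ℤ)) (x : Fin d → ℤ) (S : Finset Λ)
    (hS : ∀ y ∈ S, R ≤ (dist1 (y : Fin d → ℤ) x : ℝ)) :
    ∑ y ∈ S, 1 / ((((dist1 (y : Fin d → ℤ) x - 1) / 2 : ℕ) : ℝ) + 1) ^ Q ≤ R ^ (-q) := by
  classical
  let T : Finset ℕ := S.image (fun y : Λ => dist1 (y : Fin d → ℤ) x)
  have hT : ∀ r ∈ T, R ≤ (r : ℝ) := by
    intro r hr
    obtain ⟨y, hy, rfl⟩ := Finset.mem_image.1 hr
    exact hS y hy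
  have hR0 : 0 ≤ R ^ (-q) := Real.rpow_nonneg (by linarith) _
  rw [← Finset.sum_fiberwise_of_maps_to (t := T) (g := fun y : Λ => dist1 (y : Fin d → ℤ) x)
    (fun y hy => Finset.mem_image_of_mem _ hy)]
  have h1 : ∀ r ∈ T, ∑ y ∈ S.filter (fun y : Λ => dist1 (y : Fin d → ℤ) x = r),
      1 / ((((dist1 (y : Fin d → ℤ) x - 1) / 2 : ℕ) : ℝ) + 1) ^ Q
      ≤ R ^ (-q) * ((r : ℝ) ^ 2)⁻¹ := by
    intro r hr
    refine le_trans ?_ (term_le hq0 hQ hR (hT r hr))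
    have h2 : ∑ y ∈ S.filter (fun y : Λ => dist1 (y : Fin d → ℤ) x = r),
        1 / ((((dist1 (y : Fin d → ℤ) x - 1) / 2 : ℕ) : ℝ) + 1) ^ Q
        = ∑ y ∈ S.filter (fun y : Λ => dist1 (y : Fin d → ℤ) x = r), 1 / ((((r - 1) / 2 : ℕ) : ℝ) + 1) ^ Q := by
      apply Finset.sum_congr rfl
      intro y hy
      rw [(Finset.mem_filter.1 hy).2]
    rw [h2, Finset.sum_const, nsmul_eq_mul]
    apply mul_le_mul_of_nonneg_right _ (by positivity)
    have h3 : (S.filter (fun y : Λ => dist1 (y : Fin d → ℤ) x = r)).card ≤ (ball x r).card := by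
      apply Finset.card_le_card_of_injOn (fun z : Λ => (z : Fin d → ℤ))
      · intro z hz
        have hz' := (Finset.mem_filter.1 (Finset.mem_coe.1 hz)).2
        exact mem_ball.2 hz'.le
      · intro a _ b _ h
        exact Subtype.ext h
    exact_mod_cast h3.trans (card_ball x r)
  refine (Finset.sum_le_sum h1).trans ?_
  rw [← Finset.mul_sum]
  have h4 : ∑ r ∈ T, ((r : ℝ) ^ 2)⁻¹ ≤ 1 := by
    obtain ⟨n, hn⟩ : ∃ n, ∀ r ∈ T, r ≤ n := ⟨T.sup id, fun r hr => Finset.le_sup (f := id) hr⟩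
    calc ∑ r ∈ T, ((r : ℝ) ^ 2)⁻¹ ≤ ∑ r ∈ Finset.Ioc 1 (n + 1), ((r : ℝ) ^ 2)⁻¹ := by
          apply Finset.sum_le_sum_of_subset_of_nonneg
          · intro r hr
            have a1 : (4 : ℝ) ≤ r := hR.trans (hT r hr)
            have a2 : 4 ≤ r := by exact_mod_cast a1
            have := hn r hr
            rw [Finset.mem_Ioc]
            omega
          · intros
            positivity
      _ ≤ ((1 : ℕ) : ℝ)⁻¹ - ((n + 1 : ℕ) : ℝ)⁻¹ := sum_Ioc_inv_sq_le_sub (by norm_num) (by omega)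
      _ ≤ 1 := by
          have : (0 : ℝ) ≤ ((n + 1 : ℕ) : ℝ)⁻¹ := by positivity
          rw [Nat.cast_one, inv_one]
          linarith
  calc R ^ (-q) * ∑ r ∈ T, ((r : ℝ) ^ 2)⁻¹ ≤ R ^ (-q) * 1 := by gcongr
    _ = R ^ (-q) := mul_one _

lemma exists_scale {d : ℕ} (hd : 1 ≤ d) (L : ℕ) : ∃ n, L < (20000 * d) ^ (2 ^ (n + 1)) := by
  obtain ⟨t, ht⟩ : ∃ t, t = 20000 * d := ⟨_, rfl⟩
  rw [← ht]
  have ht2 : 2 ≤ t := by omega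
  refine ⟨L, ?_⟩
  calc L < 2 ^ L := Nat.lt_two_pow_self
    _ ≤ t ^ L := Nat.pow_le_pow_left ht2 L
    _ ≤ t ^ 2 ^ (L + 1) := Nat.pow_le_pow_right (by omega)
        ((Nat.le_succ L).trans (Nat.lt_two_pow_self).le)

lemma gamma_facts {d N : ℕ} (hd : 1 ≤ d) (hN : 2 ≤ N) {G A γ : ℝ} (hG : G = 19320 ^ d)
    (hA : A = 128 * d * N * G) (hγ : 0 < γ) (h : γ ≤ (1 / A) ^ 10) :
    γ ≤ 1 / 4 ∧ 2 * d * γ ≤ 1 ∧ 16 * d * N * γ ≤ γ ^ (3 / 4 : ℝ) ∧ 16 * d * N * γ ≤ 1 ∧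
      γ * G < 1 ∧ 2 * γ ^ 2 + 4 * (γ * G) < 1 / N ∧ γ ^ (1 / 10 : ℝ) ≤ 1 / 6 ^ d := by
  have hd1 : (1 : ℝ) ≤ d := by exact_mod_cast hd
  have hN2 : (2 : ℝ) ≤ N := by exact_mod_cast hN
  have hG1 : 1 ≤ G := by rw [hG]; exact one_le_pow₀ (by norm_num)
  have hG6 : 6 ^ d ≤ G := by rw [hG]; gcongr; norm_num
  have hdN : 2 ≤ (d : ℝ) * N := by nlinarith
  have hA128 : 256 * G ≤ A := by rw [hA]; nlinarith
  have hA0 : 0 < A := by linarith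
  have hiA : 0 < 1 / A := by positivity
  have hiA1 : 1 / A ≤ 1 := by rw [div_le_one hA0]; linarith
  have hγA : γ ≤ 1 / A := by
    refine h.trans ?_
    calc (1 / A) ^ 10 ≤ (1 / A) ^ 1 := pow_le_pow_of_le_one hiA.le hiA1 (by norm_num)
      _ = 1 / A := pow_one _
  have hγA' : γ * A ≤ 1 := by rwa [le_div_iff₀ hA0] at hγA
  have hγ1 : γ ≤ 1 := hγA.trans hiA1
  have h10 : γ ^ (1 / 10 : ℝ) ≤ 1 / A := by
    calc γ ^ (1 / 10 : ℝ) ≤ ((1 / A) ^ 10) ^ (1 / 10 : ℝ) := by gcongr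
      _ = 1 / A := by
          rw [← Real.rpow_natCast, ← Real.rpow_mul hiA.le]
          norm_num
  have hkey : 128 * (γ * G * (d * N)) ≤ 1 := by
    have : γ * A = 128 * (γ * G * (d * N)) := by rw [hA]; ring
    linarith
  have hγG : 0 < γ * G := by positivity
  have hγG1 : γ ≤ γ * G := by nlinarith
  have hγGd : γ * G * d ≤ γ * G * (d * N) := by
    apply mul_le_mul_of_nonneg_left _ hγG.le
    nlinarith
  have hγGN : γ * G * N ≤ γ * G * (d * N) := by
    apply mul_le_mul_of_nonneg_left _ hγG.le
    nlinarith
  have hγG2 : γ * G ≤ γ * G * N := by nlinarith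
  have hγd : γ * d ≤ γ * G * d := by gcongr
  have hγdN : γ * (d * N) ≤ γ * G * (d * N) := by gcongr
  refine ⟨by linarith, by linarith, ?_, by linarith, by linarith, ?_, ?_⟩
  · have e : γ = γ ^ (1 / 4 : ℝ) * γ ^ (3 / 4 : ℝ) := by
      rw [← Real.rpow_add hγ]; norm_num
    have h34 : 0 < γ ^ (3 / 4 : ℝ) := Real.rpow_pos_of_pos hγ _
    have h14 : γ ^ (1 / 4 : ℝ) ≤ γ ^ (1 / 10 : ℝ) :=
      Real.rpow_le_rpow_of_exponent_ge hγ hγ1 (by norm_num)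
    have h5 : 16 * (d * N) * γ ^ (1 / 4 : ℝ) ≤ 1 := by
      calc 16 * (d * N) * γ ^ (1 / 4 : ℝ) ≤ 16 * (d * N) * (1 / A) := by
            gcongr
            exact h14.trans h10
        _ ≤ 1 := by
            rw [mul_one_div, div_le_one hA0, hA]
            have : (d * N : ℝ) ≤ d * N * G := by nlinarith
            linarith
    calc 16 * d * N * γ = (16 * (d * N) * γ ^ (1 / 4 : ℝ)) * γ ^ (3 / 4 : ℝ) := by
          rw [mul_assoc _ (γ ^ (1 / 4 : ℝ)), ← e]; ring
      _ ≤ 1 * γ ^ (3 / 4 : ℝ) := by gcongr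
      _ = _ := one_mul _
  · rw [lt_div_iff₀ (by linarith)]
    have h6 : γ ^ 2 ≤ γ * G := by nlinarith
    have h7 : (2 * γ ^ 2 + 4 * (γ * G)) * N ≤ (6 * (γ * G)) * N := by
      gcongr
      linarith
    linarith
  · refine h10.trans ?_
    apply one_div_le_one_div_of_le (by positivity)
    linarith

lemma one_lt_A {d N : ℕ} (hd : 1 ≤ d) (hN2' : 2 ≤ N) {G A : ℝ} (hG : G = 19320 ^ d)
    (hA : A = 128 * d * N * G) : 1 < A := by
  have hd1 : (1 : ℝ) ≤ d := by exact_mod_cast hd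
  have hN2r : (2 : ℝ) ≤ N := by exact_mod_cast hN2'
  have hG1 : 1 ≤ G := by rw [hG]; exact one_le_pow₀ (by norm_num)
  have hdN : 2 ≤ (d : ℝ) * N := by nlinarith
  rw [hA]
  nlinarith

end AL

/-- **Theorem 1.2, part 2** (probabilistic exponential localization).
For any `x ∈ Λ` and `R ≥ 4`, the probability that for some orthonormal eigenbasis
`(φ_β)` of `H` and some `y` with `|y-x| ≥ R` one has
`∑_β |φ_β(x)φ_β(y)| γ^{-|x-y|/5} > 1` is at most `R^{-(p/2-4d-1)}`. -/
theorem eigenfunction_correlator_probabilistic :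
    ∀ d : ℕ, 1 ≤ d →
    ∃ p₀ : ℝ, ∀ p : ℝ, p₀ ≤ p →
    ∃ N₀ : ℕ, ∀ N : ℕ, N₀ ≤ N →
    ∃ γ₀ : ℝ, 0 < γ₀ ∧ γ₀ < 1 ∧
    ∀ γ : ℝ, 0 < γ → γ ≤ γ₀ →
    ∀ Λ : Finset (Fin d → ℤ), IsRect Λ →
    ∀ x : ↥Λ, ∀ R : ℝ, 4 ≤ R →
    prob (fun ω : ↥Λ → Fin N =>
        ∃ φ : ↥Λ → ↥Λ → ℝ,
          (∀ β β', ∑ z, φ β z * φ β' z = if β = β' then 1 else 0) ∧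
          (∀ β, ∃ μ : ℝ, (hamOn d γ (potential N Λ ω) Λ).mulVec (φ β) = μ • φ β) ∧
          ∃ y : ↥Λ, R ≤ ((dist1 (y : Fin d → ℤ) (x : Fin d → ℤ) : ℕ) : ℝ) ∧
            1 < (∑ β, |φ β x * φ β y|) *
                  γ ^ (-(((dist1 (x : Fin d → ℤ) (y : Fin d → ℤ) : ℕ) : ℝ)) / 5))
      ≤ R ^ (-(p/2 - 4*d - 1)) := by
  intro d hd
  refine ⟨8 * d + 2, fun p hp => ?_⟩
  obtain ⟨Q, hQ1, hQ2⟩ : ∃ Q : ℕ, 18 * d + 2 ≤ Q ∧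
      2 * (2 * d + (p / 2 - 4 * d - 1) + 2) ≤ (Q : ℝ) := by
    refine ⟨18 * d + 2 + ⌈2 * (2 * d + (p / 2 - 4 * d - 1) + 2)⌉₊, by omega, ?_⟩
    have := Nat.le_ceil (2 * (2 * d + (p / 2 - 4 * d - 1) + 2))
    push_cast
    have h0 : (0 : ℝ) ≤ d := by positivity
    linarith
  refine ⟨AL.Nbig d Q + AL.Nbase d Q + 2, fun N hN => ?_⟩
  have hNN1 : AL.Nbig d Q ≤ N := by omega
  have hNN2 : AL.Nbase d Q ≤ N := by omega
  have hN2' : 2 ≤ N := by omega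
  obtain ⟨G, hG⟩ : ∃ G : ℝ, G = 19320 ^ d := ⟨_, rfl⟩
  obtain ⟨A, hA⟩ : ∃ A : ℝ, A = 128 * d * N * G := ⟨_, rfl⟩
  have hA1 : 1 < A := AL.one_lt_A hd hN2' hG hA
  refine ⟨(1 / A) ^ 10, by positivity, ?_, ?_⟩
  · apply pow_lt_one₀ (by positivity) _ (by norm_num)
    rw [div_lt_one (by linarith)]
    exact hA1
  intro γ hγ hγ0 Λ hΛ x R hR
  obtain ⟨g1, g2, g3, g4, g5, g6, g7⟩ := AL.gamma_facts hd hN2' hG hA hγ hγ0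
  rw [hG] at g5 g6
  classical
  let S : Finset Λ := Finset.univ.filter
    (fun y : Λ => R ≤ ((dist1 (y : Fin d → ℤ) (x : Fin d → ℤ) : ℕ) : ℝ))
  refine le_trans ?_ (AL.sum_bound (Q := Q) (by linarith : (0 : ℝ) ≤ p / 2 - 4 * d - 1) hQ2 hR Λ x S
    (fun y hy => (Finset.mem_filter.1 hy).2))
  refine le_trans (AL.prob_mono ?_) (AL.prob_exists_le S
    (fun (y : Λ) (ω : Λ → Fin N) => AL.PairBad γ (potential N Λ ω) (1 / 2) Λ
      ((dist1 (y : Fin d → ℤ) (x : Fin d → ℤ) - 1) / 2) x y) _ ?_)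
  · rintro ω ⟨φ, ho, he, y, hy, hbig⟩
    refine ⟨y, by simp [S, hy], ?_⟩
    by_contra hc
    refine absurd (AL.corr_bound hd hγ (by linarith) g7 x y (r := dist1 (x : Fin d → ℤ) y) ?_ hc
      φ ho he) (not_le.2 hbig)
    rw [dist1_comm (x : Fin d → ℤ)]
    omega
  · intro y hy
    have hyR := (Finset.mem_filter.1 hy).2
    have h4 : 4 ≤ dist1 (y : Fin d → ℤ) (x : Fin d → ℤ) := by exact_mod_cast hR.trans hyR
    obtain ⟨n, hn⟩ := AL.exists_scale hd ((dist1 (y : Fin d → ℤ) (x : Fin d → ℤ) - 1) / 2)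
    refine le_trans (AL.prob_mono (fun ω hω => AL.PairBad.mono hγ (by linarith) ?_ hω))
      (AL.claim hN2' hd hQ1 hNN1 hNN2 hγ g1 g2 g3 g4 g5 g6 Λ n _ hn Λ hΛ (Finset.Subset.refl _)
        x x.2 y y.2 ?_)
    · unfold AL.mm
      have : (0 : ℝ) < (1 / 2) ^ n := by positivity
      linarith
    · rw [dist1_comm (x : Fin d → ℤ)]
      omega
end
end

section
/- There exists γ₀ ∈ (0,1), depending only on the dimension d ≥ 1, such that the following holds for all γ ∈ (0, γ₀]. Let Λ ⊂ ℤ^d be a finite rectangle, v : Λ → [0,1], and let H be the associated Hamiltonian. Let L ≥ 1 and let B ⊆ B̄ ⊆ Λ be nonempty sets such that diam(B) ≤ L, every point of B̄ is within ℓ¹ distance 2.05·L of B, and there is a coordinate direction i and a boundary face of Λ in direction i (the set of points of Λ whose i-th coordinate is extremal) containing no point of B̄. Let λ ∈ [0, 1 + 4dγ] and let ψ : Λ → ℝ vanish outside B̄ and satisfy (Hψ)(x) = λ ψ(x) for every x ∈ B̄ (i.e., ψ restricted to B̄ is an eigenvector of H_{B̄} with eigenvalue λ). If Σ_{x ∈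 B} ψ(x)² ≥ 1, then there exists y ∈ Λ ∖ B̄ with ℓ¹ distance 1 from B̄ such that the influence ℐ_ψ(y) = | Σ_{x ∈ B̄, |x−y|=1} ψ(x) | satisfies ℐ_ψ(y) ≥ γ^{3.1·L}. -/
noncomputable section

open scoped BigOperators

lemma natAbs_le_dist1 {d : ℕ} (x y : Fin d → ℤ) (i : Fin d) :
    (x i - y i).natAbs ≤ dist1 x y :=
  Finset.single_le_sum (f := fun i => (x i - y i).natAbs) (fun _ _ => Nat.zero_le _)
    (Finset.mem_univ i)

lemma dist1_triangle {d : ℕ} (x y z : Fin d → ℤ) : dist1 x z ≤ dist1 x y + dist1 y z := by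
  unfold dist1
  rw [← Finset.sum_add_distrib]
  exact Finset.sum_le_sum fun i _ => by omega

/-- Neighbours of a site. -/
def nbr1 {d : ℕ} (y : Fin d → ℤ) : Finset (Fin d → ℤ) :=
  (Finset.Icc (y - 1) (y + 1)).filter fun x => dist1 x y = 1

lemma mem_nbr1 {d : ℕ} (x y : Fin d → ℤ) : x ∈ nbr1 y ↔ dist1 x y = 1 := by
  unfold nbr1
  rw [Finset.mem_filter, and_iff_right_iff_imp]
  intro h
  rw [Finset.mem_Icc]
  constructor <;> intro i <;> have := natAbs_le_dist1 x y i <;> simp <;> omega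

lemma card_nbr1 {d : ℕ} (y : Fin d → ℤ) : (nbr1 y).card ≤ 3 ^ d := by
  unfold nbr1
  refine (Finset.card_filter_le _ _).trans ?_
  rw [Pi.card_Icc]
  have : ∀ i, (Finset.Icc ((y - 1) i) ((y + 1) i)).card = 3 := by
    intro i
    simp [Int.card_Icc]
    omega
  rw [Finset.prod_congr rfl fun i _ => this i]
  simp

lemma dist1_single {d : ℕ} (x : Fin d → ℤ) (i : Fin d) (σ : ℤ) (hσ : σ = 1 ∨ σ = -1) :
    dist1 x (x + Pi.single i σ) = 1 := by
  unfold dist1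
  rw [Finset.sum_eq_single i]
  · rcases hσ with rfl | rfl <;> simp
  · intro j _ hj
    simp [hj]
  · simp

/-- If `x` is at graph distance one from `y = x' + σ e_i` and `x ≠ x'`, then the height of `x` is
larger than that of `x'`. -/
lemma height_nbr {d : ℕ} (x w : Fin d → ℤ) (i : Fin d) (σ : ℤ) (hσ : σ = 1 ∨ σ = -1)
    (h : dist1 w (x + Pi.single i σ) = 1) (hne : w ≠ x) : σ * x i + 1 ≤ σ * w i := by
  by_contra hlt
  apply hne
  have h1 := natAbs_le_dist1 w (x + Pi.single i σ) i
  rw [h] at h1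
  simp at h1
  have hi : w i = x i := by rcases hσ with rfl | rfl <;> omega
  funext j
  by_cases hj : j = i
  · rw [hj, hi]
  · have h2 : ∑ k ∈ ({i, j} : Finset (Fin d)), (w k - (x + Pi.single i σ : Fin d → ℤ) k).natAbs ≤ 1 := by
      rw [← h]
      exact Finset.sum_le_sum_of_subset (Finset.subset_univ _)
    rw [Finset.sum_pair (Ne.symm hj)] at h2
    simp [hj] at h2
    rcases hσ with rfl | rfl <;> omega

lemma core_step {d : ℕ} (φ : (Fin d → ℤ) → ℝ) (Bbar : Finset (Fin d → ℤ))
    (h0 : ∀ x, x ∉ Bbar → φ x = 0) (ε T : ℝ) (hε : 0 ≤ ε) (hT : 0 ≤ T) (i : Fin d) (σ : ℤ)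
    (hσ : σ = 1 ∨ σ = -1)
    (hS : ∀ x ∈ Bbar, |∑ w ∈ nbr1 (x + Pi.single i σ), φ w|
      ≤ ε + T * |φ (x + Pi.single i σ)|) (k : ℤ) (t : ℝ) (ht : 0 ≤ t)
    (hk : ∀ x, k ≤ σ * x i → |φ x| ≤ t) :
    ∀ x, k - 1 ≤ σ * x i → |φ x| ≤ ε + (T + 3 ^ d) * t := by
  intro x hx
  by_cases hxB : x ∈ Bbar
  · set y := x + Pi.single i σ with hy
    have hmem : x ∈ nbr1 y := by rw [mem_nbr1]; exact dist1_single x i σ hσ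
    have hsum := Finset.add_sum_erase (nbr1 y) φ hmem
    have hyh : k ≤ σ * y i := by
      rw [hy]; simp only [Pi.add_apply, Pi.single_eq_same]
      rcases hσ with rfl | rfl <;> omega
    have h1 : |∑ w ∈ (nbr1 y).erase x, φ w| ≤ 3 ^ d * t := by
      refine (Finset.abs_sum_le_sum_abs _ _).trans ?_
      have : ∑ w ∈ (nbr1 y).erase x, |φ w| ≤ ((nbr1 y).erase x).card • t := by
        apply Finset.sum_le_card_nsmul
        intro w hw
        rw [Finset.mem_erase, mem_nbr1] at hw
        apply hk
        have := height_nbr x w i σ hσ hw.2 hw.1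
        omega
      refine this.trans ?_
      rw [nsmul_eq_mul]
      apply mul_le_mul_of_nonneg_right _ ht
      have h3 : ((nbr1 y).erase x).card ≤ 3 ^ d :=
        (Finset.card_le_card (Finset.erase_subset _ _)).trans (card_nbr1 y)
      exact_mod_cast h3
    have h2 := hS x hxB
    have h3 : T * |φ y| ≤ T * t := mul_le_mul_of_nonneg_left (hk y hyh) hT
    have h4 : φ x = ∑ w ∈ nbr1 y, φ w - ∑ w ∈ (nbr1 y).erase x, φ w := by linarith
    rw [h4]
    refine (abs_sub _ _).trans ?_
    linarith
  · rw [h0 x hxB, abs_zero]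
    positivity

lemma core_bound {d : ℕ} (φ : (Fin d → ℤ) → ℝ) (Bbar : Finset (Fin d → ℤ))
    (h0 : ∀ x, x ∉ Bbar → φ x = 0) (ε T : ℝ) (hε : 0 ≤ ε) (hT : 0 ≤ T) (i : Fin d) (σ : ℤ)
    (hσ : σ = 1 ∨ σ = -1)
    (hS : ∀ x ∈ Bbar, |∑ w ∈ nbr1 (x + Pi.single i σ), φ w|
      ≤ ε + T * |φ (x + Pi.single i σ)|) (K : ℤ)
    (hK : ∀ x ∈ Bbar, σ * x i ≤ K) (n : ℕ) :
    ∀ x, K - n ≤ σ * x i → |φ x| ≤ ε * (T + 3 ^ d + 1) ^ n := by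
  have hR : (1:ℝ) ≤ T + 3 ^ d + 1 := by
    have : (0:ℝ) ≤ 3 ^ d := by positivity
    linarith
  induction n with
  | zero =>
    intro x hx
    have := core_step φ Bbar h0 ε T hε hT i σ hσ hS (K + 1) 0 le_rfl (by
      intro w hw
      rw [h0 w, abs_zero]
      intro hwB
      have := hK w hwB
      omega) x (by push_cast at hx; omega)
    simpa using this
  | succ n ih =>
    intro x hx
    have h1 := core_step φ Bbar h0 ε T hε hT i σ hσ hS (K - n) (ε * (T + 3 ^ d + 1) ^ n)
      (by positivity) ih x (by push_cast at hx; omega)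
    refine h1.trans ?_
    have h2 : (1:ℝ) ≤ (T + 3 ^ d + 1) ^ n := one_le_pow₀ hR
    have h3 : ε ≤ ε * (T + 3 ^ d + 1) ^ n := le_mul_of_one_le_right hε h2
    rw [pow_succ]
    nlinarith

lemma card_B {d : ℕ} (B : Finset (Fin d → ℤ)) (L : ℝ) (hL : 1 ≤ L) (hne : B.Nonempty)
    (h : ∀ x ∈ B, ∀ y ∈ B, ((dist1 x y : ℕ) : ℝ) ≤ L) :
    (B.card : ℝ) ≤ ((3:ℝ) ^ d) ^ L := by
  obtain ⟨z, hz⟩ := hne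
  set n := ⌊L⌋₊
  have hsub : B ⊆ Finset.Icc (z - fun _ => (n:ℤ)) (z + fun _ => (n:ℤ)) := by
    intro x hx
    have h1 : dist1 x z ≤ n := Nat.le_floor (h x hx z hz)
    rw [Finset.mem_Icc]
    constructor <;> intro i <;> have := natAbs_le_dist1 x z i <;> simp <;> omega
  have hc := Finset.card_le_card hsub
  rw [Pi.card_Icc] at hc
  have : ∀ i, (Finset.Icc ((z - fun _ => (n:ℤ) : Fin d → ℤ) i)
      ((z + fun _ => (n:ℤ) : Fin d → ℤ) i)).card = 2 * n + 1 := by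
    intro i
    simp [Int.card_Icc]
    omega
  rw [Finset.prod_congr rfl fun i _ => this i] at hc
  simp only [Finset.prod_const, Finset.card_univ, Fintype.card_fin] at hc
  have hn : (n:ℝ) ≤ L := Nat.floor_le (by linarith)
  have h3 : 1 + L * 2 ≤ (1 + 2 : ℝ) ^ L := one_add_mul_self_le_rpow_one_add (by norm_num) hL
  norm_num at h3
  calc (B.card : ℝ) ≤ (2 * n + 1) ^ d := by exact_mod_cast hc
    _ ≤ ((3:ℝ) ^ L) ^ d := by
        apply pow_le_pow_left₀ (by positivity)
        linarith
    _ = ((3:ℝ) ^ d) ^ L := by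
        rw [← Real.rpow_natCast, ← Real.rpow_natCast, ← Real.rpow_mul (by norm_num),
          ← Real.rpow_mul (by norm_num), mul_comm]

lemma final_num (d : ℕ) (γ c L : ℝ) (hc : 1 ≤ c) (hL : 1 ≤ L) (hγ : 0 < γ)
    (hγ0 : γ ≤ (1 / (2 * c ^ 7 * 3 ^ d)) ^ 10) (R : ℝ) (hR : 1 ≤ R) (hRc : R ≤ c / γ) (N : ℕ)
    (hN : (N:ℝ) ≤ 3.05 * L) :
    ((3:ℝ) ^ d) ^ L * (γ ^ (3.1 * L) * R ^ N) ^ 2 < 1 := by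
  have hc0 : 0 < c := by linarith
  have hL0 : 0 < L := by linarith
  have h1 : R ^ N ≤ (c / γ) ^ (3.05 * L) := by
    rw [← Real.rpow_natCast]
    exact (Real.rpow_le_rpow_of_exponent_le hR hN).trans
      (Real.rpow_le_rpow (by linarith) hRc (by positivity))
  have h2 : γ ^ (3.1 * L) * (c / γ) ^ (3.05 * L) = (γ ^ (0.05:ℝ) * c ^ (3.05:ℝ)) ^ L := by
    rw [Real.div_rpow hc0.le hγ.le, Real.mul_rpow (by positivity) (by positivity),
      ← Real.rpow_mul hγ.le, ← Real.rpow_mul hc0.le, mul_div_assoc', mul_div_right_comm,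
      ← Real.rpow_sub hγ]
    congr 2
    ring
  have h3 : γ ^ (3.1 * L) * R ^ N ≤ (γ ^ (0.05:ℝ) * c ^ (3.05:ℝ)) ^ L := by
    rw [← h2]; gcongr
  have h4 : ((γ ^ (0.05:ℝ) * c ^ (3.05:ℝ)) ^ L) ^ 2 = (γ ^ (0.1:ℝ) * c ^ (6.1:ℝ)) ^ L := by
    rw [← Real.rpow_natCast, ← Real.rpow_mul (by positivity), mul_comm L, Real.rpow_mul (by positivity)]
    congr 1
    rw [Real.mul_rpow (by positivity) (by positivity), ← Real.rpow_mul hγ.le,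
      ← Real.rpow_mul hc0.le]
    norm_num
  have h5 : γ ^ (0.1:ℝ) ≤ 1 / (2 * c ^ 7 * 3 ^ d) := by
    refine (Real.rpow_le_rpow hγ.le hγ0 (by norm_num)).trans (le_of_eq ?_)
    rw [← Real.rpow_natCast, ← Real.rpow_mul (by positivity)]
    norm_num
  have h6 : c ^ (6.1:ℝ) ≤ c ^ 7 := by
    rw [← Real.rpow_natCast]
    exact Real.rpow_le_rpow_of_exponent_le hc (by norm_num)
  have h7 : (3:ℝ) ^ d * (γ ^ (0.1:ℝ) * c ^ (6.1:ℝ)) ≤ 1 / 2 := by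
    calc (3:ℝ) ^ d * (γ ^ (0.1:ℝ) * c ^ (6.1:ℝ))
        ≤ 3 ^ d * (1 / (2 * c ^ 7 * 3 ^ d) * c ^ 7) := by gcongr
      _ = 1 / 2 := by field_simp
  calc ((3:ℝ) ^ d) ^ L * (γ ^ (3.1 * L) * R ^ N) ^ 2
      ≤ ((3:ℝ) ^ d) ^ L * ((γ ^ (0.05:ℝ) * c ^ (3.05:ℝ)) ^ L) ^ 2 := by
        have : 0 ≤ γ ^ (3.1 * L) * R ^ N := by positivity
        gcongr
    _ = ((3:ℝ) ^ d * (γ ^ (0.1:ℝ) * c ^ (6.1:ℝ))) ^ L := by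
        rw [h4, ← Real.mul_rpow (by positivity) (by positivity)]
    _ < 1 := Real.rpow_lt_one (by positivity) (by linarith) hL0

/-- **Lemma 3.1** (existence of an influential boundary site).
Let `Λ = Icc a b` be a finite rectangle, `v : Λ → [0,1]`, `γ` small (depending only on
`d`), `L ≥ 1`, and let `B ⊆ B̄ ⊆ Λ` with `diam B ≤ L`, `B̄` within ℓ¹ distance `2.05 L`
of `B`, and some boundary face of `Λ` disjoint from `B̄`.  If `ψ` vanishes outside `B̄`,
satisfies `(Hψ)(x) = λ ψ(x)` on `B̄` for some `λ ∈ [0, 1+4dγ]`, and `∑_{x∈B} ψ(x)² ≥ 1`,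
then some site `y ∈ Λ ∖ B̄` adjacent to `B̄` has influence
`ℐ_ψ(y) = |∑_{x ∈ B̄, |x-y|=1} ψ(x)| ≥ γ^{3.1 L}`. -/
theorem influential_site_exists (d : ℕ) (hd : 1 ≤ d) :
    ∃ γ₀ : ℝ, 0 < γ₀ ∧ γ₀ < 1 ∧
    ∀ γ : ℝ, 0 < γ → γ ≤ γ₀ →
    ∀ a b : Fin d → ℤ,
    ∀ v : (Fin d → ℤ) → ℝ, (∀ x ∈ Finset.Icc a b, v x ∈ Set.Icc (0:ℝ) 1) →
    ∀ L : ℝ, 1 ≤ L →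
    ∀ B Bbar : Finset (Fin d → ℤ),
      B.Nonempty → B ⊆ Bbar → Bbar ⊆ Finset.Icc a b →
      (∀ x ∈ B, ∀ y ∈ B, ((dist1 x y : ℕ) : ℝ) ≤ L) →
      (∀ x ∈ Bbar, ∃ z ∈ B, ((dist1 x z : ℕ) : ℝ) ≤ 2.05 * L) →
      (∃ i : Fin d, (∀ x ∈ Bbar, x i ≠ a i) ∨ (∀ x ∈ Bbar, x i ≠ b i)) →
    ∀ lam : ℝ, lam ∈ Set.Icc (0:ℝ) (1 + 4*d*γ) →
    ∀ ψ : ↥(Finset.Icc a b) → ℝ,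
      (∀ x : ↥(Finset.Icc a b), (x : Fin d → ℤ) ∉ Bbar → ψ x = 0) →
      (∀ x : ↥(Finset.Icc a b), (x : Fin d → ℤ) ∈ Bbar →
        (hamOn d γ v (Finset.Icc a b)).mulVec ψ x = lam * ψ x) →
      1 ≤ ∑ x ∈ Finset.univ.filter (fun x : ↥(Finset.Icc a b) => (x : Fin d → ℤ) ∈ B),
            (ψ x)^2 →
    ∃ y ∈ Finset.Icc a b, y ∉ Bbar ∧ (∃ x ∈ Bbar, dist1 x y = 1) ∧
      γ ^ (3.1 * L)
        ≤ |∑ x ∈ Finset.univ.filter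
              (fun x : ↥(Finset.Icc a b) =>
                (x : Fin d → ℤ) ∈ Bbar ∧ dist1 (x : Fin d → ℤ) y = 1), ψ x| := by
  
  set c : ℝ := 2 * d + 3 ^ d + 2 with hc
  have hc1 : 1 ≤ c := by
    have : (0:ℝ) ≤ 2 * d + 3 ^ d := by positivity
    linarith
  have hq : 1 / (2 * c ^ 7 * 3 ^ d) < 1 := by
    rw [div_lt_one (by positivity)]
    have h1 : 1 ≤ c ^ 7 := one_le_pow₀ hc1
    have h2 : (1:ℝ) ≤ 3 ^ d := one_le_pow₀ (by norm_num)
    nlinarith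
  have hγlt : (1 / (2 * c ^ 7 * 3 ^ d)) ^ 10 < 1 :=
    pow_lt_one₀ (by positivity) hq (by norm_num)
  refine ⟨(1 / (2 * c ^ 7 * 3 ^ d)) ^ 10, by positivity, hγlt, ?_⟩
  intro γ hγ hγ0 a b v hv L hL B Bbar hBne hBB hBΛ hdiam hdist hface lam hlam ψ hψ0 hψ hnorm
  by_contra hcon
  push Not at hcon
  set φ : (Fin d → ℤ) → ℝ := fun x => if h : x ∈ Finset.Icc a b then ψ ⟨x, h⟩ else 0 with hφ
  have hφψ : ∀ x : ↥(Finset.Icc a b), φ x = ψ x := by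
    intro x
    simp only [hφ]
    rw [dif_pos x.2]
  have h0 : ∀ x, x ∉ Bbar → φ x = 0 := by
    intro x hx
    simp only [hφ]
    split_ifs with h
    · exact hψ0 ⟨x, h⟩ hx
    · rfl
  have hnb : ∀ y, ∑ w ∈ nbr1 y, φ w
      = ∑ x : ↥(Finset.Icc a b), if dist1 (x : Fin d → ℤ) y = 1 then ψ x else 0 := by
    intro y
    have e1 : ∑ x : ↥(Finset.Icc a b), (if dist1 (x : Fin d → ℤ) y = 1 then ψ x else 0)
        = ∑ x ∈ Finset.Icc a b, if dist1 x y = 1 then φ x else 0 := by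
      rw [← Finset.sum_coe_sort (Finset.Icc a b)]
      refine Finset.sum_congr rfl fun x _ => ?_
      rw [hφψ]
    rw [e1, ← Finset.sum_filter]
    symm
    apply Finset.sum_subset
    · intro x hx
      rw [mem_nbr1]
      exact (Finset.mem_filter.mp hx).2
    · intro x hx hx2
      apply h0
      intro hxB
      exact hx2 (Finset.mem_filter.mpr ⟨hBΛ hxB, (mem_nbr1 _ _).mp hx⟩)
  set ε : ℝ := γ ^ (3.1 * L) with hε
  have hε0 : 0 ≤ ε := by positivity
  set T : ℝ := 1 / γ + 2 * d with hT
  have hT0 : 0 ≤ T := by positivity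
  have hin : ∀ y ∈ Bbar, |∑ w ∈ nbr1 y, φ w| ≤ T * |φ y| := by
    intro y hy
    have hyΛ := hBΛ hy
    have h1 := hψ ⟨y, hyΛ⟩ hy
    have h2 : (hamOn d γ v (Finset.Icc a b)).mulVec ψ ⟨y, hyΛ⟩
        = (2 * d * γ + v y) * φ y - γ * ∑ w ∈ nbr1 y, φ w := by
      rw [hnb]
      simp only [Matrix.mulVec, dotProduct, hamOn, Matrix.of_apply, hamEntry, sub_mul,
        Finset.sum_sub_distrib]
      congr 1
      · rw [Finset.sum_eq_single ⟨y, hyΛ⟩]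
        · rw [if_pos rfl, ← hφψ]
        · intro w _ hw
          rw [if_neg, zero_mul]
          intro h
          exact hw (Subtype.ext h.symm)
        · simp
      · rw [Finset.mul_sum]
        refine Finset.sum_congr rfl fun w _ => ?_
        rw [dist1_comm]
        split_ifs <;> ring
    rw [h2, ← hφψ] at h1
    have h3 : ∑ w ∈ nbr1 y, φ w = ((2 * d * γ + v y - lam) / γ) * φ y := by
      field_simp
      linarith
    rw [h3, abs_mul]
    apply mul_le_mul_of_nonneg_right _ (abs_nonneg _)
    rw [abs_div, abs_of_pos hγ, hT, div_le_iff₀ hγ]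
    have h4 : (1 / γ + 2 * d) * γ = 1 + 2 * d * γ := by field_simp
    rw [h4, abs_le]
    obtain ⟨hv0, hv1⟩ := hv y hyΛ
    obtain ⟨hl0, hl1⟩ := hlam
    constructor <;> linarith
  have hout : ∀ y ∈ Finset.Icc a b, y ∉ Bbar → (∃ x ∈ Bbar, dist1 x y = 1) →
      |∑ w ∈ nbr1 y, φ w| ≤ ε := by
    intro y hy hyB hex
    obtain ⟨x, hx, hxy⟩ := hex
    have h1 := hcon y hy hyB ⟨x, hx, hxy⟩
    rw [hnb]
    rw [Finset.sum_filter] at h1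
    refine le_of_eq_of_le (congrArg _ (Finset.sum_congr rfl fun w _ => ?_)) h1.le
    by_cases hw : (w : Fin d → ℤ) ∈ Bbar
    · simp [hw]
    · simp [hw, hψ0 w hw]
  obtain ⟨i, σ, hσ, hmv⟩ : ∃ i : Fin d, ∃ σ : ℤ, (σ = 1 ∨ σ = -1) ∧
      ∀ x ∈ Bbar, x + Pi.single i σ ∈ Finset.Icc a b := by
    obtain ⟨i, hi | hi⟩ := hface
    · refine ⟨i, -1, Or.inr rfl, fun x hx => ?_⟩
      have h1 := Finset.mem_Icc.mp (hBΛ hx)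
      have h2 := hi x hx
      rw [Finset.mem_Icc]
      constructor <;> intro j <;> have h3 : a j ≤ x j := h1.1 j <;> have h4 : x j ≤ b j := h1.2 j <;>
        by_cases hj : j = i
      · subst hj; simp; omega
      · simpa [hj] using h3
      · subst hj; simp; omega
      · simpa [hj] using h4
    · refine ⟨i, 1, Or.inl rfl, fun x hx => ?_⟩
      have h1 := Finset.mem_Icc.mp (hBΛ hx)
      have h2 := hi x hx
      rw [Finset.mem_Icc]
      constructor <;> intro j <;> have h3 : a j ≤ x j := h1.1 j <;> have h4 : x j ≤ b j := h1.2 j <;>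
        by_cases hj : j = i
      · subst hj; simp; omega
      · simpa [hj] using h3
      · subst hj; simp; omega
      · simpa [hj] using h4
  have hS : ∀ x ∈ Bbar, |∑ w ∈ nbr1 (x + Pi.single i σ), φ w|
      ≤ ε + T * |φ (x + Pi.single i σ)| := by
    intro x hx
    by_cases hy : x + Pi.single i σ ∈ Bbar
    · have := hin _ hy
      linarith
    · have h1 := hout _ (hmv x hx) hy ⟨x, hx, dist1_single x i σ hσ⟩
      have : 0 ≤ T * |φ (x + Pi.single i σ)| := by positivity
      linarith
  set N := ⌊3.05 * L⌋₊ with hN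
  have hNL : (N:ℝ) ≤ 3.05 * L := Nat.floor_le (by positivity)
  have hbd : ∀ x ∈ B, |φ x| ≤ ε * (T + 3 ^ d + 1) ^ N := by
    intro x hx
    refine core_bound φ Bbar h0 ε T hε0 hT0 i σ hσ hS (σ * x i + N) ?_ N x (by omega)
    intro w hw
    obtain ⟨z, hz, hwz⟩ := hdist w hw
    have h1 := hdiam z hz x hx
    have h2 : dist1 w x ≤ N := by
      apply Nat.le_floor
      have h3 : ((dist1 w x : ℕ) : ℝ) ≤ dist1 w z + dist1 z x := by
        exact_mod_cast dist1_triangle w z x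
      linarith
    have h3 := natAbs_le_dist1 w x i
    rcases hσ with rfl | rfl <;> omega
  have hγ1 : γ ≤ 1 := by linarith
  have hR1 : 1 ≤ T + 3 ^ d + 1 := by
    have : 0 ≤ T + 3 ^ d := by positivity
    linarith
  have hRc : T + 3 ^ d + 1 ≤ c / γ := by
    rw [le_div_iff₀ hγ]
    have h4 : (T + 3 ^ d + 1) * γ = 1 + (2 * d + 3 ^ d + 1) * γ := by
      rw [hT]; field_simp; ring
    have h5 : (2 * d + 3 ^ d + 1) * γ ≤ 2 * d + 3 ^ d + 1 :=
      mul_le_of_le_one_right (by positivity) hγ1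
    rw [h4, hc]
    linarith
  have hfin := final_num d γ c L hc1 hL hγ hγ0 _ hR1 hRc N hNL
  have hcard := card_B B L hL hBne hdiam
  have hsum : ∑ x ∈ Finset.univ.filter (fun x : ↥(Finset.Icc a b) => (x : Fin d → ℤ) ∈ B),
      (ψ x)^2 = ∑ x ∈ B, (φ x)^2 := by
    rw [Finset.sum_filter]
    have e1 : ∑ x : ↥(Finset.Icc a b), (if (x : Fin d → ℤ) ∈ B then (ψ x)^2 else 0)
        = ∑ x ∈ Finset.Icc a b, if x ∈ B then (φ x)^2 else 0 := by
      rw [← Finset.sum_coe_sort (Finset.Icc a b)]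
      refine Finset.sum_congr rfl fun x _ => ?_
      rw [hφψ]
    rw [e1, Finset.sum_ite_mem, Finset.inter_eq_right.mpr (hBB.trans hBΛ)]
  rw [hsum] at hnorm
  have hle : ∑ x ∈ B, (φ x)^2 ≤ B.card • (ε * (T + 3 ^ d + 1) ^ N) ^ 2 := by
    apply Finset.sum_le_card_nsmul
    intro x hx
    rw [← sq_abs]
    exact pow_le_pow_left₀ (abs_nonneg _) (hbd x hx) 2
  rw [nsmul_eq_mul] at hle
  have : (B.card : ℝ) * (ε * (T + 3 ^ d + 1) ^ N) ^ 2
      ≤ ((3:ℝ) ^ d) ^ L * (ε * (T + 3 ^ d + 1) ^ N) ^ 2 := by gcongr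
  rw [← hε] at hfin
  exact absurd (hnorm.trans (hle.trans this)) (not_le.mpr hfin)
end
end

section
/- Let d ≥ 1, let Λ = ∏_{i=1}^d {0, 1, …, M_i} be a finite rectangle in ℤ^d, let v : Λ → [0,1], let 0 < γ ≤ 1/(4d), and let λ ∈ [0, 1 + 4dγ]. Let X ⊆ Λ be nonempty, set z_max = max{ x_d : x ∈ X }, and assume z_max < M_d (X does not meet the top face of Λ in the d-th direction). Let ψ : Λ → ℝ vanish outside X and satisfy (Hψ)(x) = λ ψ(x) for every x ∈ X. Let δ > 0 and suppose that for every y ∈ Λ ∖ X at ℓ¹ distance 1 from X one has | Σ_{x ∈ X, |x−y|=1} ψ(x) | < δ. Then every x ∈ X satisfies |ψ(x)| ≤ (2/γ)^{z_max − x_d} · δ. -/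
noncomputable section

open scoped BigOperators

lemma ld_nbr {d : ℕ} (x y : Fin d → ℤ) (h : dist1 x y = 1) :
    ∃ i : Fin d, ∃ b : Bool, x = Function.update y i (y i + if b then 1 else -1) := by
  unfold dist1 at h
  obtain ⟨i, hi⟩ : ∃ i, (x i - y i).natAbs ≠ 0 := by
    by_contra hc
    push Not at hc
    rw [Finset.sum_eq_zero (fun i _ => hc i)] at h
    omega
  rw [← Finset.add_sum_erase _ _ (Finset.mem_univ i)] at h
  have h1 : (x i - y i).natAbs = 1 := by omega
  have h2 : ∑ j ∈ Finset.univ.erase i, (x j - y j).natAbs = 0 := by omega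
  rw [Finset.sum_eq_zero_iff] at h2
  have h3 : ∀ j, j ≠ i → x j = y j := by
    intro j hj
    have := h2 j (by simp [hj])
    omega
  rcases Int.natAbs_eq_iff.mp h1 with h4 | h4
  · refine ⟨i, true, ?_⟩
    funext j
    by_cases hj : j = i
    · subst hj; simp; push_cast at h4; omega
    · rw [Function.update_of_ne hj]; exact h3 j hj
  · refine ⟨i, false, ?_⟩
    funext j
    by_cases hj : j = i
    · subst hj; simp; push_cast at h4; omega
    · rw [Function.update_of_ne hj]; exact h3 j hj

lemma ld_card {d : ℕ} (Λ : Finset (Fin d → ℤ)) (y : Fin d → ℤ) :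
    (Finset.univ.filter (fun x : ↥Λ => dist1 (x : Fin d → ℤ) y = 1)).card ≤ 2 * d := by
  classical
  rw [← Finset.card_map (Function.Embedding.subtype _)]
  have : (Finset.univ.filter (fun x : ↥Λ => dist1 (x : Fin d → ℤ) y = 1)).map
      (Function.Embedding.subtype _) ⊆ (Finset.univ : Finset (Fin d × Bool)).image
        (fun p => Function.update y p.1 (y p.1 + if p.2 then 1 else -1)) := by
    intro w hw
    simp only [Finset.mem_map, Finset.mem_filter, Finset.mem_univ, true_and] at hw
    obtain ⟨a, ha, rfl⟩ := hw
    obtain ⟨i, b, h⟩ := ld_nbr _ _ ha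
    exact Finset.mem_image.mpr ⟨(i, b), Finset.mem_univ _, h.symm⟩
  refine (Finset.card_le_card this).trans (Finset.card_image_le.trans ?_)
  simp [Fintype.card_prod]
  omega

lemma ld_below {d : ℕ} (x w : Fin d → ℤ) (i₀ : Fin d)
    (h : dist1 w (Function.update x i₀ (x i₀ + 1)) = 1) (hw : w ≠ x) : x i₀ + 1 ≤ w i₀ := by
  obtain ⟨i, b, h⟩ := ld_nbr _ _ h
  by_cases hi : i = i₀
  · subst hi
    cases b
    · exfalso; apply hw; rw [h]; simp
    · rw [h]; simp
  · rw [h, Function.update_of_ne (fun hh => hi hh.symm)]; simp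

lemma ld_up {d : ℕ} (x : Fin d → ℤ) (i₀ : Fin d) :
    dist1 x (Function.update x i₀ (x i₀ + 1)) = 1 := by
  unfold dist1
  rw [Finset.sum_eq_single i₀]
  · simp
  · intro j _ hj; rw [Function.update_of_ne hj]; simp
  · simp

lemma ld_self {d : ℕ} (x : Fin d → ℤ) : dist1 x x = 0 := by simp [dist1]

lemma ld_mulVec (d : ℕ) (γ : ℝ) (v : (Fin d → ℤ) → ℝ) (Λ : Finset (Fin d → ℤ)) (ψ : ↥Λ → ℝ)
    (y : ↥Λ) : (hamOn d γ v Λ).mulVec ψ y = (2*d*γ + v y) * ψ y -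
      γ * ∑ x ∈ Finset.univ.filter (fun x : ↥Λ => dist1 (x : Fin d → ℤ) y = 1), ψ x := by
  simp only [Matrix.mulVec, dotProduct, hamOn, Matrix.of_apply, hamEntry, sub_mul,
    Finset.sum_sub_distrib]
  congr 1
  · rw [Finset.sum_eq_single y]
    · simp
    · intro b _ hb
      rw [if_neg (fun h => hb (Subtype.ext h.symm)), zero_mul]
    · simp
  · rw [Finset.mul_sum, Finset.sum_filter]
    refine Finset.sum_congr rfl fun w _ => ?_
    rw [dist1_comm]
    split_ifs <;> simp

/-- **Layer-by-layer decay estimate** (key step in the proof of Lemma 3.1).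
Let `Λ = ∏_i {0,…,M_i}`, `0 < γ ≤ 1/(4d)`, `λ ∈ [0,1+4dγ]`, and let `X ⊆ Λ` avoid the
top face in the `d`-th direction, with `z_max = max_{x ∈ X} x_d`.  If `ψ` vanishes
outside `X`, satisfies `(Hψ)(x) = λψ(x)` on `X`, and every site `y ∈ Λ∖X` adjacent to
`X` has influence `< δ`, then `|ψ(x)| ≤ (2/γ)^{z_max - x_d} δ` for all `x ∈ X`. -/
theorem layer_decay (d : ℕ) (hd : 1 ≤ d) (M : Fin d → ℤ) (hM : ∀ i, 0 ≤ M i)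
    (v : (Fin d → ℤ) → ℝ)
    (hv : ∀ x ∈ Finset.Icc (0 : Fin d → ℤ) M, v x ∈ Set.Icc (0:ℝ) 1)
    (γ : ℝ) (hγ0 : 0 < γ) (hγ : γ ≤ 1/(4*d))
    (lam : ℝ) (hlam : lam ∈ Set.Icc (0:ℝ) (1 + 4*d*γ))
    (X : Finset (Fin d → ℤ)) (hXne : X.Nonempty)
    (hXΛ : X ⊆ Finset.Icc (0 : Fin d → ℤ) M)
    (i₀ : Fin d) (hi₀ : (i₀ : ℕ) = d - 1)
    (zmax : ℤ) (hzmax : zmax = X.sup' hXne (fun x => x i₀)) (htop : zmax < M i₀)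
    (ψ : ↥(Finset.Icc (0 : Fin d → ℤ) M) → ℝ)
    (hψ0 : ∀ x : ↥(Finset.Icc (0 : Fin d → ℤ) M), (x : Fin d → ℤ) ∉ X → ψ x = 0)
    (hψeig : ∀ x : ↥(Finset.Icc (0 : Fin d → ℤ) M), (x : Fin d → ℤ) ∈ X →
      (hamOn d γ v (Finset.Icc (0 : Fin d → ℤ) M)).mulVec ψ x = lam * ψ x)
    (δ : ℝ) (hδ : 0 < δ)
    (hinf : ∀ y ∈ Finset.Icc (0 : Fin d → ℤ) M, y ∉ X → (∃ x ∈ X, dist1 x y = 1) →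
      |∑ x ∈ Finset.univ.filter
          (fun x : ↥(Finset.Icc (0 : Fin d → ℤ) M) =>
            (x : Fin d → ℤ) ∈ X ∧ dist1 (x : Fin d → ℤ) y = 1), ψ x| < δ) :
    ∀ x : ↥(Finset.Icc (0 : Fin d → ℤ) M), (x : Fin d → ℤ) ∈ X →
      |ψ x| ≤ (2/γ) ^ (zmax - (x : Fin d → ℤ) i₀) * δ := by
  classical
  have hd' : (1:ℝ) ≤ d := by exact_mod_cast hd
  have hγd : 4 * d * γ ≤ 1 := by
    rw [le_div_iff₀ (by positivity)] at hγ; linarith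
  have hK : 8 * (d:ℝ) ≤ 2 / γ := by
    rw [le_div_iff₀ hγ0]; linarith
  have hle : ∀ x ∈ X, x i₀ ≤ zmax := by
    intro x hx
    rw [hzmax]
    exact Finset.le_sup' (fun x : Fin d → ℤ => x i₀) hx
  -- one step
  have step : ∀ (x : ↥(Finset.Icc (0 : Fin d → ℤ) M)) (B : ℝ), (x : Fin d → ℤ) ∈ X → 0 ≤ B →
      (∀ w : ↥(Finset.Icc (0 : Fin d → ℤ) M),
        (x : Fin d → ℤ) i₀ + 1 ≤ (w : Fin d → ℤ) i₀ → |ψ w| ≤ B) →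
      |ψ x| ≤ max (δ + (2*d-1)*B) ((2/γ)*B) := by
    intro x B hx hB hw
    have hxm := Finset.mem_Icc.mp x.2
    set y : Fin d → ℤ := Function.update (x : Fin d → ℤ) i₀ ((x : Fin d → ℤ) i₀ + 1) with hy
    have hyi : y i₀ = (x : Fin d → ℤ) i₀ + 1 := by simp [hy]
    have hyΛ : y ∈ Finset.Icc (0 : Fin d → ℤ) M := by
      rw [Finset.mem_Icc]
      constructor <;> intro j <;> by_cases hj : j = i₀
      · subst hj; rw [hyi]; have := hxm.1 j; simp at this ⊢; omega
      · rw [hy, Function.update_of_ne hj]; exact hxm.1 j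
      · subst hj; rw [hyi]; have := hle _ hx; change (x : Fin d → ℤ) j + 1 ≤ M j; omega
      · rw [hy, Function.update_of_ne hj]; exact hxm.2 j
    set N := Finset.univ.filter
      (fun w : ↥(Finset.Icc (0 : Fin d → ℤ) M) => dist1 (w : Fin d → ℤ) y = 1) with hN
    have hxN : x ∈ N := by simp only [hN, Finset.mem_filter, Finset.mem_univ, true_and]; exact ld_up _ _
    have hcard : (((N.erase x).card : ℕ) : ℝ) ≤ 2 * d - 1 := by
      have h1 := ld_card (Finset.Icc (0 : Fin d → ℤ) M) y
      have h2 := Finset.card_erase_add_one hxN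
      have h3 : (N.erase x).card + 1 ≤ 2 * d := by rw [h2]; exact h1
      have : (((N.erase x).card : ℕ) : ℝ) + 1 ≤ 2 * d := by exact_mod_cast h3
      linarith
    have hR : |∑ w ∈ N.erase x, ψ w| ≤ (2*d-1)*B := by
      refine (Finset.abs_sum_le_sum_abs _ _).trans ?_
      refine (Finset.sum_le_card_nsmul _ _ B ?_).trans ?_
      · intro w hwN
        rw [Finset.mem_erase, hN, Finset.mem_filter] at hwN
        exact hw w (ld_below _ _ i₀ hwN.2.2 (fun h => hwN.1 (Subtype.ext h)))
      · rw [nsmul_eq_mul]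
        exact mul_le_mul_of_nonneg_right hcard hB
    have hS := Finset.add_sum_erase N ψ hxN
    by_cases hyX : y ∈ X
    · apply le_max_of_le_right
      have he := hψeig ⟨y, hyΛ⟩ hyX
      rw [ld_mulVec] at he
      change (2*d*γ + v y) * ψ ⟨y, hyΛ⟩ - γ * ∑ w ∈ N, ψ w = _ at he
      have hyB := hw ⟨y, hyΛ⟩ hyi.ge
      have hvy := hv y hyΛ
      obtain ⟨hv0, hv1⟩ := hvy
      obtain ⟨hl0, hl1⟩ := hlam
      have hc : |2*d*γ + v y - lam| ≤ 3/2 := by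
        rw [abs_le]
        constructor <;> nlinarith
      have h1 : γ * ψ x = (2*d*γ + v y - lam) * ψ ⟨y, hyΛ⟩ - γ * ∑ w ∈ N.erase x, ψ w := by
        rw [← hS] at he; linarith
      have h2 : γ * |ψ x| ≤ 3/2 * B + γ * ((2*d-1)*B) := by
        rw [← abs_of_pos hγ0, ← abs_mul, abs_of_pos hγ0, h1]
        refine (abs_sub _ _).trans ?_
        rw [abs_mul, abs_mul, abs_of_pos hγ0]
        gcongr
      have h3 : γ * |ψ x| ≤ 2 * B := by nlinarith
      rw [div_mul_eq_mul_div, le_div_iff₀ hγ0]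
      linarith
    · apply le_max_of_le_left
      have hi := hinf y hyΛ hyX ⟨x, hx, ld_up _ _⟩
      have hE : ∑ w ∈ Finset.univ.filter
          (fun w : ↥(Finset.Icc (0 : Fin d → ℤ) M) =>
            (w : Fin d → ℤ) ∈ X ∧ dist1 (w : Fin d → ℤ) y = 1), ψ w = ∑ w ∈ N, ψ w := by
        apply Finset.sum_subset
        · intro w hw'
          simp only [hN, Finset.mem_filter, Finset.mem_univ, true_and] at hw' ⊢
          exact hw'.2
        · intro w hw1 hw2
          simp only [hN, Finset.mem_filter, Finset.mem_univ, true_and] at hw1 hw2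
          exact hψ0 w (fun h => hw2 ⟨h, hw1⟩)
      rw [hE, ← hS] at hi
      have := abs_lt.mp hi
      have := abs_le.mp hR
      rw [abs_le]
      constructor <;> linarith
  have hK1 : 1 ≤ 2 / γ := by linarith
  have main : ∀ n : ℕ, ∀ x : ↥(Finset.Icc (0 : Fin d → ℤ) M),
      zmax - n ≤ (x : Fin d → ℤ) i₀ → |ψ x| ≤ (2/γ)^n * δ := by
    intro n
    induction n with
    | zero =>
      intro x hx
      by_cases hxX : (x : Fin d → ℤ) ∈ X
      · have := step x 0 hxX le_rfl (by
          intro w hw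
          rw [hψ0 w, abs_zero]
          intro hwX
          have := hle _ hwX
          push_cast at hx
          omega)
        simpa [hδ.le] using this
      · rw [hψ0 x hxX, abs_zero]; positivity
    | succ n ih =>
      intro x hx
      by_cases hxX : (x : Fin d → ℤ) ∈ X
      · have hB : δ ≤ (2/γ)^n * δ := le_mul_of_one_le_left hδ.le (one_le_pow₀ hK1)
        have := step x ((2/γ)^n * δ) hxX (by positivity) (by
          intro w hw
          apply ih
          push_cast at hx
          omega)
        refine this.trans (max_le ?_ ?_)
        · rw [pow_succ]
          nlinarith
        · rw [pow_succ]; apply le_of_eq; ring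
      · rw [hψ0 x hxX, abs_zero]; positivity
  intro x hx
  have h := hle _ hx
  obtain ⟨n, hn⟩ := Int.eq_ofNat_of_zero_le (sub_nonneg.mpr h)
  rw [hn, zpow_natCast]
  exact main n x (by omega)
end
end
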